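/- arXiv:1701.07716 — 4 statements merged into one kernel-verified Lean document; each statement's English description precedes it below -/
import Mathlib

section
/- Let R be a commutative noetherian ring and 𝔞 an ideal of R. If f : M → N is an R-homomorphism between 𝔞-cofinite R-modules and cd(𝔞,R) ≤ 1, then coker f is 𝔞-cofinite. -/
open CategoryTheory

/-- An `R`-module `M` is `I`-cofinite if its support is contained in `V(I)` and
`Ext^i_R(R/I, M)` is a finitely generated `R`-module for every `i ≥ 0`. -/
def IsCofinite {R : Type} [CommRing R] (I : Ideal R) (M : Type) [AddCommGroup M]
    [Module R M] : Prop :=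
  Module.support R M ⊆ PrimeSpectrum.zeroLocus (I : Set R) ∧
  ∀ i : ℕ, Module.Finite R
    (((Ext R (ModuleCat R) i).obj (Opposite.op (ModuleCat.of R (R ⧸ I)))).obj
      (ModuleCat.of R M))

namespace Cof
universe u
variable {R : Type} [CommRing R]

section compare
variable {X Y : ModuleCat.{0} R} (P : ProjectiveResolution X)

/-- The cochain complex of homs. -/
noncomputable abbrev HomC (Y : ModuleCat.{0} R) : CochainComplex (ModuleCat.{0} R) ℕ := P.complex.linearYonedaObj R Y

lemma d_iCycles (n : ℕ) (z : (HomC P Y).cycles n) :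
    P.complex.d (n+1) n ≫ (show P.complex.X n ⟶ Y from (HomC P Y).iCycles n z) = 0 := by
  have := (HomC P Y).iCycles_d n (n+1)
  have h2 := congrArg (fun f => f.hom z) this
  exact h2

/-- Cocycles to derived-category Ext. -/
noncomputable def compZ (n : ℕ) : (HomC P Y).cycles n →ₗ[R] Abelian.Ext X Y n where
  toFun z := P.extMk (show P.complex.X n ⟶ Y from (HomC P Y).iCycles n z) (n+1) rfl (d_iCycles P n z)
  map_add' a b := by
    rw [P.add_extMk]
    congr 1
    exact map_add ((HomC P Y).iCycles n).hom a b
  map_smul' r a := by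
    rw [RingHom.id_apply, Abelian.Ext.smul_eq_comp_mk₀, P.extMk_comp_mk₀]
    congr 1
    rw [Linear.comp_smul, Category.comp_id]
    exact map_smul ((HomC P Y).iCycles n).hom r a

lemma compZ_apply (n : ℕ) (z : (HomC P Y).cycles n) : compZ P n z = P.extMk (show P.complex.X n ⟶ Y from (HomC P Y).iCycles n z) (n+1) rfl (d_iCycles P n z) := rfl

lemma exists_cycle (n : ℕ) (f : P.complex.X n ⟶ Y) (hf : P.complex.d (n+1) n ≫ f = 0) :
    ∃ z : (HomC P Y).cycles n, (HomC P Y).iCycles n z = f := by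
  have hz : ModuleCat.ofHom (LinearMap.toSpanSingleton R ((HomC P Y).X n) f) ≫ (HomC P Y).d n (n+1) = 0 := by
    refine ModuleCat.hom_ext (LinearMap.ext_ring ?_)
    change P.complex.d (n+1) n ≫ ((1:R) • f) = 0
    rw [one_smul]; exact hf
  let z := (HomC P Y).liftCycles (ModuleCat.ofHom (LinearMap.toSpanSingleton R ((HomC P Y).X n) f)) (n+1) (by simp) hz
  refine ⟨z.hom (1 : R), ?_⟩
  have := (HomC P Y).liftCycles_i (ModuleCat.ofHom (LinearMap.toSpanSingleton R ((HomC P Y).X n) f)) (n+1) (by simp) hz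
  have h2 := congrArg (fun f => f.hom (1:R)) this
  refine h2.trans ?_
  exact one_smul R _

lemma compZ_surjective (n : ℕ) : Function.Surjective (compZ (Y := Y) P n) := by
  intro e
  obtain ⟨f, hf, rfl⟩ := P.extMk_surjective e (n+1) rfl
  obtain ⟨z, hz⟩ := exists_cycle P n f hf
  refine ⟨z, ?_⟩
  rw [compZ_apply]
  congr 1

lemma iCycles_inj (n : ℕ) (z w : (HomC P Y).cycles n) (h : (HomC P Y).iCycles n z = (HomC P Y).iCycles n w) : z = w :=
  (ModuleCat.mono_iff_injective ((HomC P Y).iCycles n)).1 inferInstance h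

lemma homologyπ_surj (n : ℕ) : Function.Surjective ((HomC P Y).homologyπ n) :=
  (ModuleCat.epi_iff_surjective ((HomC P Y).homologyπ n)).1 inferInstance

open CochainComplex.HomComplex in
lemma extMk_zero_deg (f : P.complex.X 0 ⟶ Y) (hf) (h : P.extMk f 1 rfl hf = 0) : f = 0 := by
  simp only [← P.extEquivCohomologyClass.apply_eq_iff_eq,
    P.extEquivCohomologyClass_extMk, P.extEquivCohomologyClass_zero,
    CohomologyClass.mk_eq_zero_iff] at h
  rw [Cocycle.toSingleMk_mem_coboundaries_iff _ _ _ _ _ 1 (by simp)] at h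
  obtain ⟨g, hg⟩ := h
  have : g = 0 := by
    apply Limits.IsZero.eq_of_src
    exact HomologicalComplex.isZero_extend_X _ _ _ (by intro i; simp; omega)
  rw [this, Limits.comp_zero] at hg
  rw [← cancel_epi (P.cochainComplexXIso (-(0:ℕ)) 0 rfl).hom, ← hg, Limits.comp_zero]

lemma compZ_ker (n : ℕ) (z : (HomC P Y).cycles n) : compZ P n z = 0 ↔ (HomC P Y).homologyπ n z = 0 := by
  have hkey : (∃ (w : (HomC P Y).X ((ComplexShape.up ℕ).prev n)), (HomC P Y).toCycles _ n w = z) ↔ (HomC P Y).homologyπ n z = 0 := by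
    have hex : (ShortComplex.mk _ _ ((HomC P Y).toCycles_comp_homologyπ ((ComplexShape.up ℕ).prev n) n)).Exact := 
      ShortComplex.exact_of_g_is_cokernel _ ((HomC P Y).homologyIsCokernel _ n rfl)
    rw [ShortComplex.moduleCat_exact_iff] at hex
    constructor
    · rintro ⟨w, rfl⟩
      have := congrArg (fun f => f.hom w) ((HomC P Y).toCycles_comp_homologyπ ((ComplexShape.up ℕ).prev n) n)
      exact this
    · exact hex z
  rw [← hkey, compZ_apply]
  cases n with
  | zero =>
    constructor
    · intro h
      have h0 := extMk_zero_deg P _ _ h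
      refine ⟨0, ?_⟩
      rw [map_zero]
      refine iCycles_inj P 0 _ _ ?_
      rw [map_zero]
      exact h0.symm
    · rintro ⟨w, rfl⟩
      have : (HomC P Y).iCycles 0 ((HomC P Y).toCycles ((ComplexShape.up ℕ).prev 0) 0 w) = 0 := by
        have h1 := congrArg (fun f => f.hom w) ((HomC P Y).toCycles_i ((ComplexShape.up ℕ).prev 0) 0)
        refine h1.trans ?_
        rw [(HomC P Y).shape _ _ (by simp)]
        rfl
      have h3 : ∀ (f : P.complex.X 0 ⟶ Y) (hf), f = 0 → P.extMk f 1 rfl hf = 0 := by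
        rintro f hf rfl; simp
      exact h3 _ _ this
  | succ p =>
    rw [P.extMk_eq_zero_iff _ _ _ _ p rfl]
    have hp : (ComplexShape.up ℕ).prev (p+1) = p := by simp
    rw [hp]
    have key : ∀ w : (HomC P Y).X p, (HomC P Y).iCycles (p+1) ((HomC P Y).toCycles p (p+1) w) = P.complex.d (p+1) p ≫ (show P.complex.X p ⟶ Y from w) := by
      intro w
      have h1 := congrArg (fun f => f.hom w) ((HomC P Y).toCycles_i p (p+1))
      exact h1
    constructor
    · rintro ⟨g, hg⟩
      refine ⟨g, iCycles_inj P _ _ _ ?_⟩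
      exact (key g).trans hg
    · rintro ⟨w, rfl⟩
      exact ⟨w, (key w).symm⟩

/-- Old Ext is finite iff new Ext is. -/
lemma finite_iff (X Y : ModuleCat.{0} R) (n : ℕ) :
    Module.Finite R (((Ext R (ModuleCat R) n).obj (Opposite.op X)).obj Y) ↔ Module.Finite R (Abelian.Ext X Y n) := by
  let P := projectiveResolution X
  have e1 : (((Ext R (ModuleCat R) n).obj (Opposite.op X)).obj Y) ≃ₗ[R] (HomC P Y).homology n := (P.isoExt n Y).toLinearEquiv
  have e2 := LinearMap.quotKerEquivOfSurjective (compZ (Y := Y) P n) (compZ_surjective P n)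
  have e3 := LinearMap.quotKerEquivOfSurjective ((HomC P Y).homologyπ n).hom (homologyπ_surj P n)
  have hk : LinearMap.ker (compZ (Y := Y) P n) = LinearMap.ker ((HomC P Y).homologyπ n).hom := by
    ext z; exact compZ_ker P n z
  have e := e1.trans (e3.symm.trans ((Submodule.quotEquivOfEq _ _ hk.symm).trans e2))
  exact ⟨fun h => Module.Finite.equiv e, fun h => Module.Finite.equiv e.symm⟩

end compare
end Cof

namespace Cof
variable {R : Type} [CommRing R]
section nat
variable {X X' Y : ModuleCat.{0} R} (P : ProjectiveResolution X) (P' : ProjectiveResolution X')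

/-- Map on hom complexes. -/
noncomputable def homCMap (φ : P'.complex ⟶ P.complex) (Y : ModuleCat.{0} R) : HomC P Y ⟶ HomC P' Y :=
  (HomologicalComplex.unopFunctor _ _).map
    ((((linearYoneda R (ModuleCat.{0} R)).obj Y).rightOp.mapHomologicalComplex _).map φ).op

lemma homCMap_f (φ : P'.complex ⟶ P.complex) (n : ℕ) (f : P.complex.X n ⟶ Y) :
   (homCMap P P' φ Y).f n f = φ.f n ≫ f := rfl

lemma sq_paste {C : Type*} [Category C] {A B D A' B' D' : C} {a : A ⟶ B} {b : B ⟶ D} {a' : A' ⟶ B'} {b' : B' ⟶ D'}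
    {c : B ⟶ B'} {d : A ⟶ A'} {t : D ⟶ D'} (h1 : a ≫ c = d ≫ a') (h2 : b ≫ t = c ≫ b') :
    (a ≫ b) ≫ t = d ≫ (a' ≫ b') := by
  rw [Category.assoc, h2, ← Category.assoc, h1, Category.assoc]

lemma isoExt_nat (g : X' ⟶ X) (φ : P'.complex ⟶ P.complex) (comm : φ.f 0 ≫ P.π.f 0 = P'.π.f 0 ≫ g) (n : ℕ) :
    ((Ext R (ModuleCat.{0} R) n).map g.op).app Y ≫ (P'.isoExt n Y).hom =
      (P.isoExt n Y).hom ≫ HomologicalComplex.homologyMap (homCMap P P' φ Y) n := by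
  have h2 := HomologicalComplex.homologyOp_hom_naturality (homCMap P P' φ Y) n
  have h2' : (HomologicalComplex.homologyOp (HomC P Y) n).hom.unop ≫ ((((linearYoneda R (ModuleCat.{0} R)).obj Y).rightOp.mapHomologicalComplex _ ⋙ HomologicalComplex.homologyFunctor _ _ n).map φ).unop =
     HomologicalComplex.homologyMap (homCMap P P' φ Y) n ≫ (HomologicalComplex.homologyOp (HomC P' Y) n).hom.unop := congrArg Quiver.Hom.unop h2
  rw [← Iso.eq_comp_inv, Category.assoc, ← Iso.inv_comp_eq]
  have e : (P.isoExt n Y).inv = (HomologicalComplex.homologyOp (HomC P Y) n).hom.unop ≫ (P.isoLeftDerivedObj ((linearYoneda R (ModuleCat.{0} R)).obj Y).rightOp n).hom.unop := rfl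
  have e' : (P'.isoExt n Y).inv = (HomologicalComplex.homologyOp (HomC P' Y) n).hom.unop ≫ (P'.isoLeftDerivedObj ((linearYoneda R (ModuleCat.{0} R)).obj Y).rightOp n).hom.unop := rfl
  have h3 := ProjectiveResolution.isoLeftDerivedObj_hom_naturality g P' P φ comm
    ((linearYoneda R (ModuleCat.{0} R)).obj Y).rightOp n
  have h3' : (P.isoLeftDerivedObj ((linearYoneda R (ModuleCat.{0} R)).obj Y).rightOp n).hom.unop ≫ ((Ext R (ModuleCat.{0} R) n).map g.op).app Y = ((((linearYoneda R (ModuleCat.{0} R)).obj Y).rightOp.mapHomologicalComplex _ ⋙ HomologicalComplex.homologyFunctor _ _ n).map φ).unop ≫ (P'.isoLeftDerivedObj ((linearYoneda R (ModuleCat.{0} R)).obj Y).rightOp n).hom.unop := congrArg Quiver.Hom.unop h3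
  exact sq_paste h2' h3'

/-- transfer of vanishing -/
lemma ext_transfer {X Y : ModuleCat.{0} R} {n : ℕ} (e : Abelian.Ext X Y n) :
    ∃ e' : ((Ext R (ModuleCat.{0} R) n).obj (Opposite.op X)).obj Y, 
      ∀ (X' : ModuleCat.{0} R) (g : X' ⟶ X), ((Ext R (ModuleCat.{0} R) n).map g.op).app Y e' = 0 →
        (Abelian.Ext.mk₀ g).comp e (zero_add n) = 0 := by
  let P := projectiveResolution X
  obtain ⟨z, rfl⟩ := compZ_surjective P n e
  refine ⟨(P.isoExt n Y).inv ((HomC P Y).homologyπ n z), fun X' g h => ?_⟩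
  let P' := projectiveResolution X'
  let φ : P'.Hom P g := ⟨ProjectiveResolution.lift g P' P, ProjectiveResolution.lift_commutes_zero g P' P⟩
  rw [compZ_apply, P.mk₀_comp_extMk _ _ _ _ φ]
  have h1 := congrArg (fun f => f.hom ((P.isoExt n Y).inv ((HomC P Y).homologyπ n z))) (isoExt_nat (Y := Y) P P' g φ.hom φ.hom_f_zero_comp_π_f_zero n)
  simp only [ModuleCat.hom_comp, LinearMap.comp_apply] at h1
  have h0 : (((Ext R (ModuleCat.{0} R) n).map g.op).app Y).hom ((P.isoExt n Y).inv ((HomC P Y).homologyπ n z)) = 0 := h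
  rw [h0, map_zero] at h1
  have h4 : (P.isoExt n Y).hom.hom ((P.isoExt n Y).inv ((HomC P Y).homologyπ n z)) = ((HomC P Y).homologyπ n z) := by
    simp
  rw [h4] at h1
  have h5 := congrArg (fun f => f.hom z) (HomologicalComplex.homologyπ_naturality (homCMap P P' φ.hom Y) n)
  simp only [ModuleCat.hom_comp, LinearMap.comp_apply] at h5
  have h6 : (HomC P' Y).homologyπ n (HomologicalComplex.cyclesMap (homCMap P P' φ.hom Y) n z) = 0 := h5.symm.trans h1.symm
  rw [← compZ_ker, compZ_apply] at h6
  have h7 := congrArg (fun f => f.hom z) (HomologicalComplex.cyclesMap_i (homCMap P P' φ.hom Y) n)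
  rw [← h6]
  congr 1
  exact h7.symm
end nat

lemma exists_kill (I : Ideal R) (i : ℕ) (Y : ModuleCat.{0} R)
    (h : Subsingleton ((localCohomology I i).obj Y)) (n : ℕ) (e : Abelian.Ext (ModuleCat.of R (R ⧸ I ^ n)) Y i) :
    ∃ (m : ℕ) (hm : n ≤ m), (Abelian.Ext.mk₀ (ModuleCat.ofHom (Submodule.factor (Ideal.pow_le_pow_right hm : I ^ m ≤ I ^ n)))).comp e (zero_add i) = 0 := by
  obtain ⟨e', he'⟩ := ext_transfer e
  let D := localCohomology.diagram (localCohomology.idealPowersDiagram I) i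
  let G := D ⋙ (evaluation _ _).obj Y
  let iso : (localCohomology I i).obj Y ≅ Limits.colimit G := 
    Limits.colimitObjIsoColimitCompEvaluation D Y
  have hs : Subsingleton (Limits.colimit G : ModuleCat R) := iso.symm.toLinearEquiv.toEquiv.subsingleton
  obtain ⟨k, f, g, hk⟩ := Limits.Concrete.colimit_exists_of_rep_eq G (i := Opposite.op (Opposite.op n)) (j := Opposite.op (Opposite.op n)) e' (0 : G.obj (Opposite.op (Opposite.op n))) (Subsingleton.elim _ _)
  obtain ⟨⟨m⟩⟩ := k
  refine ⟨m, f.unop.unop.down.down, he' _ _ ?_⟩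
  exact hk.trans (map_zero (G.map g).hom)
end Cof

namespace Cof
variable {R : Type} [CommRing R]

section api
variable {A B C A' X Y X' Y' X'' Y'' : Type}
  [AddCommGroup A] [Module R A] [AddCommGroup B] [Module R B] [AddCommGroup C] [Module R C]
  [AddCommGroup A'] [Module R A']
  [AddCommGroup X] [Module R X] [AddCommGroup Y] [Module R Y] [AddCommGroup X'] [Module R X'] [AddCommGroup Y'] [Module R Y'] [AddCommGroup X''] [Module R X''] [AddCommGroup Y''] [Module R Y'']

variable (R) in
/-- Unbundled Ext. -/
abbrev E (X Y : Type) [AddCommGroup X] [Module R X] [AddCommGroup Y] [Module R Y] (n : ℕ) : Type :=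
  Abelian.Ext (ModuleCat.of R X) (ModuleCat.of R Y) n

/-- functoriality in second variable -/
noncomputable def post {n : ℕ} (f : Y →ₗ[R] Y') : E R X Y n →ₗ[R] E R X Y' n :=
  (Abelian.Ext.mk₀ (ModuleCat.ofHom f)).postcompOfLinear R _ (add_zero n)

/-- functoriality in first variable -/
noncomputable def pre {n : ℕ} (f : X' →ₗ[R] X) : E R X Y n →ₗ[R] E R X' Y n :=
  (Abelian.Ext.mk₀ (ModuleCat.ofHom f)).precompOfLinear R _ (zero_add n)

lemma post_apply {n : ℕ} (f : Y →ₗ[R] Y') (e : E R X Y n) : post f e = e.comp (Abelian.Ext.mk₀ (ModuleCat.ofHom f)) (add_zero n) := rfl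
lemma pre_apply {n : ℕ} (f : X' →ₗ[R] X) (e : E R X Y n) : pre f e = (Abelian.Ext.mk₀ (ModuleCat.ofHom f)).comp e (zero_add n) := rfl

lemma post_comp {n : ℕ} (f : Y →ₗ[R] Y') (g : Y' →ₗ[R] Y'') (e : E R X Y n) : post (g ∘ₗ f) e = post g (post f e) := by
  rw [post_apply, ModuleCat.ofHom_comp, ← Abelian.Ext.mk₀_comp_mk₀, post_apply, post_apply, Abelian.Ext.comp_assoc_of_third_deg_zero]

lemma pre_comp {n : ℕ} (f : X' →ₗ[R] X) (g : X'' →ₗ[R] X') (e : E R X Y n) : pre (f ∘ₗ g) e = pre g (pre f e) := by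
  rw [pre_apply, ModuleCat.ofHom_comp, ← Abelian.Ext.mk₀_comp_mk₀, pre_apply, pre_apply, Abelian.Ext.comp_assoc_of_second_deg_zero]

lemma post_id {n : ℕ} (e : E R X Y n) : post (LinearMap.id) e = e := by
  rw [post_apply, ModuleCat.ofHom_id, Abelian.Ext.comp_mk₀_id]

lemma pre_id {n : ℕ} (e : E R X Y n) : pre (LinearMap.id) e = e := by
  rw [pre_apply, ModuleCat.ofHom_id, Abelian.Ext.mk₀_id_comp]

lemma post_zero {n : ℕ} (e : E R X Y n) : post (0 : Y →ₗ[R] Y') e = 0 := by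
  rw [post_apply, ModuleCat.ofHom_zero, Abelian.Ext.mk₀_zero, Abelian.Ext.comp_zero]

lemma pre_zero {n : ℕ} (e : E R X Y n) : pre (0 : X' →ₗ[R] X) e = 0 := by
  rw [pre_apply, ModuleCat.ofHom_zero, Abelian.Ext.mk₀_zero, Abelian.Ext.zero_comp]

lemma post_add {n : ℕ} (f g : Y →ₗ[R] Y') (e : E R X Y n) : post (f + g) e = post f e + post g e := by
  rw [post_apply, ModuleCat.ofHom_add, Abelian.Ext.mk₀_add, Abelian.Ext.comp_add]; rfl

lemma pre_add {n : ℕ} (f g : X' →ₗ[R] X) (e : E R X Y n) : pre (f + g) e = pre f e + pre g e := by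
  rw [pre_apply, ModuleCat.ofHom_add, Abelian.Ext.mk₀_add, Abelian.Ext.add_comp]; rfl

lemma post_smul_id {n : ℕ} (r : R) (e : E R X Y n) : post (r • (LinearMap.id : Y →ₗ[R] Y)) e = r • e := by
  rw [Abelian.Ext.smul_eq_comp_mk₀]; rfl

lemma smul_eq_pre {n : ℕ} (r : R) (e : E R X Y n) : pre (r • (LinearMap.id : X →ₗ[R] X)) e = r • e := by
  have : ModuleCat.ofHom (r • (LinearMap.id : X →ₗ[R] X)) = r • 𝟙 (ModuleCat.of R X) := rfl
  rw [pre_apply, this, Abelian.Ext.mk₀_smul, Abelian.Ext.smul_comp, Abelian.Ext.mk₀_id_comp]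

lemma pre_post {n : ℕ} (f : X' →ₗ[R] X) (g : Y →ₗ[R] Y') (e : E R X Y n) : pre f (post g e) = post g (pre f e) := by
  rw [pre_apply, post_apply, post_apply, pre_apply, Abelian.Ext.comp_assoc_of_third_deg_zero]

/-- short exact sequences -/
structure SES (f : A →ₗ[R] B) (g : B →ₗ[R] C) : Prop where
  inj : Function.Injective f
  ex : Function.Exact f g
  surj : Function.Surjective g

/-- complex -/
abbrev SES.sc {f : A →ₗ[R] B} {g : B →ₗ[R] C} (h : SES f g) : ShortComplex (ModuleCat.{0} R) :=
  ShortComplex.mk (ModuleCat.ofHom f) (ModuleCat.ofHom g) (by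
    ext x; exact h.ex.apply_apply_eq_zero x)

lemma SES.se {f : A →ₗ[R] B} {g : B →ₗ[R] C} (h : SES f g) : h.sc.ShortExact where
  exact := by
    rw [ShortComplex.ShortExact.moduleCat_exact_iff_function_exact]
    exact h.ex
  mono_f := (ModuleCat.mono_iff_injective _).2 h.inj
  epi_g := (ModuleCat.epi_iff_surjective _).2 h.surj

lemma SES.mk_ker {g : B →ₗ[R] C} (hg : Function.Surjective g) : SES (LinearMap.ker g).subtype g :=
  ⟨Subtype.val_injective, LinearMap.exact_subtype_ker_map g, hg⟩

lemma SES.mk_quot (N : Submodule R B) : SES N.subtype N.mkQ :=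
  ⟨Subtype.val_injective, LinearMap.exact_subtype_mkQ N, N.mkQ_surjective⟩

/-- Covariant connecting map. -/
noncomputable def SES.δ {f : A →ₗ[R] B} {g : B →ₗ[R] C} (h : SES f g) {n : ℕ} : E R X C n →ₗ[R] E R X A (n+1) :=
  (h.se.extClass).postcompOfLinear R _ rfl

/-- Contravariant connecting map. -/
noncomputable def SES.γ {f : A →ₗ[R] B} {g : B →ₗ[R] C} (h : SES f g) {n : ℕ} : E R A Y n →ₗ[R] E R C Y (n+1) :=
  (h.se.extClass).precompOfLinear R _ (add_comm 1 n)

lemma SES.pre_δ {f : A →ₗ[R] B} {g : B →ₗ[R] C} (h : SES f g) {n : ℕ} (u : X' →ₗ[R] X) (e : E R X C n) :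
    pre u (h.δ e) = h.δ (pre u e) := by
  change (Abelian.Ext.mk₀ (ModuleCat.ofHom u)).comp (e.comp h.se.extClass rfl) (zero_add _) = ((Abelian.Ext.mk₀ (ModuleCat.ofHom u)).comp e (zero_add _)).comp h.se.extClass rfl
  rw [Abelian.Ext.comp_assoc _ _ _ (zero_add n) rfl (by omega)]

lemma SES.post_γ {f : A →ₗ[R] B} {g : B →ₗ[R] C} (h : SES f g) {n : ℕ} (u : Y →ₗ[R] Y') (e : E R A Y n) :
    post u (h.γ e) = h.γ (post u e) := by
  change (h.se.extClass.comp e (add_comm 1 n)).comp (Abelian.Ext.mk₀ (ModuleCat.ofHom u)) (add_zero _)  = h.se.extClass.comp (e.comp (Abelian.Ext.mk₀ (ModuleCat.ofHom u)) (add_zero _)) (add_comm 1 n)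
  rw [Abelian.Ext.comp_assoc_of_third_deg_zero]

variable {f : A →ₗ[R] B} {g : B →ₗ[R] C} {n : ℕ}
lemma SES.cov1 (h : SES f g) (a : E R X A (n+1)) (ha : post f a = 0) : ∃ c : E R X C n, h.δ c = a :=
  Abelian.Ext.covariant_sequence_exact₁ _ h.se a ha rfl
lemma SES.cov2 (h : SES f g) (a : E R X B n) (ha : post g a = 0) : ∃ c : E R X A n, post f c = a :=
  Abelian.Ext.covariant_sequence_exact₂ _ h.se a ha
lemma SES.cov3 (h : SES f g) (a : E R X C n) (ha : h.δ a = 0) : ∃ c : E R X B n, post g c = a :=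
  Abelian.Ext.covariant_sequence_exact₃ _ h.se a rfl ha
lemma SES.con1 (h : SES f g) (a : E R A Y n) (ha : h.γ a = 0) : ∃ c : E R B Y n, pre f c = a :=
  Abelian.Ext.contravariant_sequence_exact₁ h.se _ a (add_comm 1 n) ha
lemma SES.con2 (h : SES f g) (a : E R B Y n) (ha : pre f a = 0) : ∃ c : E R C Y n, pre g c = a :=
  Abelian.Ext.contravariant_sequence_exact₂ h.se _ a ha
lemma SES.con3 (h : SES f g) (a : E R C Y (n+1)) (ha : pre g a = 0) : ∃ c : E R A Y n, h.γ c = a :=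
  Abelian.Ext.contravariant_sequence_exact₃ h.se _ a ha (add_comm 1 n)

lemma SES.pre_γ {A₂ B₂ C₂ : Type} [AddCommGroup A₂] [Module R A₂] [AddCommGroup B₂] [Module R B₂] [AddCommGroup C₂] [Module R C₂]
    {f₂ : A₂ →ₗ[R] B₂} {g₂ : B₂ →ₗ[R] C₂} (h₂ : SES f₂ g₂) (h : SES f g)
    (a : A₂ →ₗ[R] A) (b : B₂ →ₗ[R] B) (c : C₂ →ₗ[R] C) (h1 : f ∘ₗ a = b ∘ₗ f₂) (h2 : g ∘ₗ b = c ∘ₗ g₂)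
    (e : E R A Y n) : pre c (h.γ e) = h₂.γ (pre a e) := by
  let φ : h₂.sc ⟶ h.sc := ⟨ModuleCat.ofHom a, ModuleCat.ofHom b, ModuleCat.ofHom c, by
    ext x; exact congrArg (fun f => f x) h1, by ext x; exact congrArg (fun f => f x) h2⟩
  have := ShortComplex.ShortExact.extClass_naturality h₂.se h.se φ
  change (Abelian.Ext.mk₀ φ.τ₃).comp (h.se.extClass.comp e (add_comm 1 n)) (zero_add _) = h₂.se.extClass.comp ((Abelian.Ext.mk₀ φ.τ₁).comp e (zero_add n)) (add_comm 1 n)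
  rw [← Abelian.Ext.comp_assoc _ _ _ (zero_add 1) _ (by omega), ← this, Abelian.Ext.comp_assoc_of_second_deg_zero]

lemma E_proj [Module.Projective R X] (e : E R X Y (n+1)) : e = 0 :=
  haveI : Projective (ModuleCat.of R X) := ModuleCat.projective_of_categoryTheory_projective _
  Abelian.Ext.eq_zero_of_projective e

/-- degree zero -/
noncomputable def E0 : (X →ₗ[R] Y) ≃ₗ[R] E R X Y 0 :=
  (ModuleCat.homLinearEquiv (M := ModuleCat.of R X) (N := ModuleCat.of R Y) (S := R)).symm.trans (Abelian.Ext.linearEquiv₀ (R := R) (X := ModuleCat.of R X) (Y := ModuleCat.of R Y)).symm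

lemma E0_apply (f : X →ₗ[R] Y) : E0 f = Abelian.Ext.mk₀ (ModuleCat.ofHom f) := rfl

lemma post_E0 (f : X →ₗ[R] Y) (g : Y →ₗ[R] Y') : post g (E0 f) = E0 (g ∘ₗ f) := by
  rw [E0_apply, post_apply, Abelian.Ext.mk₀_comp_mk₀]; rfl
lemma pre_E0 (f : X →ₗ[R] Y) (g : X' →ₗ[R] X) : pre g (E0 f) = E0 (f ∘ₗ g) := by
  rw [E0_apply, pre_apply, Abelian.Ext.mk₀_comp_mk₀]; rfl

lemma finite_E [IsNoetherianRing R] [Module.Finite R X] [Module.Finite R Y] (n : ℕ) : Module.Finite R (E R X Y n) :=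
  ModuleCat.finite_ext _ _ _ n

end api
end Cof

namespace Cof
variable {R : Type} [CommRing R]

/-- A Koszul-type complex. -/
structure Kos (I : Ideal R) (M : Type) [AddCommGroup M] [Module R M] where
  K : ℤ → ModuleCat.{0} R
  d : ∀ j, K j →ₗ[R] K (j - 1)
  dd : ∀ j z, d (j - 1) (d j z) = 0
  neg : ∀ j, j < 0 → Subsingleton (K j)
  bd : ℤ
  big : ∀ j, bd ≤ j → Subsingleton (K j)
  P : ∀ (Q : ModuleCat.{0} R → Prop) (_ : ∀ X : ModuleCat.{0} R, Subsingleton X → Q X)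
    (_ : ∀ X Y : ModuleCat.{0} R, Nonempty (X ≃ₗ[R] Y) → Q X → Q Y)
    (_ : ∀ X Y : ModuleCat.{0} R, Q X → Q Y → Q (ModuleCat.of R (X × Y))), Q (ModuleCat.of R M) → ∀ j, Q (K j)
  ε : ∀ j, j = 0 → (K j →ₗ[R] M)
  ε_bij : ∀ j (hj : j = 0), Function.Bijective (ε j hj)
  ε_d : ∀ j (hj : j - 1 = 0) (z : K j), ε (j-1) hj (d j z) ∈ I • (⊤ : Submodule R M)
  hom : ∀ x ∈ I, ∃ h : ∀ j, K (j - 1) →ₗ[R] K j, ∀ j z, d j (h j z) + h (j - 1) (d (j-1) z) = x • z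

/-- base -/
noncomputable def Kos.base (M : Type) [AddCommGroup M] [Module R M] : Kos (⊥ : Ideal R) M where
  K j := ModuleCat.of R (if j = 0 then (⊤ : Submodule R M) else ⊥ : Submodule R M)
  d j := 0
  dd j z := rfl
  neg j hj := by
    rw [if_neg hj.ne]; infer_instance
  bd := 1
  big j hj := by
    rw [if_neg (by omega)]; infer_instance
  P Q h0 h1 h2 hM j := by
    by_cases hj : j = 0
    · subst hj
      exact h1 _ _ ⟨((LinearEquiv.ofEq _ _ (if_pos rfl)).trans Submodule.topEquiv).symm⟩ hM
    · refine h0 _ ?_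
      rw [if_neg hj]; infer_instance
  ε j hj := Submodule.subtype _
  ε_bij j hj := by
    refine ⟨Subtype.val_injective, fun m => ⟨⟨m, ?_⟩, rfl⟩⟩
    rw [if_pos hj]; trivial
  ε_d j hj z := by rw [LinearMap.zero_apply, map_zero]; exact Submodule.zero_mem _
  hom x hx := ⟨fun j => 0, fun j z => by
    rw [(Submodule.mem_bot R).1 hx]; simp⟩

/-- cone -/
noncomputable def Kos.cone {M : Type} [AddCommGroup M] [Module R M] {I : Ideal R} (C : Kos I M) (x : R) : Kos (Ideal.span {x} ⊔ I) M where
  K j := ModuleCat.of R (C.K j × C.K (j-1))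
  d j := LinearMap.prod ((C.d j).coprod (x • LinearMap.id)) (-(C.d (j-1)) ∘ₗ LinearMap.snd R _ _)
  dd j z := by
    obtain ⟨a, b⟩ := z
    refine Prod.ext ?_ ?_
    · simp [C.dd]
    · simp [C.dd]
  neg j hj := by
    have := C.neg j hj
    have := C.neg (j-1) (by omega)
    exact inferInstanceAs (Subsingleton (C.K j × C.K (j-1)))
  bd := C.bd + 1
  big j hj := by
    have := C.big j (by omega)
    have := C.big (j-1) (by omega)
    exact inferInstanceAs (Subsingleton (C.K j × C.K (j-1)))
  P Q h0 h1 h2 hM j := h2 _ _ (C.P Q h0 h1 h2 hM j) (C.P Q h0 h1 h2 hM _)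
  ε j hj := C.ε j hj ∘ₗ LinearMap.fst R _ _
  ε_bij j hj := by
    have := C.neg (j-1) (by omega)
    refine (C.ε_bij j hj).comp ⟨?_, Prod.fst_surjective⟩
    rintro ⟨a, b⟩ ⟨a', b'⟩ h
    exact Prod.ext h (Subsingleton.elim _ _)
  ε_d j hj z := by
    obtain ⟨a, b⟩ := z
    change C.ε (j-1) hj (C.d j a + x • b) ∈ _
    rw [map_add, map_smul]
    refine Submodule.add_mem _ ?_ (Submodule.smul_mem_smul (Ideal.mem_sup_left (Ideal.mem_span_singleton_self x)) trivial)
    exact Submodule.smul_mono_left le_sup_right (C.ε_d j hj a)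
  hom y hy := by
    obtain ⟨y1, hy1, y2, hy2, rfl⟩ := Submodule.mem_sup.1 hy
    obtain ⟨r, rfl⟩ := Ideal.mem_span_singleton'.1 hy1
    obtain ⟨h, hh⟩ := C.hom y2 hy2
    refine ⟨fun j => LinearMap.prod (h j ∘ₗ LinearMap.fst R _ _) (r • LinearMap.fst R _ _ - h (j-1) ∘ₗ LinearMap.snd R _ _), ?_⟩
    rintro j ⟨a, b⟩
    refine Prod.ext ?_ ?_
    · change (C.d j (h j a) + x • (r • a - h (j-1) b)) + h (j-1) (C.d (j-1) a + x • b) = (r * x + y2) • a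
      rw [add_smul, ← hh j a, map_add, map_smul]; module
    · change -(C.d (j-1) (r • a - h (j-1) b)) + (r • (C.d (j-1) a + x • b) - h (j-1-1) (-C.d (j-1-1) b)) = (r * x + y2) • b
      rw [add_smul, ← hh (j-1) b, map_sub, map_smul, map_neg]; module

lemma exists_kos [IsNoetherianRing R] (I : Ideal R) (M : Type) [AddCommGroup M] [Module R M] : Nonempty (Kos I M) := by
  classical
  obtain ⟨s, rfl⟩ := IsNoetherian.noetherian I
  induction s using Finset.induction_on with
  | empty =>
    have := Kos.base (R := R) M
    rw [← Ideal.span_empty] at this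
    rw [Finset.coe_empty]
    exact ⟨this⟩
  | insert x s hx ih =>
    obtain ⟨C⟩ := ih
    have := C.cone x
    rw [Finset.coe_insert]
    have h : Submodule.span R (insert x (s : Set R)) = Ideal.span {x} ⊔ Submodule.span R (s : Set R) := Ideal.span_insert x _
    rw [h]
    exact ⟨this⟩

section EF
variable {A B C X : Type}
  [AddCommGroup A] [Module R A] [AddCommGroup B] [Module R B] [AddCommGroup C] [Module R C]
  [AddCommGroup X] [Module R X]

lemma finite_mid [IsNoetherianRing R] (f : A →ₗ[R] B) (g : B →ₗ[R] C) (hex : ∀ b, g b = 0 → ∃ a, f a = b)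
   (hA : Module.Finite R A) (hC : Module.Finite R C) : Module.Finite R B := by
  have h1 : Module.Finite R (LinearMap.range g) := inferInstance
  have h2 : Module.Finite R (LinearMap.ker g) := by
    have : LinearMap.ker g ≤ LinearMap.range f := fun b hb => hex b hb
    exact Module.Finite.of_injective _ (Submodule.inclusion_injective this)
  have h3 : Module.Finite R (B ⧸ LinearMap.ker g) := Module.Finite.equiv g.quotKerEquivRange.symm
  exact Module.Finite.of_submodule_quotient (LinearMap.ker g)

variable (X) in
/-- all Ext finite -/
def EF (M : Type) [AddCommGroup M] [Module R M] : Prop := ∀ n, Module.Finite R (E R X M n)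

lemma EF.equiv (e : A ≃ₗ[R] B) (h : EF (R := R) X A) : EF (R := R) X B := by
  intro n
  have := h n
  refine Module.Finite.of_surjective (post e.toLinearMap : E R X A n →ₗ[R] E R X B n) fun b => ⟨post e.symm.toLinearMap b, ?_⟩
  rw [← post_comp, LinearEquiv.comp_symm, post_id]

lemma post_inj0 {f : A →ₗ[R] B} (hf : Function.Injective f) : Function.Injective (post f : E R X A 0 →ₗ[R] E R X B 0) := by
  rw [injective_iff_map_eq_zero]
  intro a ha
  obtain ⟨u, rfl⟩ := E0.surjective a
  rw [post_E0, map_eq_zero_iff _ E0.injective] at ha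
  rw [map_eq_zero_iff _ E0.injective]
  ext x
  exact hf ((congrArg (fun f => f x) ha).trans (map_zero f).symm)

variable [IsNoetherianRing R] {f : A →ₗ[R] B} {g : B →ₗ[R] C}

lemma EF.mid (h : SES f g) (hA : EF (R := R) X A) (hC : EF (R := R) X C) : EF (R := R) X B := fun n =>
  finite_mid (post f) (post g) (fun b hb => h.cov2 b hb) (hA n) (hC n)

lemma EF.right (h : SES f g) (hA : EF (R := R) X A) (hB : EF (R := R) X B) : EF (R := R) X C := fun n =>
  finite_mid (post g) h.δ (fun b hb => h.cov3 b hb) (hB n) (hA (n+1))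

lemma EF.left (h : SES f g) (hB : EF (R := R) X B) (hC : EF (R := R) X C) : EF (R := R) X A := fun n => by
  cases n with
  | zero => exact have := hB 0; Module.Finite.of_injective _ (post_inj0 (X := X) h.inj)
  | succ n => exact finite_mid h.δ (post f) (fun b hb => h.cov1 b hb) (hC n) (hB (n+1))

lemma EF.of_finite [Module.Finite R X] [Module.Finite R A] : EF (R := R) X A := fun n => finite_E n

lemma EF.prod (hA : EF (R := R) X A) (hC : EF (R := R) X C) : EF (R := R) X (A × C) :=
  EF.mid (f := LinearMap.inl R A C) (g := LinearMap.snd R A C) ⟨LinearMap.inl_injective, Function.Exact.inl_snd, Prod.snd_surjective⟩ hA hC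

lemma finite_of_killed {I : Ideal R} (hk : ∀ x ∈ I, ∀ a : A, x • a = 0) (h : Module.Finite R (E R (R ⧸ I) A 0)) : Module.Finite R A := by
  have : Module.Finite R ((R ⧸ I) →ₗ[R] A) := Module.Finite.equiv E0.symm
  refine Module.Finite.of_surjective (LinearMap.applyₗ (R := R) (1 : R ⧸ I) : ((R ⧸ I) →ₗ[R] A) →ₗ[R] A) fun a => ?_
  have hle : I ≤ LinearMap.ker (LinearMap.toSpanSingleton R A a) := fun x hx => by simpa using hk x hx a
  refine ⟨Submodule.liftQ I (LinearMap.toSpanSingleton R A a) hle, ?_⟩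
  exact one_smul R a
end EF

lemma Kos.killed {I : Ideal R} {M : Type} [AddCommGroup M] [Module R M] (C : Kos I M) (j : ℤ) (x : R) (hx : x ∈ I) (z : C.K (j-1)) (hz : C.d (j-1) z = 0) :
    x • z ∈ LinearMap.range (C.d j) := by
  obtain ⟨h, hh⟩ := C.hom x hx
  have := hh j z
  rw [hz, map_zero, add_zero] at this
  exact ⟨_, this⟩

/-- boundaries inside cycles -/
def Kos.B {I : Ideal R} {M : Type} [AddCommGroup M] [Module R M] (C : Kos I M) (j : ℤ) : Submodule R (LinearMap.ker (C.d (j-1))) :=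
  (LinearMap.range (C.d j)).comap (LinearMap.ker (C.d (j-1))).subtype

/-- identification -/
noncomputable def Kos.Be {I : Ideal R} {M : Type} [AddCommGroup M] [Module R M] (C : Kos I M) (j : ℤ) : LinearMap.range (C.d j) ≃ₗ[R] C.B j :=
  (Submodule.comapSubtypeEquivOfLe (by rintro _ ⟨z, rfl⟩; exact C.dd j z)).symm

lemma Kos.H_killed {I : Ideal R} {M : Type} [AddCommGroup M] [Module R M] (C : Kos I M) (j : ℤ) (x : R) (hx : x ∈ I)
    (z : LinearMap.ker (C.d (j-1)) ⧸ C.B j) : x • z = 0 := by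
  obtain ⟨z, rfl⟩ := Submodule.Quotient.mk_surjective _ z
  rw [← Submodule.Quotient.mk_smul, Submodule.Quotient.mk_eq_zero]
  exact C.killed j x hx z.1 z.2

lemma Kos.descend {I : Ideal R} {M : Type} [AddCommGroup M] [Module R M] (C : Kos I M) (Φ : ℤ → Prop)
    (h0 : ∀ j, Subsingleton (C.K j) → Φ j) (h1 : ∀ j, Φ j → Φ (j-1)) (j : ℤ) : Φ j := by
  have : ∀ k : ℕ, Φ (j + |C.bd - j| - k) := by
    intro k
    induction k with
    | zero => exact h0 _ (C.big _ (by have := le_abs_self (C.bd - j); push_cast; omega))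
    | succ k ih => have := h1 _ ih; rwa [sub_sub] at this
  have h2 := this (C.bd - j).natAbs
  rwa [Int.natCast_natAbs, add_sub_cancel_right] at h2

lemma Kos.EF_range [IsNoetherianRing R] {I : Ideal R} {M : Type} [AddCommGroup M] [Module R M] (C : Kos I M) (hM : EF (R := R) (R ⧸ I) M) (j : ℤ) :
    EF (R := R) (R ⧸ I) (LinearMap.range (C.d j)) ∧ Module.Finite R (LinearMap.ker (C.d (j-1)) ⧸ C.B j) := by
  have hK : ∀ j, EF (R := R) (R ⧸ I) (C.K j) := C.P (fun X => EF (R := R) (R ⧸ I) X) 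
    (fun X hX => EF.of_finite) (fun X Y ⟨e⟩ h => h.equiv e) (fun X Y h1 h2 => h1.prod h2) hM
  have hfin : ∀ j, EF (R := R) (R ⧸ I) (LinearMap.range (C.d j)) → Module.Finite R (LinearMap.ker (C.d (j-1)) ⧸ C.B j) := by
    intro j hj
    refine finite_of_killed (C.H_killed j) ?_
    have hB := hj.equiv (C.Be j)
    have := hK (j-1) 0
    have hZ : Module.Finite R (E R (R ⧸ I) (LinearMap.ker (C.d (j-1))) 0) :=
      Module.Finite.of_injective _ (post_inj0 (X := R ⧸ I) (LinearMap.ker (C.d (j-1))).injective_subtype)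
    exact finite_mid (post (C.B j).mkQ) (SES.mk_quot (C.B j)).δ (fun b hb => (SES.mk_quot (C.B j)).cov3 b hb) hZ (hB 1)
  have key := C.descend (fun j => EF (R := R) (R ⧸ I) (LinearMap.range (C.d j))) (fun j hj => EF.of_finite) (fun j hj => by
    have := hfin j hj
    have hB := hj.equiv (C.Be j)
    have hZ := EF.mid (SES.mk_quot (C.B j)) hB EF.of_finite
    have hs : SES (LinearMap.ker (C.d (j-1))).subtype (C.d (j-1)).rangeRestrict :=
      ⟨Subtype.val_injective, by
        intro y; simp [Subtype.ext_iff], (C.d (j-1)).surjective_rangeRestrict⟩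
    exact EF.right hs hZ (hK _)) j
  exact ⟨key, hfin j key⟩

lemma finite_quot [IsNoetherianRing R] {I : Ideal R} {M : Type} [AddCommGroup M] [Module R M] (hM : EF (R := R) (R ⧸ I) M) :
    Module.Finite R (M ⧸ (I • ⊤ : Submodule R M)) := by
  obtain ⟨C⟩ := exists_kos I M
  have := (C.EF_range hM 1).2
  have h10 : (1:ℤ) - 1 = 0 := by norm_num
  let φ : LinearMap.ker (C.d (1-1)) →ₗ[R] M ⧸ (I • ⊤ : Submodule R M) := (I • ⊤ : Submodule R M).mkQ ∘ₗ C.ε _ h10 ∘ₗ Submodule.subtype _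
  have hφ : C.B 1 ≤ LinearMap.ker φ := by
    rintro ⟨z, hz⟩ ⟨y, hy⟩
    change (I • ⊤ : Submodule R M).mkQ (C.ε _ h10 z) = 0
    have hy' : C.d 1 y = z := hy
    rw [Submodule.mkQ_apply, Submodule.Quotient.mk_eq_zero, ← hy']
    exact C.ε_d 1 h10 y
  refine Module.Finite.of_surjective ((C.B 1).liftQ φ hφ) ?_
  intro m
  obtain ⟨m, rfl⟩ := Submodule.Quotient.mk_surjective _ m
  obtain ⟨z, rfl⟩ := (C.ε_bij _ h10).2 m
  have := C.neg (1-1-1) (by norm_num)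
  exact ⟨Submodule.Quotient.mk ⟨z, Subsingleton.elim _ _⟩, rfl⟩
end Cof

namespace Cof
open scoped TensorProduct
variable {R : Type} [CommRing R]

section V
variable (J : Ideal R) (N : Type) [AddCommGroup N] [Module R N]

/-- multiplication map -/
noncomputable def mu : J ⊗[R] N →ₗ[R] N := TensorProduct.lift ((LinearMap.lsmul R N) ∘ₗ J.subtype)

@[simp] lemma mu_tmul (x : J) (n : N) : mu J N (x ⊗ₜ n) = (x : R) • n := rfl

lemma smul_eq_tmul_mu (y : J) (t : J ⊗[R] N) : (y : R) • t = y ⊗ₜ (mu J N t) := by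
  induction t with
  | zero => simp
  | add a b ha hb => rw [smul_add, ha, hb, map_add, TensorProduct.tmul_add]
  | tmul x n =>
    rw [mu_tmul, TensorProduct.tmul_smul, TensorProduct.smul_tmul', TensorProduct.smul_tmul']
    congr 1
    ext; simp [mul_comm]

lemma range_mu : LinearMap.range (mu J N) = J • (⊤ : Submodule R N) := by
  apply le_antisymm
  · rintro _ ⟨t, rfl⟩
    induction t with
    | zero => simp
    | add a b ha hb => rw [map_add]; exact Submodule.add_mem _ ha hb
    | tmul x n => exact Submodule.smul_mem_smul x.2 trivial
  · rw [Submodule.smul_le]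
    intro r hr n _
    exact ⟨(⟨r, hr⟩ : J) ⊗ₜ n, rfl⟩

/-- The kernel. -/
noncomputable abbrev V : Submodule R (J ⊗[R] N) := LinearMap.ker (mu J N)

lemma V_killed (y : R) (hy : y ∈ J) (t : J ⊗[R] N) (ht : t ∈ V J N) : y • t = 0 := by
  rw [smul_eq_tmul_mu J N ⟨y, hy⟩ t, LinearMap.mem_ker.1 ht, TensorProduct.tmul_zero]
end V

lemma EF.pi [IsNoetherianRing R] {X N : Type} [AddCommGroup X] [Module R X] [AddCommGroup N] [Module R N] [Module.Finite R X]
    (h : EF (R := R) X N) (r : ℕ) : EF (R := R) X (Fin r → N) := by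
  induction r with
  | zero => exact EF.of_finite
  | succ r ih =>
    exact (h.prod ih).equiv (Fin.consLinearEquiv R (fun _ => N))

lemma exists_tensor_surj [IsNoetherianRing R] (I : Ideal R) (N : Type) [AddCommGroup N] [Module R N] :
    ∃ (r : ℕ) (q : (Fin r → N) →ₗ[R] I ⊗[R] N), Function.Surjective q := by
  obtain ⟨r, p, hp⟩ := Module.Finite.exists_fin' R I
  -- map to tensor
  let q : (Fin r → N) →ₗ[R] I ⊗[R] N := ∑ i, (TensorProduct.mk R I N (p (Pi.single i 1))) ∘ₗ LinearMap.proj i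
  refine ⟨r, q, ?_⟩
  rw [← LinearMap.range_eq_top, eq_top_iff, ← TensorProduct.span_tmul_eq_top, Submodule.span_le]
  rintro _ ⟨x, n, rfl⟩
  obtain ⟨c, rfl⟩ := hp x
  refine ⟨fun i => c i • n, ?_⟩
  have : c = ∑ i, c i • Pi.single i (1:R) := (pi_eq_sum_univ' c).trans (by simp [← Pi.single_smul])
  conv_rhs => rw [this, map_sum, TensorProduct.sum_tmul]
  simp [q, TensorProduct.smul_tmul]

lemma finite_of_surj_killed [IsNoetherianRing R] {I : Ideal R} {Z T : Type} [AddCommGroup Z] [Module R Z] [AddCommGroup T] [Module R T]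
    (hZ : EF (R := R) (R ⧸ I) Z) (ψ : Z →ₗ[R] T) (hs : Function.Surjective ψ) (hk : ∀ y ∈ I, ∀ t : T, y • t = 0) : Module.Finite R T := by
  have hZf := finite_quot hZ
  have hψ : (I • ⊤ : Submodule R Z) ≤ LinearMap.ker ψ := by
    rw [Submodule.smul_le]
    intro y hy z _
    rw [LinearMap.mem_ker, map_smul, hk y hy]
  refine Module.Finite.of_surjective (Submodule.liftQ _ ψ hψ) ?_
  intro t
  obtain ⟨n, rfl⟩ := hs t
  exact ⟨Submodule.Quotient.mk n, rfl⟩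

lemma finite_V [IsNoetherianRing R] {I : Ideal R} {N : Type} [AddCommGroup N] [Module R N] (hN : EF (R := R) (R ⧸ I) N) :
    Module.Finite R (V I N) := by
  have h1 := finite_quot hN
  have hIN : EF (R := R) (R ⧸ I) (I • ⊤ : Submodule R N) := EF.left (SES.mk_quot _) hN EF.of_finite
  obtain ⟨r, q, hq⟩ := exists_tensor_surj I N
  have hm : ∀ t, mu I N t ∈ (I • ⊤ : Submodule R N) := by
    intro t
    rw [← range_mu]; exact ⟨t, rfl⟩
  have hφ : Function.Surjective (((mu I N).codRestrict _ hm) ∘ₗ q) := by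
    rw [LinearMap.coe_comp]
    refine Function.Surjective.comp ?_ hq
    rintro ⟨y, hy⟩
    have hy' := hy
    rw [← range_mu] at hy'
    obtain ⟨t, rfl⟩ := hy'
    exact ⟨t, rfl⟩
  have hZ := EF.left (SES.mk_ker hφ) (hN.pi r) hIN
  refine finite_of_surj_killed (T := V I N) hZ ((q ∘ₗ Submodule.subtype _).codRestrict (V I N) ?_) ?_ ?_
  · intro z
    have := z.2
    rw [LinearMap.mem_ker] at this ⊢
    exact congrArg Subtype.val this
  · rintro ⟨t, ht⟩
    obtain ⟨n, rfl⟩ := hq t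
    exact ⟨⟨n, Subtype.ext ht⟩, rfl⟩
  · intro y hy t
    exact Subtype.ext (V_killed I N y hy _ t.2)

lemma finite_V_quot [IsNoetherianRing R] {I : Ideal R} {N : Type} [AddCommGroup N] [Module R N] (L : Submodule R N)
    (hV : Module.Finite R (V I N)) (hL : Module.Finite R (L.map (I • L).mkQ)) : Module.Finite R (V I (N ⧸ L)) := by
  have hex := lTensor_exact I (LinearMap.exact_subtype_mkQ L) L.mkQ_surjective
  have hs := LinearMap.lTensor_surjective I L.mkQ_surjective
  have hrange : ∀ w : I ⊗[R] L, mu I N (L.subtype.lTensor I w) ∈ I • L := by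
    intro w
    induction w with
    | zero => simp
    | add a b ha hb => rw [map_add, map_add]; exact Submodule.add_mem _ ha hb
    | tmul x n => exact Submodule.smul_mem_smul x.2 n.2
  have hrange' : ∀ l ∈ I • L, ∃ w : I ⊗[R] L, mu I N (L.subtype.lTensor I w) = l := by
    intro l hl
    refine Submodule.smul_induction_on (p := fun l => ∃ w : I ⊗[R] L, mu I N (L.subtype.lTensor I w) = l) hl ?_ ?_
    · intro r hr n hn
      exact ⟨(⟨r, hr⟩ : I) ⊗ₜ ⟨n, hn⟩, rfl⟩
    · rintro _ _ ⟨a, rfl⟩ ⟨b, rfl⟩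
      exact ⟨a + b, by rw [map_add, map_add]⟩
  have hnat : ∀ u, mu I (N ⧸ L) (L.mkQ.lTensor I u) = L.mkQ (mu I N u) := by
    intro u
    induction u with
    | zero => simp
    | add a b ha hb => rw [map_add, map_add, ha, hb, map_add, map_add]
    | tmul x n => rfl
  have hk : LinearMap.ker (L.mkQ.lTensor I) ≤ LinearMap.ker ((I • L).mkQ ∘ₗ mu I N) := by
    intro u hu
    obtain ⟨w, rfl⟩ := (hex u).1 hu
    rw [LinearMap.mem_ker, LinearMap.comp_apply, Submodule.mkQ_apply, Submodule.Quotient.mk_eq_zero]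
    exact hrange w
  let G : I ⊗[R] (N ⧸ L) →ₗ[R] N ⧸ (I • L) := 
    (Submodule.liftQ _ _ hk) ∘ₗ ((L.mkQ.lTensor I).quotKerEquivOfSurjective hs).symm.toLinearMap
  have hG : ∀ u, G (L.mkQ.lTensor I u) = (I • L).mkQ (mu I N u) := by
    intro u
    have : ((L.mkQ.lTensor I).quotKerEquivOfSurjective hs).symm (L.mkQ.lTensor I u) = Submodule.Quotient.mk u := by
      rw [LinearEquiv.symm_apply_eq]; rfl
    change (Submodule.liftQ _ _ hk) (((L.mkQ.lTensor I).quotKerEquivOfSurjective hs).symm (L.mkQ.lTensor I u)) = _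
    rw [this]; rfl
  have hGm : ∀ t : V I (N ⧸ L), G t ∈ L.map (I • L).mkQ := by
    rintro ⟨t, ht⟩
    obtain ⟨u, rfl⟩ := hs t
    rw [LinearMap.mem_ker, hnat, Submodule.mkQ_apply, Submodule.Quotient.mk_eq_zero] at ht
    exact ⟨_, ht, (hG u).symm⟩
  let g : V I (N ⧸ L) →ₗ[R] L.map (I • L).mkQ := (G ∘ₗ Submodule.subtype _).codRestrict _ hGm
  let f : V I N →ₗ[R] V I (N ⧸ L) := ((L.mkQ.lTensor I) ∘ₗ Submodule.subtype _).codRestrict _ (by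
    rintro ⟨u, hu⟩
    rw [LinearMap.mem_ker]
    change mu I (N ⧸ L) (L.mkQ.lTensor I u) = 0
    rw [hnat, LinearMap.mem_ker.1 hu, map_zero])
  refine finite_mid (A := V I N) (B := V I (N ⧸ L)) f g ?_ hV hL
  rintro ⟨t, ht⟩ h
  obtain ⟨u, rfl⟩ := hs t
  have h2 : G (L.mkQ.lTensor I u) = 0 := congrArg Subtype.val h
  rw [hG, Submodule.mkQ_apply, Submodule.Quotient.mk_eq_zero] at h2
  obtain ⟨w, hw⟩ := hrange' _ h2
  refine ⟨⟨u - L.subtype.lTensor I w, ?_⟩, Subtype.ext ?_⟩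
  · rw [LinearMap.mem_ker, map_sub, hw, sub_self]
  · change L.mkQ.lTensor I (u - L.subtype.lTensor I w) = L.mkQ.lTensor I u
    rw [map_sub, (hex _).2 ⟨w, rfl⟩, sub_zero]
end Cof

namespace Cof
variable {R : Type} [CommRing R]

section W
variable (I : Ideal R)

/-- inclusion of powers -/
def inc {n m : ℕ} (h : n ≤ m) : ↥(I ^ m) →ₗ[R] ↥(I ^ n) := Submodule.inclusion (Ideal.pow_le_pow_right h)

lemma inc_comp {n m k : ℕ} (h : n ≤ m) (h' : m ≤ k) : inc I h ∘ₗ inc I h' = inc I (h.trans h') := rfl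

/-- eventual vanishing -/
def W (j : ℕ) (M : Type) [AddCommGroup M] [Module R M] : Prop :=
  ∀ (n : ℕ) (e : E R ↥(I ^ n) M j), ∃ (m : ℕ) (hm : n ≤ m), pre (inc I hm) e = 0

variable {A B C X : Type}
  [AddCommGroup A] [Module R A] [AddCommGroup B] [Module R B] [AddCommGroup C] [Module R C]
  [AddCommGroup X] [Module R X] {f : A →ₗ[R] B} {g : B →ₗ[R] C} {I}

lemma W.mid (h : SES f g) {j : ℕ} (hA : W I j A) (hC : W I j C) : W I j B := by
  intro n e
  obtain ⟨m, hm, he⟩ := hC n (post g e)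
  rw [pre_post] at he
  obtain ⟨a, ha⟩ := h.cov2 _ he
  obtain ⟨k, hk, hak⟩ := hA m a
  refine ⟨k, hm.trans hk, ?_⟩
  rw [← inc_comp I hm hk, pre_comp, ← ha, pre_post, hak, map_zero]

lemma W.right (h : SES f g) {j : ℕ} (hA : W I (j+1) A) (hB : W I j B) : W I j C := by
  intro n e
  obtain ⟨m, hm, he⟩ := hA n (h.δ e)
  rw [h.pre_δ] at he
  obtain ⟨a, ha⟩ := h.cov3 _ he
  obtain ⟨k, hk, hak⟩ := hB m a
  refine ⟨k, hm.trans hk, ?_⟩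
  rw [← inc_comp I hm hk, pre_comp, ← ha, pre_post, hak, map_zero]

lemma W.equiv (e : A ≃ₗ[R] B) {j : ℕ} (h : W I j A) : W I j B := by
  intro n b
  obtain ⟨m, hm, hh⟩ := h n (post e.symm.toLinearMap b)
  refine ⟨m, hm, ?_⟩
  have : b = post e.toLinearMap (post e.symm.toLinearMap b) := by
    rw [← post_comp, LinearEquiv.comp_symm, post_id]
  rw [this, pre_post, hh, map_zero]

lemma W.prod {j : ℕ} (hA : W I j A) (hC : W I j C) : W I j (A × C) :=
  W.mid (f := LinearMap.inl R A C) (g := LinearMap.snd R A C) ⟨LinearMap.inl_injective, Function.Exact.inl_snd, Prod.snd_surjective⟩ hA hC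

lemma W.of_subsingleton {j : ℕ} (h : Subsingleton A) : W I j A := by
  intro n e
  refine ⟨n, le_rfl, ?_⟩
  have : e = post (0 : A →ₗ[R] A) e := by
    have h0 : (LinearMap.id : A →ₗ[R] A) = 0 := by ext x; exact Subsingleton.elim _ _
    rw [← h0, post_id]
  rw [this, post_zero, map_zero]

lemma W.of_cd {j : ℕ} (h : Subsingleton ((localCohomology I (j+1+1)).obj (ModuleCat.of R R))) : W I (j+1) R := by
  intro n e
  obtain ⟨m, hm, he⟩ := exists_kill I (j+1+1) _ h n ((SES.mk_quot (I ^ n)).γ e)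
  refine ⟨m, hm, ?_⟩
  have h1 := SES.pre_γ (SES.mk_quot (I ^ m)) (SES.mk_quot (I ^ n)) (inc I hm) LinearMap.id (Submodule.factor (Ideal.pow_le_pow_right hm : I ^ m ≤ I ^ n)) rfl rfl e
  have h2 := h1.symm.trans he
  obtain ⟨c, hc⟩ := SES.con1 _ _ h2
  rw [← hc, E_proj c, map_zero]

lemma pre_factor {Y Z : Type} [AddCommGroup Y] [Module R Y] [AddCommGroup Z] [Module R Z] {n : ℕ} {S : Submodule R Y} (a : X →ₗ[R] Y)
    (ha : ∀ v, a v ∈ S) (z : E R Y Z n) (h : pre S.subtype z = 0) : pre a z = 0 := by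
  have : a = S.subtype ∘ₗ a.codRestrict S ha := rfl
  rw [this, pre_comp, h, map_zero]

lemma kill_fg [IsNoetherianRing R] (hX : ∀ x ∈ I, ∀ a : X, x • a = 0) (j : ℕ) : ∀ (Y : Type) [AddCommGroup Y] [Module R Y] [Module.Finite R Y]
    (e : E R Y X j), ∃ l : ℕ, pre (I ^ l • ⊤ : Submodule R Y).subtype e = 0 := by
  induction j with
  | zero =>
    intro Y _ _ _ e
    obtain ⟨f, rfl⟩ := E0.surjective e
    refine ⟨1, ?_⟩
    rw [pre_E0, map_eq_zero_iff _ E0.injective]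
    ext ⟨y, hy⟩
    have : (I ^ 1 • ⊤ : Submodule R Y) ≤ LinearMap.ker f := by
      rw [pow_one, Submodule.smul_le]
      intro r hr n _
      rw [LinearMap.mem_ker, map_smul, hX r hr]
    exact this hy
  | succ j ih =>
    intro Y _ _ _ e
    obtain ⟨k, π, hπ⟩ := Module.Finite.exists_fin' R Y
    have hs := SES.mk_ker hπ
    obtain ⟨z, rfl⟩ := hs.con3 e (E_proj _)
    obtain ⟨l, hl⟩ := ih (LinearMap.ker π) z
    obtain ⟨c, hc⟩ := Ideal.exists_pow_inf_eq_pow_smul I (LinearMap.ker π)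
    refine ⟨l + c, ?_⟩
    have hmap : ∀ v ∈ (I ^ (l+c) • ⊤ : Submodule R (Fin k → R)), π v ∈ (I ^ (l+c) • ⊤ : Submodule R Y) := by
      intro v hv
      have := Submodule.mem_map_of_mem (f := π) hv
      rw [Submodule.map_smul''] at this
      exact Submodule.smul_mono le_rfl le_top this
    let π' : (I ^ (l+c) • ⊤ : Submodule R (Fin k → R)) →ₗ[R] (I ^ (l+c) • ⊤ : Submodule R Y) := π.restrict hmap
    have hπ' : Function.Surjective π' := by
      rintro ⟨y, hy⟩
      have : (I ^ (l+c) • ⊤ : Submodule R Y) = (I ^ (l+c) • ⊤ : Submodule R (Fin k → R)).map π := by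
        rw [Submodule.map_smul'', Submodule.map_top, LinearMap.range_eq_top.2 hπ]
      have hy' := hy
      rw [this] at hy'
      obtain ⟨v, hv, rfl⟩ := hy'
      exact ⟨⟨v, hv⟩, rfl⟩
    let a : LinearMap.ker π' →ₗ[R] LinearMap.ker π := ((Submodule.subtype _) ∘ₗ (Submodule.subtype _)).codRestrict _ (fun v => congrArg Subtype.val v.2)
    rw [SES.pre_γ (SES.mk_ker hπ') hs a (Submodule.subtype _) _ rfl rfl]
    have ha : ∀ v, a v ∈ (I ^ l • ⊤ : Submodule R (LinearMap.ker π)) := by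
      intro v
      have h1 : (v : Fin k → R) ∈ I ^ (l+c) • ⊤ ⊓ LinearMap.ker π := ⟨v.1.2, congrArg Subtype.val v.2⟩
      rw [hc (l+c) (by omega), Nat.add_sub_cancel] at h1
      have h2 := Submodule.smul_mono (le_refl (I ^ l)) (inf_le_right (a := I ^ c • ⊤) (b := LinearMap.ker π)) h1
      have h3 : (I ^ l • ⊤ : Submodule R (LinearMap.ker π)).map (Submodule.subtype _) = I ^ l • LinearMap.ker π := by
        rw [Submodule.map_smul'', Submodule.map_subtype_top]
      rw [← h3] at h2
      obtain ⟨w, hw, hw2⟩ := h2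
      have : w = a v := Subtype.ext hw2
      rwa [← this]
    have hz := pre_factor (X := LinearMap.ker π') (Y := LinearMap.ker π) (Z := X) (S := (I ^ l • ⊤ : Submodule R (LinearMap.ker π))) a ha z hl
    rw [hz, map_zero]

lemma W.of_killed [IsNoetherianRing R] (hX : ∀ x ∈ I, ∀ a : X, x • a = 0) (j : ℕ) : W I j X := by
  intro n e
  obtain ⟨l, hl⟩ := kill_fg hX j _ e
  refine ⟨l + n, by omega, ?_⟩
  have h1 : ∀ v, inc I (by omega : n ≤ l + n) v ∈ (I ^ l • ⊤ : Submodule R ↥(I ^ n)) := by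
    rintro ⟨v, hv⟩
    have h3 : (I ^ l • ⊤ : Submodule R ↥(I ^ n)).map (Submodule.subtype _) = I ^ (l + n) := by
      rw [Submodule.map_smul'', Submodule.map_subtype_top, pow_add]; rfl
    have hv2 := hv
    rw [← h3] at hv2
    obtain ⟨w, hw, hw2⟩ := hv2
    have : w = inc I (by omega : n ≤ l + n) ⟨v, hv⟩ := Subtype.ext hw2
    rwa [← this]
  have : inc I (by omega : n ≤ l + n) = (I ^ l • ⊤ : Submodule R ↥(I ^ n)).subtype ∘ₗ (inc I (by omega : n ≤ l + n)).codRestrict _ h1 := rfl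
  rw [this, pre_comp, hl, map_zero]

lemma SES.range (f : A →ₗ[R] B) : SES (LinearMap.ker f).subtype f.rangeRestrict :=
  ⟨Subtype.val_injective, by intro y; simp [Subtype.ext_iff], f.surjective_rangeRestrict⟩

lemma Kos.W_ker [IsNoetherianRing R] (C : Kos I R) (hR : ∀ j, W I (j+1) R) (j : ℤ) (n : ℕ) : W I (n+1) (LinearMap.ker (C.d (j-1))) := by
  have hK : ∀ n j, W I (n+1) (C.K j) := fun n => C.P (fun X => W I (n+1) X)
    (fun X hX => W.of_subsingleton hX) (fun X Y ⟨e⟩ h => h.equiv e) (fun X Y h1 h2 => h1.prod h2) (hR n)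
  have hZ : ∀ j, (∀ n, W I (n+1) (LinearMap.range (C.d j))) → ∀ n, W I (n+1) (LinearMap.ker (C.d (j-1))) := by
    intro j hj n
    exact W.mid (SES.mk_quot (C.B j)) ((hj n).equiv (C.Be j)) (W.of_killed (C.H_killed j) _)
  have key := C.descend (fun j => ∀ n, W I (n+1) (LinearMap.range (C.d j))) (fun j hj n => W.of_subsingleton (by
    refine ⟨fun a b => ?_⟩
    obtain ⟨_, ⟨a, rfl⟩⟩ := a
    obtain ⟨_, ⟨b, rfl⟩⟩ := b
    rw [Subsingleton.elim a b])) (fun j hj n => W.right (SES.range _) (hZ j hj (n+1)) (hK n _)) j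
  exact hZ j key n

lemma star [IsNoetherianRing R] (I : Ideal R) (hcd : ∀ i : ℕ, 1 < i → Subsingleton ((localCohomology I i).obj (ModuleCat.of R R))) :
    ∃ (n k : ℕ) (x : Fin k → R) (s : Fin k → (↥(I ^ n) →ₗ[R] R)), (∀ i, x i ∈ I) ∧ ∀ a, ∑ i, x i * s i a = a := by
  obtain ⟨C⟩ := exists_kos I R
  have hW := C.W_ker (fun j => W.of_cd (hcd (j+1+1) (by omega))) 2 0
  have h0 : (2:ℤ) - 1 - 1 = 0 := by norm_num
  obtain ⟨u, hu⟩ := (C.ε_bij _ h0).2 1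
  have hneg := C.neg (2-1-1-1) (by norm_num)
  have hr : ∀ a : ↥(I ^ 1), (a : R) • u ∈ LinearMap.range (C.d (2-1)) := fun a =>
    C.killed (2-1) a ((pow_one I).le a.2) u (Subsingleton.elim _ _)
  let ι : ↥(I ^ 1) →ₗ[R] LinearMap.range (C.d (2-1)) := ((LinearMap.toSpanSingleton R _ u) ∘ₗ Submodule.subtype _).codRestrict _ hr
  have hs := SES.range (C.d (2-1))
  obtain ⟨m, hm, he⟩ := hW 1 (hs.δ (E0 ι))
  rw [hs.pre_δ] at he
  obtain ⟨c, hc⟩ := hs.cov3 _ he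
  obtain ⟨s, rfl⟩ := E0.surjective c
  rw [post_E0, pre_E0, E0.injective.eq_iff] at hc
  have hsd : ∀ a : ↥(I ^ m), C.d (2-1) (s a) = (a : R) • u := fun a => congrArg (fun f => (f a : C.K (2-1-1))) hc
  obtain ⟨hfree, hfin⟩ : Module.Free R (C.K (2-1)) ∧ Module.Finite R (C.K (2-1)) := C.P (fun X => Module.Free R X ∧ Module.Finite R X)
    (fun X hX => ⟨inferInstance, inferInstance⟩) (fun X Y ⟨e⟩ ⟨h1, h2⟩ => ⟨Module.Free.of_equiv e, Module.Finite.equiv e⟩)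
    (fun X Y ⟨h1, h2⟩ ⟨h3, h4⟩ => ⟨inferInstanceAs (Module.Free R (X × Y)), inferInstanceAs (Module.Finite R (X × Y))⟩)
    ⟨inferInstanceAs (Module.Free R R), inferInstanceAs (Module.Finite R R)⟩ _
  let b0 := Module.Free.chooseBasis R (C.K (2-1))
  let b := b0.reindex (Fintype.equivFin _)
  refine ⟨m, _, fun i => C.ε _ h0 (C.d (2-1) (b i)), fun i => b.coord i ∘ₗ s, fun i => ?_, fun a => ?_⟩
  · have := C.ε_d (2-1) h0 (b i)
    simpa using this
  · have h1 := congrArg (C.ε _ h0) (hsd a)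
    rw [map_smul, hu, smul_eq_mul, mul_one, ← b.sum_repr (s a), map_sum, map_sum] at h1
    rw [← h1]
    refine Finset.sum_congr rfl fun i _ => ?_
    rw [map_smul, map_smul, smul_eq_mul, mul_comm]; rfl
end W
end Cof

namespace Cof
open scoped TensorProduct
variable {R : Type} [CommRing R]

section H
variable (I : Ideal R) (C : Type) [AddCommGroup C] [Module R C]

/-- multiplication of powers -/
def mulPow (n : ℕ) : ↥(I ^ n) →ₗ[R] I →ₗ[R] ↥(I ^ (n+1)) :=
  LinearMap.mk₂ R (fun a b => ⟨(a : R) * b, by rw [pow_succ]; exact Ideal.mul_mem_mul a.2 b.2⟩)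
    (fun a b c => Subtype.ext (add_mul _ _ _)) (fun r a b => Subtype.ext (mul_assoc _ _ _))
    (fun a b c => Subtype.ext (mul_add _ _ _)) (fun r a b => Subtype.ext (mul_left_comm _ _ _))

/-- multiplication after tensoring -/
noncomputable def phi (n : ℕ) : ↥(I ^ n) ⊗[R] (I ⊗[R] C) →ₗ[R] ↥(I ^ (n+1)) ⊗[R] C :=
  (TensorProduct.lift (mulPow I n)).rTensor C ∘ₗ (TensorProduct.assoc R ↥(I ^ n) I C).symm.toLinearMap

lemma phi_surj (n : ℕ) : Function.Surjective (phi I C n) := by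
  unfold phi
  rw [LinearMap.coe_comp]
  refine Function.Surjective.comp (LinearMap.rTensor_surjective C ?_) (LinearEquiv.surjective _)
  rintro ⟨a, ha⟩
  have ha' := ha
  rw [pow_succ] at ha'
  have : ∃ w, ((TensorProduct.lift (mulPow I n) w : ↥(I ^ (n+1))) : R) = a := by
    refine Submodule.mul_induction_on ha' ?_ ?_
    · intro x hx y hy
      exact ⟨(⟨x, hx⟩ : ↥(I ^ n)) ⊗ₜ (⟨y, hy⟩ : I), rfl⟩
    · rintro _ _ ⟨u, rfl⟩ ⟨v, rfl⟩
      exact ⟨u + v, by rw [map_add]; rfl⟩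
  obtain ⟨w, hw⟩ := this
  exact ⟨w, Subtype.ext hw⟩

lemma inc_phi (n : ℕ) : (inc I (Nat.le_succ n)).rTensor C ∘ₗ phi I C n = (mu I C).lTensor ↥(I ^ n) := by
  ext a b c
  change (inc I (Nat.le_succ n) (mulPow I n a b)) ⊗ₜ[R] c = a ⊗ₜ[R] ((b : R) • c)
  rw [← TensorProduct.smul_tmul]
  congr 1
  exact Subtype.ext (mul_comm _ _)

lemma mu_inc {n m : ℕ} (h : n ≤ m) : mu (I ^ n) C ∘ₗ (inc I h).rTensor C = mu (I ^ m) C := by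
  ext a c
  rfl

variable {I C}
lemma finite_V_pow [IsNoetherianRing R] (hC : (I • ⊤ : Submodule R C) = ⊤) (hV : Module.Finite R (V I C)) (n : ℕ) :
    Module.Finite R (V (I ^ n) C) := by
  have hmu : Function.Surjective (mu I C) := by
    rw [← LinearMap.range_eq_top, range_mu, hC]
  induction n with
  | zero =>
    have : Subsingleton (V (I ^ 0) C) := by
      rw [Submodule.subsingleton_iff_eq_bot, eq_bot_iff]
      intro t ht
      rw [← one_smul R t]
      exact V_killed _ _ 1 (by simp) t ht
    infer_instance
  | succ n ih =>
    let g : V (I ^ (n+1)) C →ₗ[R] V (I ^ n) C := ((inc I (Nat.le_succ n)).rTensor C ∘ₗ Submodule.subtype _).codRestrict _ (by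
      rintro ⟨t, ht⟩
      rw [LinearMap.mem_ker] at ht ⊢
      rw [← mu_inc I C (Nat.le_succ n)] at ht
      exact ht)
    let f : ↥(I ^ n) ⊗[R] V I C →ₗ[R] V (I ^ (n+1)) C := (phi I C n ∘ₗ (V I C).subtype.lTensor ↥(I ^ n)).codRestrict _ (by
      intro w
      have h1 := LinearMap.congr_fun (inc_phi I C n) ((V I C).subtype.lTensor ↥(I ^ n) w)
      rw [LinearMap.comp_apply, ← LinearMap.comp_apply (LinearMap.lTensor _ _), ← LinearMap.lTensor_comp, LinearMap.comp_ker_subtype, LinearMap.lTensor_zero, LinearMap.zero_apply] at h1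
      rw [LinearMap.mem_ker, ← mu_inc I C (Nat.le_succ n), LinearMap.comp_apply, LinearMap.comp_apply, h1, map_zero])
    have hf : Module.Finite R (↥(I ^ n) ⊗[R] V I C) := inferInstance
    refine finite_mid (A := ↥(I ^ n) ⊗[R] V I C) (B := V (I ^ (n+1)) C) (C := V (I ^ n) C) f g ?_ hf ih
    rintro ⟨t, ht⟩ h
    obtain ⟨u, rfl⟩ := phi_surj I C n t
    have h1 : (inc I (Nat.le_succ n)).rTensor C (phi I C n u) = 0 := congrArg Subtype.val h
    rw [← LinearMap.comp_apply, inc_phi] at h1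
    have hex := lTensor_exact (M := V I C) (N := I ⊗[R] C) (P := C) (f := (V I C).subtype) (g := mu I C) ↥(I ^ n) (LinearMap.exact_subtype_ker_map (mu I C)) hmu
    obtain ⟨w, rfl⟩ := (hex u).1 h1
    exact ⟨w, rfl⟩

lemma post_sum {X Y Z : Type} [AddCommGroup X] [Module R X] [AddCommGroup Y] [Module R Y] [AddCommGroup Z] [Module R Z] {ι : Type} (s : Finset ι)
    (f : ι → Y →ₗ[R] Z) {n : ℕ} (e : E R X Y n) : post (∑ i ∈ s, f i) e = ∑ i ∈ s, post (f i) e := by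
  classical
  induction s using Finset.induction_on with
  | empty => simp [post_zero]
  | insert a s ha ih => rw [Finset.sum_insert ha, Finset.sum_insert ha, post_add, ih]

lemma smul_E_zero {Y : Type} [AddCommGroup Y] [Module R Y] {n : ℕ} (x : R) (hx : x ∈ I) (e : E R (R ⧸ I) Y n) : x • e = 0 := by
  rw [← smul_eq_pre]
  have : x • (LinearMap.id : (R ⧸ I) →ₗ[R] (R ⧸ I)) = 0 := by
    ext
    change x • (Submodule.Quotient.mk 1 : R ⧸ I) = 0
    rw [← Submodule.Quotient.mk_smul, Submodule.Quotient.mk_eq_zero]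
    simpa using hx
  rw [this, pre_zero]

lemma EF_of_star [IsNoetherianRing R] (hcd : ∀ i : ℕ, 1 < i → Subsingleton ((localCohomology I i).obj (ModuleCat.of R R)))
    (hC : (I • ⊤ : Submodule R C) = ⊤) (hV : Module.Finite R (V I C)) : EF (R := R) (R ⧸ I) C := by
  obtain ⟨n, k, x, s, hx, hs⟩ := star I hcd
  have hpow : ∀ n : ℕ, (I ^ n • ⊤ : Submodule R C) = ⊤ := by
    intro n
    induction n with
    | zero => simp
    | succ n ih => rw [pow_succ, mul_smul, hC, ih]
  have hmu : Function.Surjective (mu (I ^ n) C) := by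
    rw [← LinearMap.range_eq_top, range_mu, hpow]
  have hses := SES.mk_ker hmu
  have hfin := finite_V_pow hC hV n
  have heq : mu (I ^ n) C = ∑ i, (x i • LinearMap.id) ∘ₗ ((TensorProduct.lid R C).toLinearMap ∘ₗ (s i).rTensor C) := by
    ext a c
    conv_lhs => change (a : R) • c
    rw [← hs a, Finset.sum_smul]
    simp [LinearMap.sum_apply, mul_smul]
  have hzero : ∀ m (e : E R (R ⧸ I) (↥(I ^ n) ⊗[R] C) m), post (mu (I ^ n) C) e = 0 := by
    intro m e
    rw [heq, post_sum]
    refine Finset.sum_eq_zero fun i _ => ?_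
    rw [post_comp, post_smul_id, smul_E_zero _ (hx i)]
  intro m
  have hE : Module.Finite R (E R (R ⧸ I) (V (I ^ n) C) (m+1)) := finite_E _
  refine Module.Finite.of_injective (hses.δ : E R (R ⧸ I) C m →ₗ[R] _) ?_
  rw [injective_iff_map_eq_zero]
  intro a ha
  obtain ⟨c, rfl⟩ := hses.cov3 a ha
  exact hzero m c
end H
end Cof

namespace Cof
variable {R : Type} [CommRing R]

lemma exists_fg_sup [IsNoetherianRing R] {I : Ideal R} {N : Type} [AddCommGroup N] [Module R N]
    (h : Module.Finite R (N ⧸ (I • ⊤ : Submodule R N))) : ∃ N' : Submodule R N, N'.FG ∧ N' ⊔ I • ⊤ = ⊤ := by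
  classical
  obtain ⟨S, hS⟩ := h
  obtain ⟨g, hg⟩ := (Submodule.mkQ_surjective (I • ⊤ : Submodule R N)).hasRightInverse
  refine ⟨Submodule.span R (g '' S), ⟨S.image g, by rw [Finset.coe_image]⟩, ?_⟩
  have h1 : (Submodule.span R (g '' (S : Set _))).map (I • ⊤ : Submodule R N).mkQ = ⊤ := by
    rw [Submodule.map_span, ← Set.image_comp, ← hS]
    congr 1
    have : (I • ⊤ : Submodule R N).mkQ ∘ g = id := funext hg
    rw [this, Set.image_id]
  have h2 := congrArg (Submodule.comap (I • ⊤ : Submodule R N).mkQ) h1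
  rw [Submodule.comap_map_mkQ, Submodule.comap_top] at h2
  rw [sup_comm]; exact h2

lemma finite_map_of_range [IsNoetherianRing R] {I : Ideal R} {M N : Type} [AddCommGroup M] [Module R M] [AddCommGroup N] [Module R N]
    (f : M →ₗ[R] N) (h : Module.Finite R (M ⧸ (I • ⊤ : Submodule R M))) (N' : Submodule R N) (hN' : N'.FG) (L : Submodule R N)
    (hL : L = LinearMap.range f ⊔ N') : Module.Finite R (L.map (I • L).mkQ) := by
  rw [Module.Finite.iff_fg]
  have e : L.map (I • L).mkQ = (LinearMap.range f).map (I • L).mkQ ⊔ N'.map (I • L).mkQ := by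
    rw [← Submodule.map_sup, ← hL]
  rw [e]
  refine Submodule.FG.sup ?_ (hN'.map _)
  rw [← LinearMap.range_comp, ← Module.Finite.iff_fg]
  have hk : (I • ⊤ : Submodule R M) ≤ LinearMap.ker ((I • L).mkQ ∘ₗ f) := by
    rw [Submodule.smul_le]
    intro r hr m _
    rw [LinearMap.mem_ker, LinearMap.comp_apply, Submodule.mkQ_apply, Submodule.Quotient.mk_eq_zero, map_smul]
    refine Submodule.smul_mem_smul hr ?_
    rw [hL]; exact Submodule.mem_sup_left ⟨m, rfl⟩
  rw [← Submodule.range_liftQ _ _ hk]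
  infer_instance

lemma main [IsNoetherianRing R] (I : Ideal R)
    (hcd : ∀ i : ℕ, 1 < i → Subsingleton ((localCohomology I i).obj (ModuleCat.of R R)))
    {M N : Type} [AddCommGroup M] [Module R M] [AddCommGroup N] [Module R N]
    (f : M →ₗ[R] N) (hM : EF (R := R) (R ⧸ I) M) (hN : EF (R := R) (R ⧸ I) N) : EF (R := R) (R ⧸ I) (N ⧸ LinearMap.range f) := by
  obtain ⟨N', hfg, htop⟩ := exists_fg_sup (finite_quot hN)
  obtain ⟨L, hL⟩ : ∃ L, L = LinearMap.range f ⊔ N' := ⟨_, rfl⟩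
  have h1 := finite_map_of_range f (finite_quot hM) N' hfg L hL
  have h2 := finite_V_quot L (finite_V hN) h1
  have hC : (I • ⊤ : Submodule R (N ⧸ L)) = ⊤ := by
    have h3 := congrArg (Submodule.map L.mkQ) htop
    rw [Submodule.map_sup, Submodule.map_smul'', Submodule.map_top, Submodule.range_mkQ] at h3
    have h4 : N'.map L.mkQ = ⊥ := by
      rw [eq_bot_iff, Submodule.map_le_iff_le_comap, Submodule.comap_bot, Submodule.ker_mkQ, hL]; exact le_sup_right
    rwa [h4, bot_sup_eq] at h3
  have h5 := EF_of_star hcd hC h2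
  have hle : LinearMap.range f ≤ L := by rw [hL]; exact le_sup_left
  have hsurj : Function.Surjective (Submodule.factor hle) := Submodule.factor_surjective hle
  have hfin : Module.Finite R (LinearMap.ker (Submodule.factor hle)) := by
    rw [Module.Finite.iff_fg]
    have : LinearMap.ker (Submodule.factor hle) = N'.map (LinearMap.range f).mkQ := by
      have e1 : LinearMap.ker (Submodule.factor hle) = L.map (LinearMap.range f).mkQ := by
        unfold Submodule.factor
        rw [Submodule.mapQ, Submodule.ker_liftQ]
        simp
      rw [e1, hL, Submodule.map_sup]
      simp
    rw [this]
    exact hfg.map _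
  exact EF.mid (SES.mk_ker hsurj) EF.of_finite h5
end Cof

/-- If `R` is a commutative noetherian ring, `I` an ideal with `cd(I,R) ≤ 1`
(i.e. the local cohomology modules `H^i_I(R)` vanish for `i ≥ 2`), and
`f : M → N` is a homomorphism of `I`-cofinite `R`-modules, then `coker f` is
`I`-cofinite. -/
theorem isCofinite_coker {R : Type} [CommRing R] [IsNoetherianRing R] (I : Ideal R)
    (hcd : ∀ i : ℕ, 1 < i → Subsingleton ((localCohomology I i).obj (ModuleCat.of R R)))
    {M N : Type} [AddCommGroup M] [Module R M] [AddCommGroup N] [Module R N]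
    (f : M →ₗ[R] N) (hM : IsCofinite I M) (hN : IsCofinite I N) :
    IsCofinite I (N ⧸ LinearMap.range f) := by
  refine ⟨?_, fun i => ?_⟩
  · exact (Module.support_subset_of_surjective _ (Submodule.mkQ_surjective (LinearMap.range f))).trans hN.1
  · rw [Cof.finite_iff]
    exact Cof.main I hcd f (fun n => (Cof.finite_iff _ _ n).1 (hM.2 n)) (fun n => (Cof.finite_iff _ _ n).1 (hN.2 n)) i
end

section
/- Let R be a commutative noetherian ring and 𝔞 an ideal with cd(𝔞,R) ≤ 1. If f : M → N is an R-homomorphism between 𝔞-cofinite R-modules, then ker f is 𝔞-cofinite. -/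
open CategoryTheory

namespace CofKer

section General
variable {R : Type} [CommRing R]

/-- Abbreviation for the derived-category `Ext` of modules. -/
abbrev E (A X : ModuleCat.{0} R) (i : ℕ) : Type := Abelian.Ext.{0} A X i

/-- Pullback of extension classes. -/
noncomputable def pb {A B : ModuleCat.{0} R} (f : A ⟶ B) (X : ModuleCat.{0} R) (i : ℕ) :
    E B X i →ₗ[R] E A X i :=
  (Abelian.Ext.mk₀ f).precompOfLinear R X (zero_add i)

lemma pb_apply {A B : ModuleCat.{0} R} (f : A ⟶ B) (X : ModuleCat.{0} R) (i : ℕ) (e : E B X i) :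
    pb f X i e = (Abelian.Ext.mk₀ f).comp e (zero_add i) := rfl

lemma pb_pb {A B C : ModuleCat.{0} R} (f : A ⟶ B) (g : B ⟶ C) (X : ModuleCat.{0} R) (i : ℕ)
    (e : E C X i) : pb f X i (pb g X i e) = pb (f ≫ g) X i e := by
  simp [pb_apply]

lemma pb_id {A : ModuleCat.{0} R} (X : ModuleCat.{0} R) (i : ℕ)
    (e : E A X i) : pb (𝟙 A) X i e = e := by
  simp [pb_apply]

lemma pb_add {A B : ModuleCat.{0} R} (f g : A ⟶ B) (X : ModuleCat.{0} R) (i : ℕ)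
    (e : E B X i) : pb (f + g) X i e = pb f X i e + pb g X i e := by
  simp only [pb_apply, Abelian.Ext.mk₀_add, Abelian.Ext.add_comp]

lemma proj_zero (P X : ModuleCat.{0} R) [Projective P] (i : ℕ) (e : E P X (i + 1)) : e = 0 :=
  Abelian.Ext.eq_zero_of_projective e

/-- A pullback along a map that factors through a projective vanishes in positive degree. -/
lemma pb_factor {A B P : ModuleCat.{0} R} [Projective P] (f : A ⟶ P) (g : P ⟶ B)
    (X : ModuleCat.{0} R) (i : ℕ) (e : E B X (i + 1)) : pb (f ≫ g) X (i + 1) e = 0 := by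
  rw [← pb_pb, proj_zero P X i (pb g X (i + 1) e), map_zero]

lemma prod_zero {M N : Type} [AddCommGroup M] [AddCommGroup N] [Module R M] [Module R N]
    (X : ModuleCat.{0} R) (i : ℕ) (e : E (ModuleCat.of R (M × N)) X i)
    (h1 : pb (ModuleCat.ofHom (LinearMap.inl R M N)) X i e = 0)
    (h2 : pb (ModuleCat.ofHom (LinearMap.inr R M N)) X i e = 0) : e = 0 := by
  rw [← pb_id X i e]
  have : 𝟙 (ModuleCat.of R (M × N)) =
      ModuleCat.ofHom (LinearMap.fst R M N) ≫ ModuleCat.ofHom (LinearMap.inl R M N) +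
      ModuleCat.ofHom (LinearMap.snd R M N) ≫ ModuleCat.ofHom (LinearMap.inr R M N) := by
    ext x <;> simp
  rw [this, pb_add, ← pb_pb, ← pb_pb, h1, h2]
  simp

/-- Inclusion of ideals. -/
abbrev incl {A B : Ideal R} (h : A ≤ B) : ModuleCat.of R A ⟶ ModuleCat.of R B :=
  ModuleCat.ofHom (Submodule.inclusion h)

lemma incl_incl {A B C : Ideal R} (h : A ≤ B) (h' : B ≤ C) : incl h ≫ incl h' = incl (h.trans h') :=
  rfl

/-- Every class on a member of the family restricts to zero on a smaller member. -/
def Van (A : ℕ → Ideal R) (X : ModuleCat.{0} R) (i : ℕ) : Prop :=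
  ∀ n (e : E (ModuleCat.of R (A n)) X i), ∃ m, ∃ h : A m ≤ A n, pb (incl h) X i e = 0

lemma Van.congr {A B : ℕ → Ideal R} {X : ModuleCat.{0} R} {i : ℕ} (hA : Van A X i)
    (h1 : ∀ n, ∃ m, A m ≤ B n) (h2 : ∀ n, ∃ m, B m ≤ A n) : Van B X i := by
  intro n e
  obtain ⟨m, hm⟩ := h1 n
  obtain ⟨l, hl, h0⟩ := hA m (pb (incl hm) X i e)
  obtain ⟨k, hk⟩ := h2 l
  refine ⟨k, hk.trans (hl.trans hm), ?_⟩
  rw [← incl_incl (hk.trans hl) hm, ← incl_incl hk hl, Category.assoc, ← pb_pb, ← pb_pb, h0,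
    map_zero]

/-- For antitone families the index can be taken arbitrarily large. -/
lemma Van.large {A : ℕ → Ideal R} {X : ModuleCat.{0} R} {i : ℕ} (hA : Van A X i)
    (hanti : Antitone A) (n : ℕ) (e : E (ModuleCat.of R (A n)) X i) :
    ∃ m, ∀ l, m ≤ l → ∃ h : A l ≤ A n, pb (incl h) X i e = 0 := by
  obtain ⟨m, h, h0⟩ := hA n e
  refine ⟨m, fun l hl => ⟨(hanti hl).trans h, ?_⟩⟩
  rw [← incl_incl (hanti hl) h, ← pb_pb, h0, map_zero]

/-- The short complex attached to an exact pair of linear maps. -/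
abbrev sc {M N P : Type} [AddCommGroup M] [AddCommGroup N] [AddCommGroup P] [Module R M]
    [Module R N] [Module R P] (f : M →ₗ[R] N) (g : N →ₗ[R] P) (h : Function.Exact f g) :
    ShortComplex (ModuleCat.{0} R) :=
  ShortComplex.mk (ModuleCat.ofHom f) (ModuleCat.ofHom g)
    (by rw [← ModuleCat.ofHom_comp, h.linearMap_comp_eq_zero]; rfl)

/-- Bundled data of a short exact sequence of modules. -/
structure Ses {M N P : Type} [AddCommGroup M] [AddCommGroup N] [AddCommGroup P] [Module R M]
    [Module R N] [Module R P] (f : M →ₗ[R] N) (g : N →ₗ[R] P) : Prop where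
  inj : Function.Injective f
  ex : Function.Exact f g
  surj : Function.Surjective g

section LES
variable {M N P : Type} [AddCommGroup M] [AddCommGroup N] [AddCommGroup P] [Module R M]
    [Module R N] [Module R P] {f : M →ₗ[R] N} {g : N →ₗ[R] P}
  {M' N' P' : Type} [AddCommGroup M'] [AddCommGroup N'] [AddCommGroup P'] [Module R M']
    [Module R N'] [Module R P'] {f' : M' →ₗ[R] N'} {g' : N' →ₗ[R] P'}

lemma Ses.short (h : Ses f g) : (sc f g h.ex).ShortExact :=
  ModuleCat.shortComplex_shortExact _ h.ex h.inj h.surj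

/-- The class of the short exact sequence. -/
noncomputable def Ses.cls (h : Ses f g) : E (ModuleCat.of R P) (ModuleCat.of R M) 1 :=
  h.short.extClass

/-- Connecting map, contravariant. -/
noncomputable def Ses.dl (h : Ses f g) (X : ModuleCat.{0} R) (i : ℕ) :
    E (ModuleCat.of R M) X i →ₗ[R] E (ModuleCat.of R P) X (i + 1) :=
  h.cls.precompOfLinear R X (add_comm 1 i)

lemma Ses.dl_nat (h : Ses f g) (h' : Ses f' g') (a : M →ₗ[R] M') (b : N →ₗ[R] N') (c : P →ₗ[R] P')
    (h1 : f' ∘ₗ a = b ∘ₗ f) (h2 : g' ∘ₗ b = c ∘ₗ g) (X : ModuleCat.{0} R) (i : ℕ)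
    (u : E (ModuleCat.of R M') X i) :
    pb (ModuleCat.ofHom c) X (i + 1) (h'.dl X i u) = h.dl X i (pb (ModuleCat.ofHom a) X i u) := by
  let φ : sc f g h.ex ⟶ sc f' g' h'.ex :=
    { τ₁ := ModuleCat.ofHom a, τ₂ := ModuleCat.ofHom b, τ₃ := ModuleCat.ofHom c
      comm₁₂ := by rw [← ModuleCat.ofHom_comp, ← ModuleCat.ofHom_comp, h1]
      comm₂₃ := by rw [← ModuleCat.ofHom_comp, ← ModuleCat.ofHom_comp, h2] }
  have := ShortComplex.ShortExact.extClass_naturality.{0} h.short h'.short φ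
  change (Abelian.Ext.mk₀ (ModuleCat.ofHom c)).comp (h'.cls.comp u (add_comm 1 i)) (zero_add _) =
    h.cls.comp ((Abelian.Ext.mk₀ (ModuleCat.ofHom a)).comp u (zero_add _)) (add_comm 1 i)
  change h.cls.comp (Abelian.Ext.mk₀ (ModuleCat.ofHom a)) (add_zero 1) =
    (Abelian.Ext.mk₀ (ModuleCat.ofHom c)).comp h'.cls (zero_add 1) at this
  rw [← Abelian.Ext.comp_assoc (a₁₂ := 1) _ _ _ (by lia) (by lia) (by lia),
    ← this, Abelian.Ext.comp_assoc (a₂₃ := i) _ _ _ (by lia) (by lia) (by lia)]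

/-- Exactness at `Ext(P)`. -/
lemma Ses.ex3 (h : Ses f g) (X : ModuleCat.{0} R) (i : ℕ) :
    Function.Exact (h.dl X i) (pb (ModuleCat.ofHom g) X (i + 1)) := by
  intro e
  constructor
  · intro he
    exact Abelian.Ext.contravariant_sequence_exact₃ h.short X e he (add_comm 1 i)
  · rintro ⟨u, rfl⟩
    exact h.short.comp_extClass_assoc u (add_comm 1 i)

/-- Exactness at `Ext(N)`. -/
lemma Ses.ex2 (h : Ses f g) (X : ModuleCat.{0} R) (i : ℕ) :
    Function.Exact (pb (ModuleCat.ofHom g) X i) (pb (ModuleCat.ofHom f) X i) := by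
  intro e
  constructor
  · intro he
    exact Abelian.Ext.contravariant_sequence_exact₂ h.short X e he
  · rintro ⟨u, rfl⟩
    rw [pb_pb, ← ModuleCat.ofHom_comp, h.ex.linearMap_comp_eq_zero, pb_apply]
    exact (congrArg (fun z => Abelian.Ext.comp z u (zero_add i)) (Abelian.Ext.mk₀_zero _ _)).trans
      (Abelian.Ext.zero_comp ..)

/-- Exactness at `Ext(M)`. -/
lemma Ses.ex1 (h : Ses f g) (X : ModuleCat.{0} R) (i : ℕ) :
    Function.Exact (pb (ModuleCat.ofHom f) X i) (h.dl X i) := by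
  intro e
  constructor
  · intro he
    exact Abelian.Ext.contravariant_sequence_exact₁ h.short X e (add_comm 1 i) he
  · rintro ⟨u, rfl⟩
    exact h.short.extClass_comp_assoc u (h := add_comm 1 i)

end LES

/-- The Mayer-Vietoris maps. -/
def mvf (A B : Ideal R) : (A ⊓ B : Ideal R) →ₗ[R] A × B :=
  (Submodule.inclusion inf_le_left).prod (-(Submodule.inclusion inf_le_right))

/-- The Mayer-Vietoris maps. -/
def mvg (A B : Ideal R) : A × B →ₗ[R] (A ⊔ B : Ideal R) :=
  (Submodule.inclusion le_sup_left).coprod (Submodule.inclusion le_sup_right)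

lemma mv_ses (A B : Ideal R) : Ses (mvf A B) (mvg A B) where
  inj := by
    intro x y h
    have := congrArg (fun z => (z.1 : R)) h
    exact Subtype.ext this
  ex := by
    rintro ⟨⟨a, ha⟩, ⟨b, hb⟩⟩
    constructor
    · intro h
      have h' : a + b = 0 := congrArg Subtype.val h
      have hab : b = -a := (neg_eq_of_add_eq_zero_right h').symm
      subst hab
      exact ⟨⟨a, ha, by simpa using hb⟩, rfl⟩
    · rintro ⟨x, hx⟩
      rw [← hx]
      apply Subtype.ext
      change (x : R) + -(x : R) = 0
      simp
  surj := by
    rintro ⟨x, hx⟩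
    obtain ⟨a, ha, b, hb, rfl⟩ := Submodule.mem_sup.1 hx
    exact ⟨(⟨a, ha⟩, ⟨b, hb⟩), rfl⟩

lemma Van.mv {A B : ℕ → Ideal R} (hAa : Antitone A) (hBa : Antitone B) {X : ModuleCat.{0} R}
    {i : ℕ} (hA : Van A X (i + 1)) (hB : Van B X (i + 1)) (hAB : Van (fun n => A n ⊓ B n) X i) :
    Van (fun n => A n ⊔ B n) X (i + 1) := by
  intro n e
  obtain ⟨m1, h1⟩ := hA.large hAa n (pb (incl le_sup_left) X _ e)
  obtain ⟨m2, h2⟩ := hB.large hBa n (pb (incl le_sup_right) X _ e)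
  obtain ⟨hA1, hA0⟩ := h1 (max m1 m2) (le_max_left _ _)
  obtain ⟨hB1, hB0⟩ := h2 (max m1 m2) (le_max_right _ _)
  generalize max m1 m2 = m at *
  have hz : pb (ModuleCat.ofHom (mvg (A m) (B m))) X (i + 1)
      (pb (incl (sup_le_sup hA1 hB1)) X _ e) = 0 := by
    apply prod_zero
    · rw [pb_pb, pb_pb]
      rw [pb_pb] at hA0
      refine Eq.trans (congrArg (fun z => pb z X (i + 1) e) ?_) hA0
      ext x
      simp [mvg]
    · rw [pb_pb, pb_pb]
      rw [pb_pb] at hB0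
      refine Eq.trans (congrArg (fun z => pb z X (i + 1) e) ?_) hB0
      ext x
      simp [mvg]
  obtain ⟨u, hu⟩ := ((mv_ses (A m) (B m)).ex3 X i _).1 hz
  obtain ⟨l, hl⟩ := hAB.large (fun a b hab => inf_le_inf (hAa hab) (hBa hab)) m u
  obtain ⟨hl1, hl0⟩ := hl (max l m) (le_max_left _ _)
  have hlm := le_max_right l m
  generalize max l m = k at *
  refine ⟨k, sup_le_sup ((hAa hlm).trans hA1) ((hBa hlm).trans hB1), ?_⟩
  rw [← incl_incl (sup_le_sup (hAa hlm) (hBa hlm)) (sup_le_sup hA1 hB1), ← pb_pb, ← hu]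
  have := (mv_ses (A k) (B k)).dl_nat (mv_ses (A m) (B m)) (Submodule.inclusion hl1)
    ((Submodule.inclusion (hAa hlm)).prodMap (Submodule.inclusion (hBa hlm)))
    (Submodule.inclusion (sup_le_sup (hAa hlm) (hBa hlm))) rfl rfl X i u
  refine this.trans ?_
  have h0 : pb (ModuleCat.ofHom (Submodule.inclusion hl1)) X i u = 0 := hl0
  rw [h0, map_zero]

end General
end CofKer
namespace CofKer

set_option linter.unusedSectionVars false
section Bound
variable {R : Type} [CommRing R] [IsNoetherianRing R]

lemma exists_stab (x : R) (n : ℕ) : ∃ c, n ≤ c ∧ ∀ r, x ^ n * (x ^ c * r) = 0 → x ^ c * r = 0 := by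
  have := Module.End.eventually_disjoint_ker_pow_range_pow (LinearMap.mulLeft R x)
  obtain ⟨c, hc⟩ := (this.and (Filter.eventually_ge_atTop n)).exists
  refine ⟨c, hc.2, fun r hr => ?_⟩
  have h1 := Submodule.disjoint_def.1 hc.1 (x ^ c * r)
  rw [LinearMap.pow_mulLeft] at h1
  apply h1
  · simp only [LinearMap.mem_ker, LinearMap.mulLeft_apply]
    obtain ⟨d, rfl⟩ := Nat.exists_eq_add_of_le hc.2
    have h2 : x ^ (n + d) * (x ^ (n + d) * r) = x ^ d * (x ^ n * (x ^ (n + d) * r)) := by ring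
    rw [h2, hr, mul_zero]
  · exact ⟨r, by simp⟩

lemma van_principal (x : R) (X : ModuleCat.{0} R) (i : ℕ) :
    Van (fun n => (Ideal.span {x}) ^ n) X (i + 1) := by
  intro n e
  obtain ⟨c, hnc, hc⟩ := exists_stab x n
  have hle : (Ideal.span {x}) ^ (n + c) ≤ (Ideal.span {x}) ^ n := Ideal.pow_le_pow_right (by lia)
  let mulc : (Ideal.span {x} ^ c : Ideal R) →ₗ[R] (Ideal.span {x} ^ (n + c) : Ideal R) :=
    ((LinearMap.mulLeft R (x ^ n)).domRestrict _).codRestrict _ (by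
      rintro ⟨y, hy⟩
      rw [pow_add]
      exact Ideal.mul_mem_mul (Ideal.pow_mem_pow (Ideal.mem_span_singleton_self x) n) hy)
  have hm : ∀ y, (mulc y : R) = x ^ n * y := fun y => rfl
  have hbij : Function.Bijective mulc := by
    constructor
    · rw [injective_iff_map_eq_zero]
      rintro ⟨y, hy⟩ h
      have h' : x ^ n * y = 0 := congrArg Subtype.val h
      rw [Ideal.span_singleton_pow, Ideal.mem_span_singleton] at hy
      obtain ⟨r, rfl⟩ := hy
      exact Subtype.ext (hc r h')
    · rintro ⟨y, hy⟩
      have hy' := hy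
      rw [Ideal.span_singleton_pow, Ideal.mem_span_singleton] at hy
      obtain ⟨r, rfl⟩ := hy
      refine ⟨⟨x ^ c * r, ?_⟩, Subtype.ext ?_⟩
      · exact Ideal.mul_mem_right _ _ (Ideal.pow_mem_pow (Ideal.mem_span_singleton_self x) c)
      · rw [hm]; ring
  let eq := LinearEquiv.ofBijective mulc hbij
  let f1 : (Ideal.span {x} ^ (n + c) : Ideal R) →ₗ[R] R :=
    (Submodule.subtype _) ∘ₗ eq.symm.toLinearMap
  let f2 : R →ₗ[R] (Ideal.span {x} ^ n : Ideal R) :=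
    LinearMap.toSpanSingleton R _ ⟨x ^ n, Ideal.pow_mem_pow (Ideal.mem_span_singleton_self x) n⟩
  have hf : incl hle = ModuleCat.ofHom f1 ≫ ModuleCat.ofHom f2 := by
    ext y
    have h1 : mulc (eq.symm y) = y := eq.apply_symm_apply y
    have h2 := congrArg Subtype.val h1
    rw [hm] at h2
    change (y : R) = (eq.symm y : R) * x ^ n
    rw [mul_comm, h2]
  refine ⟨n + c, hle, ?_⟩
  rw [hf]
  exact pb_factor _ _ _ _ _

lemma van_bot (X : ModuleCat.{0} R) (i : ℕ) :
    Van (fun n => (⊥ : Ideal R) ^ n) X i := by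
  intro n e
  refine ⟨n + 1, Ideal.pow_le_pow_right (by lia), ?_⟩
  have : incl (Ideal.pow_le_pow_right (by lia) : (⊥ : Ideal R) ^ (n + 1) ≤ ⊥ ^ n) = 0 := by
    ext ⟨y, hy⟩
    have : y = 0 := by simpa [pow_succ] using hy
    exact this
  rw [this, pb_apply, Abelian.Ext.mk₀_zero, Abelian.Ext.zero_comp]

lemma artin_rees (b : Ideal R) (J : Ideal R) (n : ℕ) : ∃ c, b ^ c ⊓ J ≤ b ^ n * J := by
  obtain ⟨k, hk⟩ := Ideal.exists_pow_inf_eq_pow_smul b J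
  refine ⟨n + k, ?_⟩
  have := hk (n + k) (by lia)
  simp only [smul_eq_mul, Ideal.mul_top, Nat.add_sub_cancel] at this
  rw [this]
  exact Ideal.mul_mono le_rfl inf_le_right

lemma van_bound (k : ℕ) : ∀ (s : Finset R), s.card ≤ k → ∀ (X : ModuleCat.{0} R) (i : ℕ),
    k ≤ i → 1 ≤ i → Van (fun n => (Ideal.span (s : Set R)) ^ n) X i := by
  classical
  induction k with
  | zero =>
    intro s hs X i _ _
    obtain rfl : s = ∅ := by simpa using hs
    simpa using van_bot X i
  | succ k ih =>
    intro s hs X i hi hi1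
    rcases s.eq_empty_or_nonempty with rfl | ⟨x, hx⟩
    · simpa using van_bot X i
    obtain ⟨i, rfl⟩ := Nat.exists_eq_add_of_le' hi1
    set t := s.erase x with ht
    have htc : t.card ≤ k := by rw [ht, Finset.card_erase_of_mem hx]; lia
    have hst : Ideal.span (s : Set R) = Ideal.span (t : Set R) ⊔ Ideal.span {x} := by
      rw [← Finset.insert_erase hx, Finset.coe_insert, Ideal.span_insert, sup_comm]
    set b := Ideal.span (t : Set R) with hb
    have h1 : Van (fun n => b ^ n) X (i + 1) := ih t htc X (i + 1) (by lia) (by lia)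
    have h2 := van_principal x X i
    have anti : ∀ J : Ideal R, Antitone (fun n => J ^ n) := fun J a c h => Ideal.pow_le_pow_right h
    have h3 : Van (fun n => b ^ n ⊓ (Ideal.span {x}) ^ n) X i := by
      rcases Nat.eq_zero_or_pos i with rfl | hipos
      · -- then `k = 0` and `t` is empty
        obtain rfl : k = 0 := by lia
        have : t = ∅ := by simpa using htc
        have hb0 : b = ⊥ := by simp [hb, this]
        refine (van_bot X 0).congr (fun n => ⟨1, by simp⟩) (fun n => ⟨n, ?_⟩)
        rw [hb0]; exact inf_le_left
      · have h4 := ih (t.image (x * ·)) (Finset.card_image_le.trans htc) X i (by lia) hipos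
        have h5 : Ideal.span ((t.image (x * ·) : Finset R) : Set R) = b * Ideal.span {x} := by
          rw [mul_comm, hb, Ideal.span_mul_span', Finset.coe_image, Set.singleton_mul]
        rw [h5] at h4
        refine h4.congr (fun n => ⟨n, ?_⟩) (fun n => ?_)
        · rw [mul_pow]; exact Ideal.mul_le_inf
        · obtain ⟨c, hc⟩ := artin_rees b (Ideal.span {x} ^ n) n
          refine ⟨max c n, ?_⟩
          rw [mul_pow]
          refine le_trans (inf_le_inf (anti b (le_max_left _ _)) (anti _ (le_max_right _ _))) hc
    refine (h1.mv (anti _) (anti _) h2 h3).congr (fun n => ⟨n, ?_⟩) (fun n => ⟨n + n, ?_⟩)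
    · rw [hst]
      exact sup_le (Ideal.pow_right_mono le_sup_left n) (Ideal.pow_right_mono le_sup_right n)
    · simp only [hst]
      exact Ideal.sup_pow_add_le_pow_sup_pow

lemma van_large_deg (I : Ideal R) : ∃ k : ℕ, ∀ (X : ModuleCat.{0} R) (i : ℕ), k ≤ i →
    Van (fun n => I ^ n) X i := by
  obtain ⟨s, hs⟩ := (inferInstance : IsNoetherianRing R).noetherian I
  refine ⟨s.card + 1, fun X i hi => ?_⟩
  have := van_bound s.card s le_rfl X i (by lia) (by lia)
  rwa [show Ideal.span (s : Set R) = I from hs] at this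

end Bound
end CofKer
namespace CofKer

set_option linter.unusedSectionVars false
section Cov
variable {R : Type} [CommRing R]

/-- Pushforward of extension classes. -/
noncomputable def pf {X Y : ModuleCat.{0} R} (f : X ⟶ Y) (A : ModuleCat.{0} R) (i : ℕ) :
    E A X i →ₗ[R] E A Y i :=
  (Abelian.Ext.mk₀ f).postcompOfLinear R A (add_zero i)

lemma pf_apply {X Y : ModuleCat.{0} R} (f : X ⟶ Y) (A : ModuleCat.{0} R) (i : ℕ) (e : E A X i) :
    pf f A i e = e.comp (Abelian.Ext.mk₀ f) (add_zero i) := rfl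

lemma pf_pb {A B X Y : ModuleCat.{0} R} (f : X ⟶ Y) (g : A ⟶ B) (i : ℕ) (e : E B X i) :
    pf f A i (pb g X i e) = pb g Y i (pf f B i e) := by
  rw [pf_apply, pb_apply, pf_apply, pb_apply,
    Abelian.Ext.comp_assoc _ _ _ (zero_add _) (add_zero i) (by lia)]

lemma pf_mono {X Y : ModuleCat.{0} R} (f : X ⟶ Y) [Mono f] (A : ModuleCat.{0} R) :
    Function.Injective (pf f A 0) := by
  intro a b h
  obtain ⟨a, rfl⟩ := (Abelian.Ext.mk₀_bijective _ _).2 a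
  obtain ⟨b, rfl⟩ := (Abelian.Ext.mk₀_bijective _ _).2 b
  rw [pf_apply, pf_apply, Abelian.Ext.mk₀_comp_mk₀, Abelian.Ext.mk₀_comp_mk₀] at h
  have := (Abelian.Ext.mk₀_bijective _ _).1 h
  rw [cancel_mono] at this
  rw [this]

lemma pb_epi {A B : ModuleCat.{0} R} (f : A ⟶ B) [Epi f] (X : ModuleCat.{0} R) :
    Function.Injective (pb f X 0) := by
  intro a b h
  obtain ⟨a, rfl⟩ := (Abelian.Ext.mk₀_bijective _ _).2 a
  obtain ⟨b, rfl⟩ := (Abelian.Ext.mk₀_bijective _ _).2 b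
  rw [pb_apply, pb_apply, Abelian.Ext.mk₀_comp_mk₀, Abelian.Ext.mk₀_comp_mk₀] at h
  have := (Abelian.Ext.mk₀_bijective _ _).1 h
  rw [cancel_epi] at this
  rw [this]

section LES
variable {M N P : Type} [AddCommGroup M] [AddCommGroup N] [AddCommGroup P] [Module R M]
    [Module R N] [Module R P] {f : M →ₗ[R] N} {g : N →ₗ[R] P}

/-- Connecting map, covariant. -/
noncomputable def Ses.cl (h : Ses f g) (A : ModuleCat.{0} R) (i : ℕ) :
    E A (ModuleCat.of R P) i →ₗ[R] E A (ModuleCat.of R M) (i + 1) :=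
  h.cls.postcompOfLinear R A rfl

lemma Ses.cl_pb (h : Ses f g) {A B : ModuleCat.{0} R} (a : A ⟶ B) (i : ℕ)
    (e : E B (ModuleCat.of R P) i) :
    h.cl A i (pb a _ i e) = pb a _ (i + 1) (h.cl B i e) := by
  change (((Abelian.Ext.mk₀ a).comp e (zero_add i)).comp h.cls rfl) =
    (Abelian.Ext.mk₀ a).comp (e.comp h.cls rfl) (zero_add (i + 1))
  rw [Abelian.Ext.comp_assoc _ _ _ (zero_add _) rfl (by lia)]

lemma Ses.cex1 (h : Ses f g) (A : ModuleCat.{0} R) (i : ℕ) :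
    Function.Exact (h.cl A i) (pf (ModuleCat.ofHom f) A (i + 1)) := by
  intro e
  constructor
  · intro he
    exact Abelian.Ext.covariant_sequence_exact₁ A h.short e he rfl
  · rintro ⟨u, rfl⟩
    change (u.comp h.cls rfl).comp (Abelian.Ext.mk₀ (ModuleCat.ofHom f)) (add_zero (i + 1)) = 0
    have h0 : h.cls.comp (Abelian.Ext.mk₀ (ModuleCat.ofHom f)) (add_zero 1) = 0 :=
      h.short.extClass_comp
    rw [Abelian.Ext.comp_assoc _ _ _ rfl (add_zero 1) (by lia), h0, Abelian.Ext.comp_zero]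

lemma Ses.cex2 (h : Ses f g) (A : ModuleCat.{0} R) (i : ℕ)
    (e : E A (ModuleCat.of R N) i) (he : pf (ModuleCat.ofHom g) A i e = 0) :
    ∃ u, pf (ModuleCat.ofHom f) A i u = e :=
  Abelian.Ext.covariant_sequence_exact₂ A h.short e he

lemma Ses.cex3 (h : Ses f g) (A : ModuleCat.{0} R) (i : ℕ)
    (e : E A (ModuleCat.of R P) i) (he : h.cl A i e = 0) :
    ∃ u, pf (ModuleCat.ofHom g) A i u = e :=
  Abelian.Ext.covariant_sequence_exact₃ A h.short e rfl he

lemma Ses.van_mid (h : Ses f g) {A : ℕ → Ideal R} {i : ℕ} (h1 : Van A (ModuleCat.of R M) i)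
    (h3 : Van A (ModuleCat.of R P) i) : Van A (ModuleCat.of R N) i := by
  intro n e
  obtain ⟨m, hm, h0⟩ := h3 n (pf (ModuleCat.ofHom g) _ i e)
  rw [← pf_pb] at h0
  obtain ⟨u, hu⟩ := h.cex2 _ _ _ h0
  obtain ⟨l, hl, hl0⟩ := h1 m u
  refine ⟨l, hl.trans hm, ?_⟩
  rw [← incl_incl hl hm, ← pb_pb, ← hu, ← pf_pb, hl0, map_zero]

lemma Ses.van_right (h : Ses f g) {A : ℕ → Ideal R} {i : ℕ}
    (h2 : Van A (ModuleCat.of R N) i)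
    (h1 : Van A (ModuleCat.of R M) (i + 1)) : Van A (ModuleCat.of R P) i := by
  intro n e
  obtain ⟨m, hm, h0⟩ := h1 n (h.cl _ i e)
  rw [← h.cl_pb] at h0
  obtain ⟨u, hu⟩ := h.cex3 _ _ _ h0
  obtain ⟨l, hl, hl0⟩ := h2 m u
  refine ⟨l, hl.trans hm, ?_⟩
  rw [← incl_incl hl hm, ← pb_pb, ← hu, ← pf_pb, hl0, map_zero]

end LES

lemma ses_fin (A : Type) [AddCommGroup A] [Module R A] (k : ℕ) :
    Ses (LinearMap.single R (fun _ : Fin (k + 1) => A) 0)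
      (LinearMap.funLeft R A (Fin.succ : Fin k → Fin (k + 1))) where
  inj := Pi.single_injective (M := fun _ : Fin (k + 1) => A) 0
  ex := by
    intro v
    constructor
    · intro h
      refine ⟨v 0, ?_⟩
      ext j
      refine Fin.cases ?_ (fun j => ?_) j
      · simp
      · have := congrFun h j
        simpa [LinearMap.funLeft_apply] using this.symm
    · rintro ⟨a, rfl⟩
      ext j
      simp [LinearMap.funLeft_apply]
  surj := LinearMap.funLeft_surjective_of_injective R A _ (Fin.succ_injective k)

lemma zero_left {A : ModuleCat.{0} R} (h : 𝟙 A = 0) (X : ModuleCat.{0} R) (i : ℕ) (e : E A X i) :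
    e = 0 := by
  rw [← pb_id X i e, h, pb_apply, Abelian.Ext.mk₀_zero, Abelian.Ext.zero_comp]

lemma zero_right {X : ModuleCat.{0} R} (h : 𝟙 X = 0) (A : ModuleCat.{0} R) (i : ℕ) (e : E A X i) :
    e = 0 := by
  rw [← Abelian.Ext.comp_mk₀_id e, h, Abelian.Ext.mk₀_zero, Abelian.Ext.comp_zero]

lemma id_zero (A : Type) [AddCommGroup A] [Module R A] [Subsingleton A] :
    𝟙 (ModuleCat.of R A) = 0 := by
  ext x
  exact Subsingleton.elim (α := A) _ _

lemma van_free {A : ℕ → Ideal R} {i : ℕ} (h : Van A (ModuleCat.of R R) i) (k : ℕ) :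
    Van A (ModuleCat.of R (Fin k → R)) i := by
  induction k with
  | zero => exact fun n e => ⟨n, le_rfl, zero_right (id_zero _) _ _ _⟩
  | succ k ih => exact (ses_fin R k).van_mid h ih

lemma ses_ker {N P : Type} [AddCommGroup N] [AddCommGroup P]
    [Module R N] [Module R P] (g : N →ₗ[R] P) (hg : Function.Surjective g) :
    Ses (LinearMap.ker g).subtype g where
  inj := Subtype.val_injective
  ex := LinearMap.exact_subtype_ker_map g
  surj := hg

lemma ses_quot {N : Type} [AddCommGroup N] [Module R N] (K : Submodule R N) :
    Ses K.subtype K.mkQ where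
  inj := Subtype.val_injective
  ex := LinearMap.exact_subtype_mkQ K
  surj := K.mkQ_surjective

end Cov

section Desc
variable {R : Type} [CommRing R] [IsNoetherianRing R]

lemma van_fg (I : Ideal R) (hR : ∀ i, Van (fun n => I ^ n) (ModuleCat.of R R) (i + 1))
    (X : Type) [AddCommGroup X] [Module R X] [Module.Finite R X] (i : ℕ) :
    Van (fun n => I ^ n) (ModuleCat.of R X) (i + 1) := by
  obtain ⟨k, hk⟩ := van_large_deg I
  have : ∀ d : ℕ, ∀ i, k ≤ i + d → ∀ (X : Type) [AddCommGroup X] [Module R X] [Module.Finite R X],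
      Van (fun n => I ^ n) (ModuleCat.of R X) (i + 1) := by
    intro d
    induction d with
    | zero => exact fun i hi X _ _ _ => hk _ _ (by lia)
    | succ d ih =>
      intro i hi X _ _ _
      obtain ⟨n, g, hg⟩ := Module.Finite.exists_fin' R X
      exact (ses_ker g hg).van_right (van_free (hR i) n) (ih (i + 1) (by lia) _)
  exact this k i (by lia) X

lemma key_factor (I : Ideal R) (hR : ∀ i, Van (fun n => I ^ n) (ModuleCat.of R R) (i + 1)) :
    ∃ m, ∃ h : I ^ m ≤ I, ∀ (X : ModuleCat.{0} R) (i : ℕ) (e : E (ModuleCat.of R I) X (i + 1)),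
      pb (incl h) X (i + 1) e = 0 := by
  obtain ⟨k, g, hg⟩ := Module.Finite.exists_fin' R (I ^ 1 : Ideal R)
  have hs := ses_ker g hg
  obtain ⟨m, hm, h0⟩ := van_fg I hR (LinearMap.ker g) 0 1 hs.cls
  obtain ⟨u, hu⟩ := hs.cex3 (ModuleCat.of R (I ^ m : Ideal R)) 0 (Abelian.Ext.mk₀ (incl hm)) h0
  obtain ⟨u, rfl⟩ := (Abelian.Ext.mk₀_bijective _ _).2 u
  rw [pf_apply, Abelian.Ext.mk₀_comp_mk₀] at hu
  have hu' := (Abelian.Ext.mk₀_bijective _ _).1 hu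
  have h1 : I ^ 1 ≤ I := (pow_one I).le
  refine ⟨m, hm.trans h1, fun X i e => ?_⟩
  have : Projective (ModuleCat.of R (Fin k → R)) := inferInstance
  have h2 := pb_factor u (ModuleCat.ofHom g) X i (pb (incl h1) X (i + 1) e)
  rw [hu', pb_pb] at h2
  exact h2

/-- Finite generation of an `Ext` module. -/
abbrev FE (A X : ModuleCat.{0} R) (i : ℕ) : Prop := Module.Finite R (E A X i)

lemma finite_of_exact {A B C : Type} [AddCommGroup A] [AddCommGroup B] [AddCommGroup C]
    [Module R A] [Module R B] [Module R C] {f : A →ₗ[R] B} {g : B →ₗ[R] C}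
    (h : Function.Exact f g) (hA : Module.Finite R A) (hC : Module.Finite R C) :
    Module.Finite R B := by
  have := isNoetherian_of_range_eq_ker f g h.linearMap_ker_eq.symm
  infer_instance

lemma fe_fin {A : Type} [AddCommGroup A] [Module R A] {X : ModuleCat.{0} R} {i : ℕ}
    (h : FE (ModuleCat.of R A) X i) (k : ℕ) : FE (ModuleCat.of R (Fin k → A)) X i := by
  induction k with
  | zero =>
    have : Subsingleton (E (ModuleCat.of R (Fin 0 → A)) X i) :=
      ⟨fun a b => (zero_left (id_zero _) _ _ a).trans (zero_left (id_zero _) _ _ b).symm⟩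
    change Module.Finite R _
    infer_instance
  | succ k ih => exact finite_of_exact ((ses_fin A k).ex2 X i) ih h

lemma exists_surj_quot (I : Ideal R) (N : Type) [AddCommGroup N] [Module R N] [Module.Finite R N]
    (hN : ∀ r ∈ I, ∀ x : N, r • x = 0) :
    ∃ (k : ℕ) (g : (Fin k → R ⧸ I) →ₗ[R] N), Function.Surjective g := by
  obtain ⟨k, g, hg⟩ := Module.Finite.exists_fin' R N
  let v : Fin k → N := fun j => g (Pi.single j 1)
  refine ⟨k, ∑ j, (Submodule.liftQ I (LinearMap.toSpanSingleton R N (v j))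
    (fun r hr => by simpa using hN r hr (v j))) ∘ₗ LinearMap.proj j, fun x => ?_⟩
  obtain ⟨c, rfl⟩ := hg x
  refine ⟨fun j => Submodule.Quotient.mk (c j), ?_⟩
  simp only [LinearMap.sum_apply, LinearMap.comp_apply, LinearMap.proj_apply,
    Submodule.liftQ_apply, LinearMap.toSpanSingleton_apply]
  conv_rhs => rw [← Finset.univ_sum_single c, map_sum]
  refine Finset.sum_congr rfl fun j _ => ?_
  rw [← map_smul, ← Pi.single_smul, smul_eq_mul, mul_one]

lemma devissage1 (I : Ideal R) (X : ModuleCat.{0} R) (j : ℕ) :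
    (∀ i ≤ j, FE (ModuleCat.of R (R ⧸ I)) X i) → ∀ (N : Type) [AddCommGroup N] [Module R N]
      [Module.Finite R N], (∀ r ∈ I, ∀ x : N, r • x = 0) → FE (ModuleCat.of R N) X j := by
  induction j with
  | zero =>
    intro h N _ _ _ hN
    obtain ⟨k, g, hg⟩ := exists_surj_quot I N hN
    have : Epi (ModuleCat.ofHom g) := (ModuleCat.epi_iff_surjective _).2 hg
    have := fe_fin (h 0 le_rfl) k
    exact Module.Finite.of_injective _ (pb_epi (ModuleCat.ofHom g) X)
  | succ j ih =>
    intro h N _ _ _ hN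
    obtain ⟨k, g, hg⟩ := exists_surj_quot I N hN
    refine finite_of_exact ((ses_ker g hg).ex3 X j) ?_ (fe_fin (h _ le_rfl) k)
    refine ih (fun i hi => h i (by lia)) _ (fun r hr x => Subtype.ext (funext fun l => ?_))
    obtain ⟨y, hy⟩ := Submodule.Quotient.mk_surjective _ (x.1 l)
    change r • x.1 l = 0
    rw [← hy, ← Submodule.Quotient.mk_smul, Submodule.Quotient.mk_eq_zero]
    exact Ideal.mul_mem_right _ _ hr

lemma devissage2 (I : Ideal R) (X : ModuleCat.{0} R) (j : ℕ)
    (h : ∀ i ≤ j, FE (ModuleCat.of R (R ⧸ I)) X i) (n : ℕ) : ∀ (N : Type) [AddCommGroup N]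
      [Module R N] [Module.Finite R N], (∀ r ∈ I ^ n, ∀ x : N, r • x = 0) →
      FE (ModuleCat.of R N) X j := by
  induction n with
  | zero =>
    intro N _ _ _ hN
    apply devissage1 I X j h
    intro r _ x
    exact hN r (by simp) x
  | succ n ih =>
    intro N _ _ _ hN
    let K : Submodule R N := I ^ n • ⊤
    refine finite_of_exact ((ses_quot K).ex2 X j) ?_ ?_
    · refine ih _ fun r hr x => ?_
      obtain ⟨y, rfl⟩ := Submodule.Quotient.mk_surjective _ x
      rw [← Submodule.Quotient.mk_smul, Submodule.Quotient.mk_eq_zero]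
      exact Submodule.smul_mem_smul hr trivial
    · refine devissage1 I X j h _ fun r hr x => Subtype.ext ?_
      obtain ⟨x, hx⟩ := x
      change r • x = 0
      refine Submodule.smul_induction_on hx (fun s hs y _ => ?_) (fun a b ha hb => ?_)
      · rw [← mul_smul]
        exact hN _ (by rw [pow_succ']; exact Ideal.mul_mem_mul hr hs) y
      · rw [smul_add, ha, hb, add_zero]

lemma all_finite (I : Ideal R) (hR : ∀ i, Van (fun n => I ^ n) (ModuleCat.of R R) (i + 1))
    (X : ModuleCat.{0} R) (h0 : FE (ModuleCat.of R (R ⧸ I)) X 0)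
    (h1 : FE (ModuleCat.of R (R ⧸ I)) X 1) (i : ℕ) : FE (ModuleCat.of R (R ⧸ I)) X i := by
  obtain ⟨m, hm, hz⟩ := key_factor I hR
  induction i using Nat.strong_induction_on with
  | _ i ih =>
    match i, ih with
    | 0, _ => exact h0
    | 1, _ => exact h1
    | i + 2, ih =>
      have hI : FE (ModuleCat.of R I) X (i + 1) := by
        let K : Submodule R I := LinearMap.range (Submodule.inclusion hm)
        have hs : Ses (Submodule.inclusion hm) K.mkQ :=
          ⟨Submodule.inclusion_injective hm, LinearMap.exact_map_mkQ_range _, K.mkQ_surjective⟩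
        have hq : FE (ModuleCat.of R (I ⧸ K)) X (i + 1) := by
          refine devissage2 I X (i + 1) (fun j hj => ih j (by lia)) m _ fun r hr x => ?_
          obtain ⟨y, rfl⟩ := Submodule.Quotient.mk_surjective _ x
          rw [← Submodule.Quotient.mk_smul, Submodule.Quotient.mk_eq_zero]
          exact ⟨⟨r * y, Ideal.mul_mem_right _ _ hr⟩, Subtype.ext rfl⟩
        refine Module.Finite.of_surjective (pb (ModuleCat.ofHom K.mkQ) X (i + 1)) fun e => ?_
        exact (hs.ex2 X (i + 1) e).1 (hz X i e)
      refine Module.Finite.of_surjective ((ses_quot I).dl X (i + 1)) fun e => ?_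
      have : Projective (ModuleCat.of R R) := inferInstance
      exact ((ses_quot I).ex3 X (i + 1) e).1 (proj_zero _ _ _ _)

lemma ker_finite (I : Ideal R) (hR : ∀ i, Van (fun n => I ^ n) (ModuleCat.of R R) (i + 1))
    {M N : Type} [AddCommGroup M] [Module R M] [AddCommGroup N] [Module R N]
    (f : M →ₗ[R] N) (hM : ∀ i, FE (ModuleCat.of R (R ⧸ I)) (ModuleCat.of R M) i)
    (hN : ∀ i, FE (ModuleCat.of R (R ⧸ I)) (ModuleCat.of R N) i) (i : ℕ) :
    FE (ModuleCat.of R (R ⧸ I)) (ModuleCat.of R (LinearMap.ker f)) i := by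
  have hs : Ses (LinearMap.ker f).subtype f.rangeRestrict :=
    ⟨Subtype.val_injective, by
      rw [LinearMap.exact_iff, LinearMap.ker_rangeRestrict, Submodule.range_subtype],
      f.surjective_rangeRestrict⟩
  have m1 : Mono (ModuleCat.ofHom (LinearMap.ker f).subtype) :=
    (ModuleCat.mono_iff_injective _).2 Subtype.val_injective
  have m2 : Mono (ModuleCat.ofHom (LinearMap.range f).subtype) :=
    (ModuleCat.mono_iff_injective _).2 Subtype.val_injective
  have := hM
  have := hN
  refine all_finite I hR _ ?_ ?_ i
  · exact Module.Finite.of_injective _ (pf_mono (ModuleCat.ofHom (LinearMap.ker f).subtype) _)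
  · refine finite_of_exact (hs.cex1 _ 0) ?_ (hM 1)
    exact Module.Finite.of_injective _ (pf_mono (ModuleCat.ofHom (LinearMap.range f).subtype) _)

end Desc
end CofKer
namespace CofKer

section Bridge
variable {R : Type} [CommRing R]

section cyc
variable (K : CochainComplex (ModuleCat.{0} R) ℕ)

lemma homologyπ_surj (n : ℕ) : Function.Surjective (K.homologyπ n).hom :=
  (ModuleCat.epi_iff_surjective _).1 inferInstance

lemma iCycles_inj (n : ℕ) : Function.Injective (K.iCycles n).hom :=
  (ModuleCat.mono_iff_injective _).1 inferInstance

lemma homologyπ_eq_zero_succ (n : ℕ) (z : K.cycles (n + 1)) :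
    (K.homologyπ (n + 1)).hom z = 0 ↔
      ∃ y, (K.d n (n + 1)).hom y = (K.iCycles (n + 1)).hom z := by
  have h0 : K.toCycles n (n + 1) ≫ K.homologyπ (n + 1) = 0 := K.toCycles_comp_homologyπ _ _
  have hex := ShortComplex.exact_of_g_is_cokernel (ShortComplex.mk _ _ h0)
    (K.homologyIsCokernel n (n + 1) (by simp))
  have hd : ∀ y, (K.iCycles (n + 1)).hom ((K.toCycles n (n + 1)).hom y) = (K.d n (n + 1)).hom y := by
    intro y
    rw [← K.toCycles_i n (n + 1)]
    rfl
  rw [ShortComplex.moduleCat_exact_iff] at hex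
  constructor
  · intro h
    obtain ⟨y, hy⟩ := hex z h
    refine ⟨y, ?_⟩
    rw [← hd]
    exact congrArg _ hy
  · rintro ⟨y, hy⟩
    have : z = (K.toCycles n (n + 1)).hom y := iCycles_inj K _ ((hd y).trans hy).symm
    rw [this]
    have := congrArg (fun q => q.hom y) h0
    exact this

lemma homologyπ_eq_zero_zero (z : K.cycles 0) :
    (K.homologyπ 0).hom z = 0 ↔ (K.iCycles 0).hom z = 0 := by
  have h1 : Function.Injective (K.homologyπ 0).hom :=
    (ModuleCat.mono_iff_injective _).1 inferInstance
  rw [map_eq_zero_iff _ h1, map_eq_zero_iff _ (iCycles_inj K 0)]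

lemma exists_cycle (n : ℕ) (x : K.X n) (hx : (K.d n (n + 1)).hom x = 0) :
    ∃ z, (K.iCycles n).hom z = x := by
  have hex := ShortComplex.exact_of_f_is_kernel (ShortComplex.mk _ _ (K.iCycles_d n (n + 1)))
    (K.cyclesIsKernel n (n + 1) (by simp))
  rw [ShortComplex.moduleCat_exact_iff] at hex
  exact hex x hx

lemma cycle_d (n : ℕ) (z : K.cycles n) : (K.d n (n + 1)).hom ((K.iCycles n).hom z) = 0 := by
  have := congrArg (fun q => q.hom z) (K.iCycles_d n (n + 1))
  exact this

end cyc

variable {X : ModuleCat.{0} R} (P : ProjectiveResolution X) (Y : ModuleCat.{0} R)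

/-- The complex of homomorphisms. -/
noncomputable abbrev HC : CochainComplex (ModuleCat.{0} R) ℕ := P.complex.linearYonedaObj R Y

/-- The homomorphism underlying a cocycle. -/
noncomputable def ic (n : ℕ) (z : (HC P Y).cycles n) : P.complex.X n ⟶ Y :=
  ((HC P Y).iCycles n).hom z

lemma ic_d (n : ℕ) (z : (HC P Y).cycles n) : P.complex.d (n + 1) n ≫ ic P Y n z = 0 :=
  cycle_d (HC P Y) n z

lemma extMk_smul (n : ℕ) (r : R) (f : P.complex.X n ⟶ Y) (hf : P.complex.d (n + 1) n ≫ f = 0) :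
    P.extMk (r • f) (n + 1) rfl (by rw [Linear.comp_smul, hf, smul_zero]) =
      r • (P.extMk f (n + 1) rfl hf : E X Y n) := by
  rw [Abelian.Ext.smul_eq_comp_mk₀, ProjectiveResolution.extMk_comp_mk₀]
  simp

lemma extMk_eq_zero_zero (f : P.complex.X 0 ⟶ Y) (hf : P.complex.d 1 0 ≫ f = 0)
    (h : (P.extMk f 1 rfl hf : E X Y 0) = 0) : f = 0 := by
  simp only [← P.extEquivCohomologyClass.apply_eq_iff_eq,
    ProjectiveResolution.extEquivCohomologyClass_extMk,
    ProjectiveResolution.extEquivCohomologyClass_zero,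
    CochainComplex.HomComplex.CohomologyClass.mk_eq_zero_iff] at h
  rw [CochainComplex.HomComplex.Cocycle.toSingleMk_mem_coboundaries_iff _ _ _ _ _ 1 (by simp)] at h
  obtain ⟨g, hg⟩ := h
  have hz : Limits.IsZero (P.cochainComplex.X 1) :=
    CochainComplex.isZero_of_isStrictlyLE _ 0 1 (by lia)
  rw [hz.eq_of_src g 0, Limits.comp_zero] at hg
  rw [← cancel_epi (P.cochainComplexXIso (-(0 : ℕ)) 0 rfl).hom, ← hg, Limits.comp_zero]

/-- The map from cocycles to `Ext`. -/
noncomputable def toE (n : ℕ) : (HC P Y).cycles n →ₗ[R] E X Y n where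
  toFun z := P.extMk (ic P Y n z) (n + 1) rfl (ic_d P Y n z)
  map_add' a b := by
    rw [ProjectiveResolution.add_extMk]
    congr 1
    exact map_add ((HC P Y).iCycles n).hom a b
  map_smul' r a := by
    refine Eq.trans ?_ (extMk_smul P Y n r _ _)
    congr 1
    exact map_smul ((HC P Y).iCycles n).hom r a

lemma toE_surj (n : ℕ) : Function.Surjective (toE P Y n) := by
  intro e
  obtain ⟨f, hf, rfl⟩ := P.extMk_surjective e (n + 1) rfl
  obtain ⟨z, hz⟩ := exists_cycle (HC P Y) n f hf
  refine ⟨z, ?_⟩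
  change P.extMk (ic P Y n z) (n + 1) rfl (ic_d P Y n z) = _
  congr 1

lemma toE_ker (n : ℕ) (z : (HC P Y).cycles n) :
    toE P Y n z = 0 ↔ ((HC P Y).homologyπ n).hom z = 0 := by
  cases n with
  | zero =>
    rw [homologyπ_eq_zero_zero]
    constructor
    · exact fun h => extMk_eq_zero_zero P Y _ (ic_d P Y 0 z) h
    · intro h
      rw [(map_eq_zero_iff _ (iCycles_inj (HC P Y) 0)).1 h, map_zero]
  | succ n =>
    rw [homologyπ_eq_zero_succ]
    exact P.extMk_eq_zero_iff (ic P Y (n + 1) z) (n + 2) rfl (ic_d P Y (n + 1) z) n rfl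

/-- Comparison of the two versions of `Ext`, via homology. -/
noncomputable def cmpH (n : ℕ) : E X Y n ≃ₗ[R] (HC P Y).homology n :=
  ((toE P Y n).quotKerEquivOfSurjective (toE_surj P Y n)).symm ≪≫ₗ
    Submodule.quotEquivOfEq _ _ (by ext z; exact toE_ker P Y n z) ≪≫ₗ
    ((HC P Y).homologyπ n).hom.quotKerEquivOfSurjective (homologyπ_surj (HC P Y) n)

lemma cmpH_toE (n : ℕ) (z : (HC P Y).cycles n) :
    cmpH P Y n (toE P Y n z) = ((HC P Y).homologyπ n).hom z := by
  have : ((toE P Y n).quotKerEquivOfSurjective (toE_surj P Y n)).symm (toE P Y n z) =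
      Submodule.Quotient.mk z := by
    rw [LinearEquiv.symm_apply_eq]
    rfl
  change _ = _
  simp only [cmpH, LinearEquiv.trans_apply, this]
  rfl

/-- Comparison of the two versions of `Ext`. -/
noncomputable def cmp (n : ℕ) :
    E X Y n ≃ₗ[R] (((Ext R (ModuleCat.{0} R) n).obj (Opposite.op X)).obj Y) :=
  cmpH P Y n ≪≫ₗ (P.isoExt n Y).symm.toLinearEquiv

variable {X' : ModuleCat.{0} R} (P' : ProjectiveResolution X') (g : X' ⟶ X)

/-- The induced map on complexes of homomorphisms. -/
noncomputable def hcMap (φ : P'.complex ⟶ P.complex) : HC P Y ⟶ HC P' Y where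
  f n := ((linearYoneda R (ModuleCat.{0} R)).obj Y).map (φ.f n).op
  comm' i j hij := by
    ext (u : P.complex.X i ⟶ Y)
    change P'.complex.d j i ≫ φ.f i ≫ u = φ.f j ≫ P.complex.d j i ≫ u
    simp

lemma inv_square {C : Type*} [Category C] {c c' d d' : C} (i : d' ≅ c') (i' : d ≅ c) (w : c' ⟶ c)
    (v : d' ⟶ d) (h : i.hom ≫ w = v ≫ i'.hom) : w ≫ i'.inv = i.inv ≫ v := by
  rw [Iso.comp_inv_eq, Category.assoc, Iso.eq_inv_comp, h]

lemma paste_square {C : Type*} [Category C] {a b c c' d d' : C} (x : a ⟶ b) (p' : b ⟶ c)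
    (q' : c ⟶ d) (p : a ⟶ c') (q : c' ⟶ d') (w : c' ⟶ c) (v : d' ⟶ d)
    (h1 : x ≫ p' = p ≫ w) (h3 : w ≫ q' = q ≫ v) : x ≫ p' ≫ q' = (p ≫ q) ≫ v := by
  rw [Category.assoc, ← h3, ← Category.assoc, h1, Category.assoc]

lemma isoExt_nat (φ : P'.complex ⟶ P.complex) (comm : φ.f 0 ≫ P.π.f 0 = P'.π.f 0 ≫ g) (n : ℕ) :
    ((Ext R (ModuleCat.{0} R) n).map g.op).app Y ≫ (P'.isoExt n Y).hom =
      (P.isoExt n Y).hom ≫ HomologicalComplex.homologyMap (hcMap P Y P' φ) n := by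
  have h1 := ProjectiveResolution.isoLeftDerivedObj_inv_naturality g P' P φ comm
    ((linearYoneda R (ModuleCat.{0} R)).obj Y).rightOp n
  have h2 := HomologicalComplex.homologyOp_hom_naturality (hcMap P Y P' φ) n
  have h1' := congrArg Quiver.Hom.unop h1
  have h2' := congrArg Quiver.Hom.unop h2
  have h3 : (HomologicalComplex.homologyMap ((((linearYoneda R (ModuleCat.{0} R)).obj
        Y).rightOp.mapHomologicalComplex _).map φ) n).unop ≫
      (HomologicalComplex.homologyUnop ((((linearYoneda R (ModuleCat.{0} R)).obj
        Y).rightOp.mapHomologicalComplex _).obj P'.complex) n).inv =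
      (HomologicalComplex.homologyUnop ((((linearYoneda R (ModuleCat.{0} R)).obj
        Y).rightOp.mapHomologicalComplex _).obj P.complex) n).inv ≫
      HomologicalComplex.homologyMap (hcMap P Y P' φ) n := by
    exact inv_square _ _ _ _ h2'
  exact paste_square _ _ _ _ _ _ _ h1' h3

lemma cmp_nat (φ : ProjectiveResolution.Hom P' P g) (n : ℕ) (e : E X Y n) :
    cmp P' Y n (pb g Y n e) = (((Ext R (ModuleCat.{0} R) n).map g.op).app Y).hom (cmp P Y n e) := by
  obtain ⟨z, rfl⟩ := toE_surj P Y n e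
  have h1 : pb g Y n (toE P Y n z) =
      toE P' Y n ((HomologicalComplex.cyclesMap (hcMap P Y P' φ.hom) n).hom z) := by
    refine (ProjectiveResolution.mk₀_comp_extMk (ic P Y n z) (n + 1) rfl (ic_d P Y n z) φ).trans ?_
    change _ = P'.extMk (ic P' Y n _) (n + 1) rfl (ic_d P' Y n _)
    congr 1
    have := congrArg (fun q => q.hom z)
      (HomologicalComplex.cyclesMap_i (hcMap P Y P' φ.hom) n)
    exact this.symm
  have h2 := isoExt_nat P Y P' g φ.hom φ.hom_f_zero_comp_π_f_zero n
  have h3 := congrArg (fun q => q.hom z)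
    (HomologicalComplex.homologyπ_naturality (hcMap P Y P' φ.hom) n)
  have h4 := congrArg (fun q => q.hom (cmp P Y n (toE P Y n z))) h2
  have h5 : (P.isoExt n Y).hom.hom (cmp P Y n (toE P Y n z)) = ((HC P Y).homologyπ n).hom z := by
    rw [← cmpH_toE]
    exact (P.isoExt n Y).symm.toLinearEquiv.symm_apply_apply _
  have h6 : cmp P' Y n (pb g Y n (toE P Y n z)) = (P'.isoExt n Y).inv.hom
      (((HC P' Y).homologyπ n).hom
        ((HomologicalComplex.cyclesMap (hcMap P Y P' φ.hom) n).hom z)) := by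
    rw [h1, ← cmpH_toE]
    rfl
  rw [h6]
  have h7 : (P'.isoExt n Y).hom.hom ((((Ext R (ModuleCat.{0} R) n).map g.op).app Y).hom
      (cmp P Y n (toE P Y n z))) = ((HC P' Y).homologyπ n).hom
        ((HomologicalComplex.cyclesMap (hcMap P Y P' φ.hom) n).hom z) := by
    refine h4.trans ?_
    change (HomologicalComplex.homologyMap (hcMap P Y P' φ.hom) n).hom
      ((P.isoExt n Y).hom.hom (cmp P Y n (toE P Y n z))) = _
    rw [h5]
    exact h3
  rw [← h7]
  exact (P'.isoExt n Y).toLinearEquiv.symm_apply_apply _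

end Bridge
end CofKer
namespace CofKer

section Final
variable {R : Type} [CommRing R]

lemma colim_vanish (I : Ideal R) (Y : ModuleCat.{0} R) (i : ℕ)
    (hs : Subsingleton ((localCohomology I i).obj Y)) (n : ℕ)
    (x : (((Ext R (ModuleCat.{0} R) i).obj (Opposite.op (ModuleCat.of R (R ⧸ I ^ n)))).obj Y)) :
    ∃ m, ∃ h : I ^ m ≤ I ^ n, (((Ext R (ModuleCat.{0} R) i).map (ModuleCat.ofHom
      (Submodule.mapQ (I ^ m) (I ^ n) LinearMap.id h)).op).app Y).hom x = 0 := by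
  let D := localCohomology.diagram (localCohomology.idealPowersDiagram I) i
  have hc := Limits.isColimitOfPreserves ((evaluation (ModuleCat.{0} R) (ModuleCat.{0} R)).obj Y)
    (Limits.colimit.isColimit D)
  let j : (ℕᵒᵖ)ᵒᵖ := Opposite.op (Opposite.op n)
  have hs' : Subsingleton ((((evaluation (ModuleCat.{0} R) (ModuleCat.{0} R)).obj Y).mapCocone
    (Limits.colimit.cocone D)).pt) := hs
  obtain ⟨k, f, g, hfg⟩ := Limits.Concrete.isColimit_exists_of_rep_eq
    (F := D ⋙ (evaluation (ModuleCat.{0} R) (ModuleCat.{0} R)).obj Y) (i := j) (j := j) hc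
    (show ((D ⋙ (evaluation (ModuleCat.{0} R) (ModuleCat.{0} R)).obj Y).obj j) from x)
    (show ((D ⋙ (evaluation (ModuleCat.{0} R) (ModuleCat.{0} R)).obj Y).obj j) from 0)
    (Subsingleton.elim (h := hs') _ _)
  refine ⟨k.unop.unop, Ideal.pow_le_pow_right f.unop.unop.down.down, ?_⟩
  refine Eq.trans hfg ?_
  exact map_zero (((D ⋙ (evaluation (ModuleCat.{0} R) (ModuleCat.{0} R)).obj Y).map g)).hom

/-- A morphism of projective resolutions lifting a given morphism. -/
noncomputable def liftHom {X X' : ModuleCat.{0} R} (P : ProjectiveResolution X)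
    (P' : ProjectiveResolution X') (g : X' ⟶ X) : ProjectiveResolution.Hom P' P g where
  hom := ProjectiveResolution.lift g P' P
  hom_f_zero_comp_π_f_zero := ProjectiveResolution.lift_commutes_zero g P' P

lemma van_ring (I : Ideal R)
    (hcd : ∀ i : ℕ, 1 < i → Subsingleton ((localCohomology I i).obj (ModuleCat.of R R))) (i : ℕ) :
    Van (fun n => I ^ n) (ModuleCat.of R R) (i + 1) := by
  intro n e
  have hs : ∀ m, Ses (Submodule.subtype (I ^ m)) (Submodule.mkQ (I ^ m)) := fun m => ses_quot _
  let P : ∀ m, ProjectiveResolution (ModuleCat.of R (R ⧸ I ^ m)) :=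
    fun m => projectiveResolution _
  obtain ⟨m, hm, h0⟩ := colim_vanish I (ModuleCat.of R R) (i + 2) (hcd _ (by lia)) n
    (cmp (P n) _ (i + 2) ((hs n).dl _ (i + 1) e))
  rw [← cmp_nat (P n) _ (P m) _ (liftHom _ _ _), LinearEquiv.map_eq_zero_iff] at h0
  refine ⟨m, hm, ?_⟩
  have h1 := (hs m).dl_nat (hs n) (Submodule.inclusion hm) LinearMap.id
    (Submodule.mapQ (I ^ m) (I ^ n) LinearMap.id hm) rfl rfl (ModuleCat.of R R) (i + 1) e
  obtain ⟨u, hu⟩ := ((hs m).ex1 (ModuleCat.of R R) (i + 1) _).1 (h1.symm.trans h0)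
  refine hu.symm.trans ?_
  rw [proj_zero _ _ _ u, map_zero]

lemma finite_iff (X Y : ModuleCat.{0} R) (i : ℕ) :
    Module.Finite R (E X Y i) ↔
      Module.Finite R (((Ext R (ModuleCat.{0} R) i).obj (Opposite.op X)).obj Y) :=
  Module.Finite.equiv_iff (cmp (projectiveResolution X) Y i)

end Final
end CofKer

/-- If `R` is a commutative noetherian ring, `I` an ideal with `cd(I,R) ≤ 1`, and
`f : M → N` is a homomorphism of `I`-cofinite `R`-modules, then `ker f` is
`I`-cofinite. -/
theorem isCofinite_ker {R : Type} [CommRing R] [IsNoetherianRing R] (I : Ideal R)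
    (hcd : ∀ i : ℕ, 1 < i → Subsingleton ((localCohomology I i).obj (ModuleCat.of R R)))
    {M N : Type} [AddCommGroup M] [Module R M] [AddCommGroup N] [Module R N]
    (f : M →ₗ[R] N) (hM : IsCofinite I M) (hN : IsCofinite I N) :
    IsCofinite I (LinearMap.ker f) := by
  refine ⟨?_, fun i => ?_⟩
  · exact (Module.support_subset_of_injective (LinearMap.ker f).subtype
      Subtype.val_injective).trans hM.1
  · rw [← CofKer.finite_iff]
    exact CofKer.ker_finite I (CofKer.van_ring I hcd) f
      (fun i => (CofKer.finite_iff _ _ i).2 (hM.2 i))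
      (fun i => (CofKer.finite_iff _ _ i).2 (hN.2 i)) i
end

section
/- Let R be a commutative noetherian ring and 𝔞 an ideal with cd(𝔞,R) ≤ 1. Then the full subcategory of 𝔞-cofinite R-modules is an abelian subcategory of the category of R-modules (i.e., it is closed under kernels and cokernels of homomorphisms between its objects). -/
open CategoryTheory

section Comparison

open Limits Opposite

variable {R : Type} [CommRing R] {X Y : ModuleCat.{0} R}

/-- The complex (in the opposite category) computing `Ext` from a projective resolution. -/
noncomputable abbrev homCplx (P : ProjectiveResolution X) (Y : ModuleCat.{0} R) :
    ChainComplex (ModuleCat.{0} R)ᵒᵖ ℕ :=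
  (((linearYoneda R (ModuleCat R)).obj Y).rightOp.mapHomologicalComplex _).obj P.complex

/-- The inclusion of cocycles in cochains. -/
noncomputable def cocIncl (P : ProjectiveResolution X) (Y : ModuleCat.{0} R) (n : ℕ) :
    ((homCplx P Y).opcycles n).unop ⟶ ModuleCat.of R (P.complex.X n ⟶ Y) :=
  ((homCplx P Y).pOpcycles n).unop

/-- The isomorphism between the derived functor and the homology of the complex. -/
noncomputable def derIso (P : ProjectiveResolution X) (Y : ModuleCat.{0} R) (n : ℕ) :
    (((linearYoneda R (ModuleCat R)).obj Y).rightOp.leftDerived n).obj X ≅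
      (homCplx P Y).homology n :=
  P.isoLeftDerivedObj ((linearYoneda R (ModuleCat R)).obj Y).rightOp n

/-- The projection of cocycles onto `Ext`. -/
noncomputable def cocProj (P : ProjectiveResolution X) (Y : ModuleCat.{0} R) (n : ℕ) :
    ((homCplx P Y).opcycles n).unop ⟶ ((Ext R (ModuleCat R) n).obj (op X)).obj Y :=
  ((derIso P Y n).hom ≫
    (homCplx P Y).homologyι n).unop

lemma cocIncl_injective (P : ProjectiveResolution X) (n : ℕ) :
    Function.Injective (cocIncl P Y n).hom := by
  have : Mono (cocIncl P Y n) := unop_mono_of_epi _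
  exact (ModuleCat.mono_iff_injective _).1 this

lemma cocProj_surjective (P : ProjectiveResolution X) (n : ℕ) :
    Function.Surjective (cocProj P Y n).hom := by
  have : Epi (cocProj P Y n) := unop_epi_of_mono ((derIso P Y n).hom ≫ (homCplx P Y).homologyι n)
  exact (ModuleCat.epi_iff_surjective _).1 this

lemma exists_cocIncl_iff (P : ProjectiveResolution X) (n : ℕ) (f : P.complex.X n ⟶ Y) :
    (∃ z, (cocIncl P Y n).hom z = f) ↔ P.complex.d (n + 1) n ≫ f = 0 := by
  have h := (ShortComplex.exact_of_g_is_cokernel (ShortComplex.mk _ _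
    ((homCplx P Y).d_pOpcycles (n + 1) n)) ((homCplx P Y).opcyclesIsCokernel (n + 1) n (by simp))).unop
  rw [ShortComplex.moduleCat_exact_iff_range_eq_ker] at h
  have h2 := SetLike.ext_iff.1 h f
  exact h2

lemma cocProj_eq_zero_iff (P : ProjectiveResolution X) (n j : ℕ)
    (hj : (ComplexShape.down ℕ).next n = j) (z) :
    (cocProj P Y n).hom z = 0 ↔
      ∃ g : P.complex.X j ⟶ Y, P.complex.d n j ≫ g = (cocIncl P Y n).hom z := by
  have h := (ShortComplex.exact_of_f_is_kernel (ShortComplex.mk _ _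
    ((homCplx P Y).homologyι_comp_fromOpcycles n j)) ((homCplx P Y).homologyIsKernel n j hj)).unop
  rw [ShortComplex.moduleCat_exact_iff_range_eq_ker] at h
  have h2 := SetLike.ext_iff.1 h z
  have h1 : (cocProj P Y n).hom z = 0 ↔ ((homCplx P Y).homologyι n).unop.hom z = 0 := by
    have inj : Function.Injective
      (derIso P Y n).hom.unop.hom :=
      (ModuleCat.mono_iff_injective _).1 (unop_mono_of_epi _)
    have e2 : (cocProj P Y n).hom z =
      (derIso P Y n).hom.unop.hom (((homCplx P Y).homologyι n).unop.hom z) := rfl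
    rw [e2]
    exact map_eq_zero_iff _ inj
  rw [h1]
  refine (Iff.symm h2).trans ?_
  have h3 : ((homCplx P Y).fromOpcycles n j).unop ≫ cocIncl P Y n =
      ((homCplx P Y).d n j).unop := by
    rw [← (homCplx P Y).p_fromOpcycles n j]; rfl
  constructor
  · rintro ⟨g, hg⟩
    refine ⟨g, ?_⟩
    rw [← hg]
    exact (LinearMap.congr_fun (congrArg ModuleCat.Hom.hom h3) g).symm
  · rintro ⟨g, hg⟩
    refine ⟨g, cocIncl_injective P n ?_⟩
    rw [← hg]
    exact (LinearMap.congr_fun (congrArg ModuleCat.Hom.hom h3) g)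

lemma extMk_eq_zero_iff' (P : ProjectiveResolution X) (n j : ℕ)
    (hj : (ComplexShape.down ℕ).next n = j) (f : P.complex.X n ⟶ Y)
    (hf : P.complex.d (n + 1) n ≫ f = 0) :
    P.extMk f (n + 1) rfl hf = 0 ↔ ∃ g : P.complex.X j ⟶ Y, P.complex.d n j ≫ g = f := by
  cases n with
  | succ n =>
    have : j = n := by rw [← hj]; simp
    subst this
    exact P.extMk_eq_zero_iff f _ _ hf j rfl
  | zero =>
    have : j = 0 := by rw [← hj]; simp
    subst this
    rw [P.complex.shape 0 0 (by simp)]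
    simp only [zero_comp, exists_const]
    constructor
    · intro h
      rw [← P.extEquivCohomologyClass.apply_eq_iff_eq,
        ProjectiveResolution.extEquivCohomologyClass_extMk,
        ProjectiveResolution.extEquivCohomologyClass_zero,
        CochainComplex.HomComplex.CohomologyClass.mk_eq_zero_iff,
        CochainComplex.HomComplex.Cocycle.toSingleMk_mem_coboundaries_iff _ _ _ _ _ 1 (by simp)] at h
      obtain ⟨g, hg⟩ := h
      have hz : P.cochainComplex.d (-((0 : ℕ) : ℤ)) 1 = 0 :=
        IsZero.eq_of_tgt (P.cochainComplex.isZero_of_isStrictlyLE 0 1 (by simp)) _ _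
      rw [hz, zero_comp] at hg
      rw [← cancel_epi (P.cochainComplexXIso (-((0 : ℕ) : ℤ)) 0 rfl).hom, ← hg, comp_zero]
    · intro h
      subst h
      simp

/-- The map from cocycles to the derived-category `Ext`. -/
noncomputable def cocMk (P : ProjectiveResolution X) (Y : ModuleCat.{0} R) (n : ℕ) :
    ((homCplx P Y).opcycles n).unop →ₗ[R] Abelian.Ext X Y n where
  toFun z := P.extMk ((cocIncl P Y n).hom z) (n + 1) rfl
    ((exists_cocIncl_iff P n _).1 ⟨z, rfl⟩)
  map_add' x y := by
    rw [P.add_extMk]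
    congr 1
    exact map_add (cocIncl P Y n).hom x y
  map_smul' r x := by
    rw [RingHom.id_apply, Abelian.Ext.smul_eq_comp_mk₀, P.extMk_comp_mk₀]
    congr 1
    rw [map_smul]
    simp only [Linear.comp_smul, Category.comp_id]

lemma cocMk_surjective (P : ProjectiveResolution X) (n : ℕ) :
    Function.Surjective (cocMk P Y n) := by
  intro α
  obtain ⟨f, hf, rfl⟩ := P.extMk_surjective α (n + 1) rfl
  obtain ⟨z, rfl⟩ := (exists_cocIncl_iff P n f).2 hf
  exact ⟨z, rfl⟩

lemma ker_cocMk (P : ProjectiveResolution X) (n : ℕ) :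
    LinearMap.ker (cocMk P Y n) = LinearMap.ker (cocProj P Y n).hom := by
  ext z
  rw [LinearMap.mem_ker, LinearMap.mem_ker, cocProj_eq_zero_iff P n _ rfl]
  exact extMk_eq_zero_iff' P n _ rfl _
    ((exists_cocIncl_iff P n _).1 ⟨z, rfl⟩)

/-- The two versions of `Ext` agree. -/
noncomputable def extComparison (X Y : ModuleCat.{0} R) (n : ℕ) :
    (((Ext R (ModuleCat R) n).obj (op X)).obj Y) ≃ₗ[R] Abelian.Ext X Y n :=
  let P := projectiveResolution X
  ((LinearMap.quotKerEquivOfSurjective _ (cocProj_surjective (Y := Y) P n)).symm.trans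
    (Submodule.quotEquivOfEq _ _ (ker_cocMk P n).symm)).trans
    (LinearMap.quotKerEquivOfSurjective _ (cocMk_surjective (Y := Y) P n))

lemma finite_ext_iff (X Y : ModuleCat.{0} R) (n : ℕ) :
    Module.Finite R (((Ext R (ModuleCat R) n).obj (op X)).obj Y) ↔
      Module.Finite R (Abelian.Ext X Y n) :=
  ⟨fun _ => Module.Finite.equiv (extComparison X Y n),
    fun _ => Module.Finite.equiv (extComparison X Y n).symm⟩

lemma ext_precomp_eq_zero {X₁ : ModuleCat.{0} R} (Y : ModuleCat.{0} R) (n : ℕ)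
    (α : Abelian.Ext X₁ Y n) : ∃ ξ : ((Ext R (ModuleCat R) n).obj (op X₁)).obj Y,
      ∀ (X₂ : ModuleCat.{0} R) (g : X₂ ⟶ X₁),
        (((Ext R (ModuleCat R) n).map g.op).app Y).hom ξ = 0 →
        (Abelian.Ext.mk₀ g).comp α (zero_add n) = 0 := by
  let P := projectiveResolution X₁
  obtain ⟨z, rfl⟩ := cocMk_surjective P n α
  refine ⟨(cocProj P Y n).hom z, fun X₂ g h => ?_⟩
  let Q := projectiveResolution X₂
  let φ := ProjectiveResolution.lift g Q P
  have hφ : φ.f 0 ≫ P.π.f 0 = Q.π.f 0 ≫ g  :=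
    ProjectiveResolution.lift_commutes_zero g Q P
  let φ' : ProjectiveResolution.Hom Q P g := ⟨φ, HomologicalComplex.congr_hom (ProjectiveResolution.lift_commutes g Q P) 0⟩
  let Φ : homCplx Q Y ⟶ homCplx P Y :=
    (((linearYoneda R (ModuleCat R)).obj Y).rightOp.mapHomologicalComplex _).map φ
  let z' := (HomologicalComplex.opcyclesMap Φ n).unop.hom z
  have h1 : (cocIncl Q Y n).hom z' = φ.f n ≫ (cocIncl P Y n).hom z :=
    LinearMap.congr_fun (congrArg (fun t => ModuleCat.Hom.hom (Quiver.Hom.unop t))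
      (HomologicalComplex.p_opcyclesMap Φ n)) z
  have h2 : (cocProj Q Y n).hom z' =
      (((Ext R (ModuleCat R) n).map g.op).app Y).hom ((cocProj P Y n).hom z) := by
    have h0 : (((linearYoneda R (ModuleCat R)).obj Y).rightOp.leftDerived n).map g ≫
        (derIso P Y n).hom = (derIso Q Y n).hom ≫ HomologicalComplex.homologyMap Φ n :=
      ProjectiveResolution.isoLeftDerivedObj_hom_naturality g Q P φ hφ
        ((linearYoneda R (ModuleCat R)).obj Y).rightOp n
    have h3 : (((linearYoneda R (ModuleCat R)).obj Y).rightOp.leftDerived n).map g ≫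
        (derIso P Y n).hom ≫ (homCplx P Y).homologyι n =
        ((derIso Q Y n).hom ≫ (homCplx Q Y).homologyι n) ≫
          HomologicalComplex.opcyclesMap Φ n := by
      rw [← Category.assoc, h0, Category.assoc, Category.assoc,
        HomologicalComplex.homologyι_naturality]
    exact (LinearMap.congr_fun (congrArg (fun t => ModuleCat.Hom.hom (Quiver.Hom.unop t)) h3) z).symm
  rw [h] at h2
  have h4 : cocMk Q Y n z' = 0 := by
    rw [← LinearMap.mem_ker, ker_cocMk]; exact h2
  have h5 := ProjectiveResolution.mk₀_comp_extMk ((cocIncl P Y n).hom z) (n + 1) rfl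
    ((exists_cocIncl_iff P n _).1 ⟨z, rfl⟩) φ'
  refine h5.trans ?_
  rw [← h4]
  have h6 : ∀ (f₁ f₂ : Q.complex.X n ⟶ Y) (hf₁ : Q.complex.d (n + 1) n ≫ f₁ = 0)
      (hf₂ : Q.complex.d (n + 1) n ≫ f₂ = 0), f₁ = f₂ →
      Q.extMk f₁ (n + 1) rfl hf₁ = Q.extMk f₂ (n + 1) rfl hf₂ := by
    intro f₁ f₂ _ _ h
    subst h
    rfl
  exact h6 _ _ _ ((exists_cocIncl_iff Q n _).1 ⟨z', rfl⟩) h1.symm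

end Comparison

section Vanishing

open Limits Opposite

variable {R : Type} [CommRing R]

/-- The short complex attached to an exact pair of linear maps. -/
abbrev mkSC {A B C : Type} [AddCommGroup A] [AddCommGroup B] [AddCommGroup C]
    [Module R A] [Module R B] [Module R C] (f : A →ₗ[R] B) (g : B →ₗ[R] C)
    (h : Function.Exact f g) : ShortComplex (ModuleCat.{0} R) :=
  ShortComplex.mk (ModuleCat.ofHom f) (ModuleCat.ofHom g)
    (by ext x; exact h.apply_apply_eq_zero x)

lemma mkSC_shortExact {A B C : Type} [AddCommGroup A] [AddCommGroup B] [AddCommGroup C]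
    [Module R A] [Module R B] [Module R C] (f : A →ₗ[R] B) (g : B →ₗ[R] C)
    (h : Function.Exact f g) (hf : Function.Injective f) (hg : Function.Surjective g) :
    (mkSC f g h).ShortExact where
  exact := (ShortComplex.ShortExact.moduleCat_exact_iff_function_exact _).2 h
  mono_f := (ModuleCat.mono_iff_injective _).2 hf
  epi_g := (ModuleCat.epi_iff_surjective _).2 hg

/-- Multiplication by `a` as a map of cyclic modules `R/K → R/L`. -/
def cm (a : R) {K L : Ideal R} (h : K ≤ Submodule.comap (LinearMap.mulLeft R a) L) :
    ModuleCat.of R (R ⧸ K) ⟶ ModuleCat.of R (R ⧸ L) :=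
  ModuleCat.ofHom (Submodule.mapQ K L (LinearMap.mulLeft R a) h)

lemma cm_comp {a b c : R} {K L N : Ideal R} (h : K ≤ Submodule.comap (LinearMap.mulLeft R a) L)
    (h' : L ≤ Submodule.comap (LinearMap.mulLeft R b) N)
    (h'' : K ≤ Submodule.comap (LinearMap.mulLeft R c) N) (hc : c = a * b) :
    cm a h ≫ cm b h' = cm c h'' := by
  subst hc
  apply ModuleCat.hom_ext
  apply Submodule.linearMap_qext
  ext
  change (Submodule.Quotient.mk (b * (a * 1)) : R ⧸ N) = Submodule.Quotient.mk (a * b * 1)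
  congr 1
  ring

lemma le_comap_one {K L : Ideal R} (h : K ≤ L) :
    K ≤ Submodule.comap (LinearMap.mulLeft R 1) L := by
  simpa using h

/-- The projection `R/K → R/L`. -/
abbrev qm {K L : Ideal R} (h : K ≤ L) :
    ModuleCat.of R (R ⧸ K) ⟶ ModuleCat.of R (R ⧸ L) := cm 1 (le_comap_one h)

lemma qm_comp {K L N : Ideal R} (h : K ≤ L) (h' : L ≤ N) :
    qm h ≫ qm h' = qm (h.trans h') := cm_comp _ _ _ (by simp)

lemma qm_zero_of_le {K L N : Ideal R} (h : K ≤ L) (h' : L ≤ N) {Z : ModuleCat.{0} R} {i : ℕ}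
    (α : Abelian.Ext (ModuleCat.of R (R ⧸ N)) Z i)
    (hα : (Abelian.Ext.mk₀ (qm h')).comp α (zero_add i) = 0) :
    (Abelian.Ext.mk₀ (qm (h.trans h'))).comp α (zero_add i) = 0 := by
  rw [← qm_comp h h', ← Abelian.Ext.mk₀_comp_mk₀_assoc, hα, Abelian.Ext.comp_zero]

/-- Vanishing of local cohomology, elementwise. -/
def Van (I : Ideal R) (i : ℕ) (Z : ModuleCat.{0} R) : Prop :=
  ∀ (K : Ideal R) (k : ℕ) (_ : I ^ k ≤ K) (α : Abelian.Ext (ModuleCat.of R (R ⧸ K)) Z i),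
    ∃ n, ∃ h : I ^ n ≤ K, (Abelian.Ext.mk₀ (qm h)).comp α (zero_add i) = 0

lemma van_of_localCohomology (I : Ideal R) (i : ℕ) (Z : ModuleCat.{0} R)
    (h : Subsingleton ((localCohomology I i).obj Z)) : Van I i Z := by
  intro K k hK α
  obtain ⟨ξ, hξ⟩ := ext_precomp_eq_zero Z i ((Abelian.Ext.mk₀ (qm hK)).comp α (zero_add i))
  let F := localCohomology.diagram (localCohomology.idealPowersDiagram I) i
  let G := F ⋙ (evaluation _ _).obj Z
  have hs : Subsingleton (colimit G : ModuleCat R) := by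
    have e : (localCohomology I i).obj Z ≅ colimit G :=
      colimitObjIsoColimitCompEvaluation F Z
    exact (e.toLinearEquiv.symm.injective).subsingleton
  obtain ⟨j', u, hu⟩ := Concrete.colimit_rep_eq_zero R G (op (op k)) ξ (Subsingleton.elim _ _)
  have hle : k ≤ j'.unop.unop := u.unop.unop.down.down
  refine ⟨j'.unop.unop, (Ideal.pow_le_pow_right hle).trans hK, ?_⟩
  let g : ModuleCat.of R (R ⧸ I ^ j'.unop.unop) ⟶ ModuleCat.of R (R ⧸ I ^ k) :=
    (localCohomology.ringModIdeals (localCohomology.idealPowersDiagram I)).map u.unop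
  have h2 := hξ _ g hu
  have h3 : g ≫ qm hK = qm ((Ideal.pow_le_pow_right hle).trans hK) := by
    apply ModuleCat.hom_ext
    apply Submodule.linearMap_qext
    ext
    rfl
  have h4 := (Abelian.Ext.mk₀_comp_mk₀_assoc g (qm hK) α).symm.trans h2
  rw [h3] at h4
  exact h4

/-- The colon ideal `L : x`. -/
abbrev colonX (L : Ideal R) (x : R) : Ideal R := Submodule.comap (LinearMap.mulLeft R x) L

lemma colon_exact (L : Ideal R) (x : R) :
    Function.Exact (Submodule.mapQ (colonX L x) L (LinearMap.mulLeft R x) le_rfl)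
      (Submodule.mapQ L (L ⊔ Ideal.span {x}) (LinearMap.mulLeft R 1) (le_comap_one le_sup_left)) := by
  intro y
  obtain ⟨y, rfl⟩ := Submodule.Quotient.mk_surjective _ y
  simp only [Submodule.mapQ_apply, LinearMap.mulLeft_apply, one_mul,
    Submodule.Quotient.mk_eq_zero]
  constructor
  · intro hy
    obtain ⟨l, hl, z, hz, rfl⟩ := Submodule.mem_sup.1 hy
    obtain ⟨a, rfl⟩ := Ideal.mem_span_singleton'.1 hz
    refine ⟨Submodule.Quotient.mk a, ?_⟩
    rw [Submodule.mapQ_apply, Submodule.Quotient.eq]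
    simpa [mul_comm] using hl
  · rintro ⟨a, ha⟩
    obtain ⟨a, rfl⟩ := Submodule.Quotient.mk_surjective _ a
    rw [Submodule.mapQ_apply, Submodule.Quotient.eq] at ha
    have : y = -(LinearMap.mulLeft R x a - y) + a * x := by simp; ring
    rw [this]
    exact Submodule.add_mem_sup (neg_mem ha) (Ideal.mem_span_singleton'.2 ⟨a, rfl⟩)

lemma colon_shortExact (L : Ideal R) (x : R) : (mkSC _ _ (colon_exact L x)).ShortExact := by
  apply mkSC_shortExact
  · rw [← LinearMap.ker_eq_bot, eq_bot_iff]
    intro y hy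
    obtain ⟨y, rfl⟩ := Submodule.Quotient.mk_surjective _ y
    rw [LinearMap.mem_ker, Submodule.mapQ_apply, Submodule.Quotient.mk_eq_zero] at hy
    rw [Submodule.mem_bot, Submodule.Quotient.mk_eq_zero]
    exact hy
  · intro y
    obtain ⟨y, rfl⟩ := Submodule.Quotient.mk_surjective _ y
    exact ⟨Submodule.Quotient.mk y, by simp⟩

lemma exists_stable_ann [IsNoetherianRing R] (x : R) :
    ∃ c : ℕ, ∀ p (a : R), x ^ p * a = 0 → x ^ c * a = 0 := by
  let f : ℕ →o Submodule R R :=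
    ⟨fun n => LinearMap.ker (LinearMap.mulLeft R (x ^ n)), fun m n h a ha => by
      simp only [LinearMap.mem_ker, LinearMap.mulLeft_apply] at ha ⊢
      obtain ⟨d, rfl⟩ := Nat.exists_eq_add_of_le h
      rw [pow_add, mul_right_comm, ha, zero_mul]⟩
  obtain ⟨c, hc⟩ := monotone_stabilizes_iff_noetherian.2 (inferInstance : IsNoetherian R R) f
  refine ⟨c, fun p a ha => ?_⟩
  rcases le_total p c with h | h
  · exact f.monotone h (show a ∈ f p from ha)
  · have : a ∈ f p := ha
    rw [← hc p h] at this
    exact this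

lemma artin_rees_colon [IsNoetherianRing R] (J : Ideal R) (x : R) {c : ℕ}
    (hc : ∀ p (a : R), x ^ p * a = 0 → x ^ c * a = 0) (p m : ℕ) :
    ∃ k, ∀ n ≥ k, colonX (J ^ n) (x ^ p) ≤ colonX (J ^ m) (x ^ c) := by
  obtain ⟨k, hk⟩ := J.exists_pow_inf_eq_pow_smul (Ideal.span {x ^ p} : Submodule R R)
  refine ⟨m + k, fun n hn a ha => ?_⟩
  have h1 := hk n (by omega)
  have h2 : x ^ p * a ∈ J ^ n • (⊤ : Submodule R R) ⊓ Ideal.span {x ^ p} := by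
    refine ⟨by simpa using ha, Ideal.mem_span_singleton.2 ⟨a, rfl⟩⟩
  rw [h1] at h2
  have h3 : x ^ p * a ∈ J ^ (n - k) * Ideal.span {x ^ p} :=
    Submodule.smul_mono le_rfl inf_le_right h2
  obtain ⟨b, hb, hab⟩ := Ideal.mem_mul_span_singleton.1 h3
  have h4 := hc p (a - b) (by rw [mul_sub, ← hab]; ring)
  have h5 : x ^ c * a = x ^ c * b := by
    rw [mul_sub, sub_eq_zero] at h4; exact h4
  change x ^ c * a ∈ J ^ m
  rw [h5]
  exact Ideal.mul_mem_left _ _ (Ideal.pow_le_pow_right (by omega) hb)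

lemma van_sup [IsNoetherianRing R] (J : Ideal R) (x : R) (i : ℕ) (Z : ModuleCat.{0} R)
    (h0 : Van J i Z) (h1 : Van J (i + 1) Z) : Van (J ⊔ Ideal.span {x}) (i + 1) Z := by
  intro K k hK α
  have hJK : J ^ k ≤ K := (Ideal.pow_right_mono le_sup_left k).trans hK
  have hxK : ∀ n ≥ k, x ^ n ∈ K := fun n hn => hK (Ideal.pow_le_pow_right hn
    (Ideal.pow_mem_pow (Ideal.mem_sup_right (Ideal.mem_span_singleton_self x)) n))
  obtain ⟨m1, hm1, hα⟩ := h1 K k hJK α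
  obtain ⟨n, hn1, hn2⟩ : ∃ n, m1 ≤ n ∧ k ≤ n := ⟨max m1 k, le_max_left _ _, le_max_right _ _⟩
  have hnK : J ^ n ≤ K := (Ideal.pow_le_pow_right hn1).trans hm1
  have hA : J ^ n ⊔ Ideal.span {x ^ n} ≤ K :=
    sup_le hnK ((Ideal.span_singleton_le_iff_mem _).2 (hxK n hn2))
  have hα2 := qm_zero_of_le (Ideal.pow_le_pow_right hn1) hm1 α hα
  have hS := colon_shortExact (J ^ n) (x ^ n)
  obtain ⟨β, hβ⟩ := Abelian.Ext.contravariant_sequence_exact₃ hS _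
    ((Abelian.Ext.mk₀ (qm hA)).comp α (zero_add (i + 1)))
    (by
      rw [Abelian.Ext.mk₀_comp_mk₀_assoc]
      have : (mkSC _ _ (colon_exact (J ^ n) (x ^ n))).g ≫ qm hA = qm hnK :=
        qm_comp le_sup_left hA
      rw [this]
      exact hα2) (add_comm 1 i)
  have hq : J ^ n ≤ colonX (J ^ n) (x ^ n) := fun a ha => Ideal.mul_mem_left _ _ ha
  obtain ⟨m', hm', hγ⟩ := h0 (J ^ n) n le_rfl ((Abelian.Ext.mk₀ (qm hq)).comp β (zero_add i))
  obtain ⟨c, hc⟩ := exists_stable_ann x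
  obtain ⟨k0, hk0⟩ := artin_rees_colon J x hc (n + c) m'
  obtain ⟨m, hmk, hmn⟩ : ∃ m, k0 ≤ m ∧ n ≤ m := ⟨max k0 n, le_max_left _ _, le_max_right _ _⟩
  have hB : J ^ m ⊔ Ideal.span {x ^ (n + c)} ≤ J ^ n ⊔ Ideal.span {x ^ n} := by
    refine sup_le_sup (Ideal.pow_le_pow_right hmn) ?_
    rw [Ideal.span_singleton_le_span_singleton]
    exact pow_dvd_pow _ (by omega)
  have hτ : colonX (J ^ m) (x ^ (n + c)) ≤
      Submodule.comap (LinearMap.mulLeft R (x ^ c)) (colonX (J ^ n) (x ^ n)) := by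
    intro a ha
    have : x ^ (n + c) * a ∈ J ^ m := ha
    change x ^ n * (x ^ c * a) ∈ J ^ n
    rw [← mul_assoc, ← pow_add]
    exact Ideal.pow_le_pow_right hmn this
  have hS' := colon_shortExact (J ^ m) (x ^ (n + c))
  let Φ : mkSC _ _ (colon_exact (J ^ m) (x ^ (n + c))) ⟶
      mkSC _ _ (colon_exact (J ^ n) (x ^ n)) :=
    { τ₁ := cm (x ^ c) hτ
      τ₂ := qm (Ideal.pow_le_pow_right hmn)
      τ₃ := qm hB
      comm₁₂ := by
        have hh : colonX (J ^ m) (x ^ (n + c)) ≤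
            Submodule.comap (LinearMap.mulLeft R (x ^ (n + c))) (J ^ n) := fun a ha =>
          Ideal.pow_le_pow_right hmn ha
        exact (cm_comp hτ le_rfl hh (by ring)).trans
          (cm_comp le_rfl (le_comap_one (Ideal.pow_le_pow_right hmn)) hh (by ring)).symm
      comm₂₃ := (qm_comp (Ideal.pow_le_pow_right hmn) le_sup_left).trans
          (qm_comp le_sup_left hB).symm }
  have nat := ShortComplex.ShortExact.extClass_naturality hS' hS Φ
  have hτ0 : (Abelian.Ext.mk₀ (cm (x ^ c) hτ)).comp β (zero_add i) = 0 := by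
    have hf : cm (x ^ c) hτ = cm (x ^ c) (hk0 m hmk) ≫ qm hm' ≫ qm hq := by
      rw [qm_comp]
      exact (cm_comp _ _ _ (by ring)).symm
    rw [hf, ← Abelian.Ext.mk₀_comp_mk₀_assoc, ← Abelian.Ext.mk₀_comp_mk₀_assoc, hγ,
      Abelian.Ext.comp_zero]
  have hzero : (Abelian.Ext.mk₀ (qm (hB.trans hA))).comp α (zero_add (i + 1)) = 0 := by
    rw [← qm_comp hB hA, ← Abelian.Ext.mk₀_comp_mk₀_assoc, ← hβ]
    rw [← Abelian.Ext.comp_assoc (Abelian.Ext.mk₀ (qm hB)) hS.extClass β (zero_add 1) (add_comm 1 i)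
      (by omega)]
    have nat' : (Abelian.Ext.mk₀ (qm hB)).comp hS.extClass (zero_add 1) =
      hS'.extClass.comp (Abelian.Ext.mk₀ (cm (x ^ c) hτ)) (add_zero 1) := nat.symm
    rw [nat', Abelian.Ext.comp_assoc_of_second_deg_zero, hτ0, Abelian.Ext.comp_zero]
  have hI : (J ⊔ Ideal.span {x}) ^ (m + (n + c)) ≤ J ^ m ⊔ Ideal.span {x ^ (n + c)} := by
    rw [← Ideal.span_singleton_pow]
    exact Ideal.sup_pow_add_le_pow_sup_pow
  exact ⟨m + (n + c), hI.trans (hB.trans hA), qm_zero_of_le hI (hB.trans hA) α hzero⟩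

lemma van_large [IsNoetherianRing R] (I : Ideal R) :
    ∃ r, ∀ i, r < i → ∀ Z : ModuleCat.{0} R, Van I i Z := by
  classical
  obtain ⟨s, rfl⟩ := (isNoetherianRing_iff_ideal_fg R).1 inferInstance I
  refine ⟨s.card, ?_⟩
  induction s using Finset.induction_on with
  | empty =>
    intro i hi Z K k hK α
    obtain ⟨i, rfl⟩ : ∃ j, i = j + 1 := ⟨i - 1, by simp at hi; omega⟩
    have hb : (Ideal.span ((∅ : Finset R) : Set R)) ^ 1 = ⊥ := by simp
    refine ⟨1, by rw [hb]; exact bot_le, ?_⟩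
    have : Module.Projective R (R ⧸ (Ideal.span ((∅ : Finset R) : Set R)) ^ 1) :=
      Module.Projective.of_equiv (Submodule.quotEquivOfEqBot _ hb).symm
    have : Projective (ModuleCat.of R (R ⧸ (Ideal.span ((∅ : Finset R) : Set R)) ^ 1)) :=
      (IsProjective.iff_projective _).1 this
    exact Abelian.Ext.eq_zero_of_projective _
  | insert x s hx ih =>
    intro i hi Z
    rw [Finset.card_insert_of_notMem hx] at hi
    obtain ⟨i, rfl⟩ : ∃ j, i = j + 1 := ⟨i - 1, by omega⟩
    have := van_sup (Ideal.span (s : Set R)) x i Z (ih i (by omega) Z) (ih (i + 1) (by omega) Z)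
    rwa [Finset.coe_insert, Ideal.span_insert, sup_comm]

end Vanishing

section FG

variable {R : Type} [CommRing R]

lemma ext_pi_eq_zero {m : ℕ} {X : ModuleCat.{0} R} {i : ℕ}
    (α : Abelian.Ext X (ModuleCat.of R (Fin m → R)) i)
    (h : ∀ j : Fin m, α.comp (Abelian.Ext.mk₀ (ModuleCat.ofHom
      (LinearMap.proj j : (Fin m → R) →ₗ[R] R))) (add_zero i) = 0) : α = 0 := by
  have hid : 𝟙 (ModuleCat.of R (Fin m → R)) = ∑ j : Fin m,
      ModuleCat.ofHom (LinearMap.proj j : (Fin m → R) →ₗ[R] R) ≫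
        ModuleCat.ofHom (LinearMap.single R (fun _ : Fin m => R) j) := by
    apply ModuleCat.hom_ext
    rw [ModuleCat.hom_sum]
    refine LinearMap.ext fun x => ?_
    rw [LinearMap.sum_apply]
    simp only [ModuleCat.hom_comp, ModuleCat.hom_ofHom, LinearMap.comp_apply, LinearMap.proj_apply,
      ModuleCat.hom_id, LinearMap.id_apply, LinearMap.coe_single]
    exact (Finset.univ_sum_single x).symm
  rw [← Abelian.Ext.comp_mk₀_id α, hid, Abelian.Ext.mk₀_sum, Abelian.Ext.comp_sum]
  refine Finset.sum_eq_zero fun j _ => ?_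
  rw [← Abelian.Ext.mk₀_comp_mk₀, ← Abelian.Ext.comp_assoc_of_third_deg_zero, h j,
    Abelian.Ext.zero_comp]

lemma van_pi (I : Ideal R) (i m : ℕ) (h : Van I i (ModuleCat.of R R)) :
    Van I i (ModuleCat.of R (Fin m → R)) := by
  intro K k hK α
  choose n hn hz using fun j : Fin m => h K k hK
    (α.comp (Abelian.Ext.mk₀ (ModuleCat.ofHom
      (LinearMap.proj j : (Fin m → R) →ₗ[R] R))) (add_zero i))
  have hle : I ^ (k + ∑ j, n j) ≤ K :=
    (Ideal.pow_le_pow_right (Nat.le_add_right _ _)).trans hK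
  refine ⟨_, hle, ext_pi_eq_zero _ fun j => ?_⟩
  rw [Abelian.Ext.comp_assoc_of_third_deg_zero]
  exact qm_zero_of_le (Ideal.pow_le_pow_right
    ((Finset.single_le_sum (f := n) (fun _ _ => Nat.zero_le _) (Finset.mem_univ j)).trans
      (Nat.le_add_left _ _))) (hn j) _ (hz j)

lemma van_step (I : Ideal R) (i : ℕ) {S : ShortComplex (ModuleCat.{0} R)} (hS : S.ShortExact)
    (h1 : Van I (i + 1) S.X₁) (h2 : Van I i S.X₂) : Van I i S.X₃ := by
  intro K k hK α
  obtain ⟨n, hn, hz⟩ := h1 K k hK (α.comp hS.extClass rfl)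
  obtain ⟨β, hβ⟩ := Abelian.Ext.covariant_sequence_exact₃ _ hS
    ((Abelian.Ext.mk₀ (qm hn)).comp α (zero_add i)) rfl
    (by rw [Abelian.Ext.comp_assoc _ _ _ (zero_add i) rfl (by omega)]; exact hz)
  obtain ⟨n', hn', hz'⟩ := h2 (I ^ n) n le_rfl β
  refine ⟨n', hn'.trans hn, ?_⟩
  rw [← qm_comp hn' hn, ← Abelian.Ext.mk₀_comp_mk₀_assoc, ← hβ,
    ← Abelian.Ext.comp_assoc_of_third_deg_zero, hz', Abelian.Ext.zero_comp]

lemma exists_presentation [IsNoetherianRing R] (Z : Type) [AddCommGroup Z] [Module R Z]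
    [Module.Finite R Z] : ∃ (m : ℕ) (π : (Fin m → R) →ₗ[R] Z),
      (mkSC (LinearMap.ker π).subtype π (LinearMap.exact_subtype_ker_map π)).ShortExact := by
  obtain ⟨m, π, hπ⟩ := Module.Finite.exists_fin' R Z
  exact ⟨m, π, mkSC_shortExact _ _ _ (Submodule.injective_subtype _) hπ⟩

lemma van_fg [IsNoetherianRing R] (I : Ideal R)
    (h : ∀ i, 1 < i → Van I i (ModuleCat.of R R)) (i : ℕ) (hi : 1 < i)
    (Z : Type) [AddCommGroup Z] [Module R Z] [Module.Finite R Z] :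
    Van I i (ModuleCat.of R Z) := by
  obtain ⟨r, hr⟩ := van_large I
  have key : ∀ (d i : ℕ), 1 < i → r < i + d → ∀ (Z : Type) [AddCommGroup Z] [Module R Z]
      [Module.Finite R Z], Van I i (ModuleCat.of R Z) := by
    intro d
    induction d with
    | zero => intro i _ hri Z _ _ _; exact hr i hri _
    | succ d ih =>
      intro i hi hri Z _ _ _
      obtain ⟨m, π, hS⟩ := exists_presentation (R := R) Z
      exact van_step I i hS (ih (i + 1) (by omega) (by omega) _) (van_pi I i m (h i hi))
  exact key (r + 1) i hi (by omega) Z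

lemma ideal_exact (I : Ideal R) : Function.Exact (Submodule.subtype I) (Submodule.mkQ I) :=
  LinearMap.exact_subtype_mkQ I

lemma ideal_shortExact (I : Ideal R) : (mkSC _ _ (ideal_exact I)).ShortExact :=
  mkSC_shortExact _ _ _ (Submodule.injective_subtype _) (Submodule.mkQ_surjective _)

instance projective_pi_mod (m : ℕ) : Projective (ModuleCat.of R (Fin m → R)) :=
  (IsProjective.iff_projective _).1 inferInstance

instance projective_self_mod : Projective (ModuleCat.of R R) :=
  (IsProjective.iff_projective _).1 inferInstance

lemma killing [IsNoetherianRing R] (I : Ideal R)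
    (h : ∀ i, 1 < i → Van I i (ModuleCat.of R R)) :
    ∃ n, ∃ hn : I ^ n ≤ I, ∀ (M : ModuleCat.{0} R) (i : ℕ), 1 < i →
      ∀ α : Abelian.Ext (ModuleCat.of R (R ⧸ I)) M i,
        (Abelian.Ext.mk₀ (qm hn)).comp α (zero_add i) = 0 := by
  obtain ⟨m, π, hP⟩ := exists_presentation (R := R) I
  have hδ := ideal_shortExact I
  have hker : Module.Finite R (LinearMap.ker π) := inferInstance
  obtain ⟨n, hn, hz⟩ := van_fg I h 2 (by omega) (LinearMap.ker π) I 1 (by simp)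
    (hδ.extClass.comp hP.extClass rfl)
  have hδn := ideal_shortExact (I ^ n)
  let inc : ModuleCat.of R (I ^ n : Ideal R) ⟶ ModuleCat.of R I :=
    ModuleCat.ofHom (Submodule.inclusion hn)
  let Φ : mkSC _ _ (ideal_exact (I ^ n)) ⟶ mkSC _ _ (ideal_exact I) :=
    { τ₁ := inc
      τ₂ := 𝟙 _
      τ₃ := qm hn
      comm₁₂ := by ext x; rfl
      comm₂₃ := by
        apply ModuleCat.hom_ext
        refine LinearMap.ext fun x => ?_
        change (Submodule.Quotient.mk x : R ⧸ I) = Submodule.Quotient.mk (1 * x)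
        rw [one_mul] }
  have nat : hδn.extClass.comp (Abelian.Ext.mk₀ inc) (add_zero 1) =
      (Abelian.Ext.mk₀ (qm hn)).comp hδ.extClass (zero_add 1) :=
    ShortComplex.ShortExact.extClass_naturality hδn hδ Φ
  have h0 : (Abelian.Ext.mk₀ inc).comp hP.extClass (zero_add 1) = 0 := by
    obtain ⟨x, hx⟩ := Abelian.Ext.contravariant_sequence_exact₁ hδn _
      ((Abelian.Ext.mk₀ inc).comp hP.extClass (zero_add 1)) (n₁ := 2) rfl (by
        rw [← Abelian.Ext.comp_assoc_of_second_deg_zero, nat,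
          Abelian.Ext.comp_assoc _ _ _ (zero_add 1) rfl (by omega)]
        exact hz)
    rw [← hx]
    have : x = 0 := Abelian.Ext.eq_zero_of_projective (P := ModuleCat.of R R) x
    rw [this, Abelian.Ext.comp_zero]
  refine ⟨n, hn, fun M i hi α => ?_⟩
  obtain ⟨i, rfl⟩ : ∃ j, i = j + 2 := ⟨i - 2, by omega⟩
  obtain ⟨β, rfl⟩ := Abelian.Ext.contravariant_sequence_exact₃ hδ _ α
    (Abelian.Ext.eq_zero_of_projective (P := ModuleCat.of R R) _)
    (n₀ := i + 1) (by omega)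
  obtain ⟨γ, rfl⟩ := Abelian.Ext.contravariant_sequence_exact₃ hP _ β
    (Abelian.Ext.eq_zero_of_projective (P := ModuleCat.of R (Fin m → R)) _)
    (n₀ := i) (by omega)
  rw [← Abelian.Ext.comp_assoc (Abelian.Ext.mk₀ (qm hn)) hδ.extClass _ (zero_add 1) _ (by omega),
    ← nat, Abelian.Ext.comp_assoc_of_second_deg_zero,
    ← Abelian.Ext.comp_assoc (Abelian.Ext.mk₀ inc) hP.extClass γ (zero_add 1) _ (by omega),
    h0, Abelian.Ext.zero_comp, Abelian.Ext.comp_zero]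

lemma finite_middle [IsNoetherianRing R] {A B C : Type*} [AddCommGroup A] [AddCommGroup B]
    [AddCommGroup C] [Module R A] [Module R B] [Module R C] (f : A →ₗ[R] B) (g : B →ₗ[R] C)
    (h : ∀ b, g b = 0 → ∃ a, f a = b) (hA : Module.Finite R A) (hC : Module.Finite R C) :
    Module.Finite R B := by
  have h1 : Module.Finite R (LinearMap.ker g) := by
    have : LinearMap.ker g ≤ LinearMap.range f := fun b hb => h b hb
    exact Module.Finite.of_injective (Submodule.inclusion this) (Submodule.inclusion_injective _)
  have h2 : Module.Finite R (B ⧸ LinearMap.ker g) :=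
    Module.Finite.equiv g.quotKerEquivRange.symm
  exact Module.Finite.of_submodule_quotient (LinearMap.ker g)

variable [IsNoetherianRing R]

section LES

variable {S : ShortComplex (ModuleCat.{0} R)}

lemma fin_contra₂ (hS : S.ShortExact) (X : ModuleCat.{0} R) (n : ℕ) (h1 : Module.Finite R (Abelian.Ext S.X₁ X n))
    (h3 : Module.Finite R (Abelian.Ext S.X₃ X n)) : Module.Finite R (Abelian.Ext S.X₂ X n) :=
  finite_middle ((Abelian.Ext.mk₀ S.g).precompOfLinear R X (zero_add n))
    ((Abelian.Ext.mk₀ S.f).precompOfLinear R X (zero_add n))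
    (fun b hb => Abelian.Ext.contravariant_sequence_exact₂ hS X b hb) h3 h1

lemma fin_contra₃ (hS : S.ShortExact) (X : ModuleCat.{0} R) (n : ℕ) (h1 : Module.Finite R (Abelian.Ext S.X₁ X n))
    (h2 : Module.Finite R (Abelian.Ext S.X₂ X (n + 1))) :
    Module.Finite R (Abelian.Ext S.X₃ X (n + 1)) :=
  finite_middle (hS.extClass.precompOfLinear R X (add_comm 1 n))
    ((Abelian.Ext.mk₀ S.g).precompOfLinear R X (zero_add (n + 1)))
    (fun b hb => Abelian.Ext.contravariant_sequence_exact₃ hS X b hb (add_comm 1 n)) h1 h2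

lemma fin_contra₃_zero (hS : S.ShortExact) (X : ModuleCat.{0} R) (h2 : Module.Finite R (Abelian.Ext S.X₂ X 0)) :
    Module.Finite R (Abelian.Ext S.X₃ X 0) :=
  have := hS.epi_g
  Module.Finite.of_injective ((Abelian.Ext.mk₀ S.g).precompOfLinear R X (zero_add 0))
    (Abelian.Ext.precomp_mk₀_injective_of_epi X S.g)

lemma fin_cov₁ (hS : S.ShortExact) (X : ModuleCat.{0} R) (n : ℕ) (h3 : Module.Finite R (Abelian.Ext X S.X₃ n))
    (h2 : Module.Finite R (Abelian.Ext X S.X₂ (n + 1))) :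
    Module.Finite R (Abelian.Ext X S.X₁ (n + 1)) :=
  finite_middle (hS.extClass.postcompOfLinear R X rfl)
    ((Abelian.Ext.mk₀ S.f).postcompOfLinear R X (add_zero (n + 1)))
    (fun b hb => Abelian.Ext.covariant_sequence_exact₁ X hS b hb rfl) h3 h2

lemma fin_cov₃ (hS : S.ShortExact) (X : ModuleCat.{0} R) (n : ℕ) (h2 : Module.Finite R (Abelian.Ext X S.X₂ n))
    (h1 : Module.Finite R (Abelian.Ext X S.X₁ (n + 1))) :
    Module.Finite R (Abelian.Ext X S.X₃ n) :=
  finite_middle ((Abelian.Ext.mk₀ S.g).postcompOfLinear R X (add_zero n))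
    (hS.extClass.postcompOfLinear R X rfl)
    (fun b hb => Abelian.Ext.covariant_sequence_exact₃ X hS b rfl hb) h2 h1

end LES

lemma fin_cov_zero {A B : ModuleCat.{0} R} (f : A ⟶ B) [Mono f] (X : ModuleCat.{0} R)
    (h : Module.Finite R (Abelian.Ext X B 0)) : Module.Finite R (Abelian.Ext X A 0) :=
  Module.Finite.of_injective ((Abelian.Ext.mk₀ f).postcompOfLinear R X (add_zero 0))
    (Abelian.Ext.postcomp_mk₀_injective_of_mono X f)

lemma fin_equiv {A B : ModuleCat.{0} R} (e : A ≅ B) (X : ModuleCat.{0} R) (n : ℕ)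
    (h : Module.Finite R (Abelian.Ext B X n)) : Module.Finite R (Abelian.Ext A X n) := by
  refine Module.Finite.of_surjective
    ((Abelian.Ext.mk₀ e.hom).precompOfLinear R X (zero_add n)) fun a => ?_
  refine ⟨(Abelian.Ext.mk₀ e.inv).comp a (zero_add n), ?_⟩
  change (Abelian.Ext.mk₀ e.hom).comp ((Abelian.Ext.mk₀ e.inv).comp a (zero_add n)) (zero_add n) = a
  rw [Abelian.Ext.mk₀_comp_mk₀_assoc, e.hom_inv_id, Abelian.Ext.mk₀_id_comp]

lemma qm_exact {K L : Ideal R} (h : K ≤ L) :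
    (mkSC (LinearMap.ker (qm h).hom).subtype (qm h).hom
      (LinearMap.exact_subtype_ker_map _)).ShortExact := by
  apply mkSC_shortExact _ _ _ (Submodule.injective_subtype _)
  intro y
  obtain ⟨y, rfl⟩ := Submodule.Quotient.mk_surjective _ y
  refine ⟨Submodule.Quotient.mk y, ?_⟩
  change (Submodule.Quotient.mk (1 * y) : R ⧸ L) = _
  rw [one_mul]

lemma le_ann_ker {K L : Ideal R} (h : K ≤ L) :
    K ≤ Module.annihilator R (LinearMap.ker (qm h).hom) := by
  refine le_trans ?_ (LinearMap.annihilator_le_of_injective _ (Submodule.injective_subtype _))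
  exact (Ideal.annihilator_quotient (I := K)).ge

lemma fin_propagate (I : Ideal R) (M : ModuleCat.{0} R) (j : ℕ) :
    (∀ j' ≤ j, Module.Finite R (Abelian.Ext (ModuleCat.of R (R ⧸ I)) M j')) →
    ∀ (N : Type) [AddCommGroup N] [Module R N] [Module.Finite R N] (k : ℕ),
      I ^ k ≤ Module.annihilator R N → Module.Finite R (Abelian.Ext (ModuleCat.of R N) M j) := by
  induction j with
  | zero => ?_
  | succ j ih => ?_
  all_goals
    intro hj N _ _ hN
    induction hN using IsNoetherianRing.induction_on_isQuotientEquivQuotientPrime R with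
    | subsingleton N =>
      intro k _
      have hz : 𝟙 (ModuleCat.of R N) = 0 := by
        apply ModuleCat.hom_ext
        exact LinearMap.ext fun x => Subsingleton.elim _ _
      refine @Module.Finite.of_finite _ _ _ _ _ (@Finite.of_subsingleton _ ⟨fun a b => ?_⟩)
      rw [← Abelian.Ext.mk₀_id_comp a, ← Abelian.Ext.mk₀_id_comp b, hz, Abelian.Ext.mk₀_zero,
        Abelian.Ext.zero_comp, Abelian.Ext.zero_comp]
    | quotient N p e =>
      intro k hk
      have hIp : I ≤ p.1 := by
        refine p.2.le_of_pow_le (n := k) ?_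
        rw [e.annihilator_eq, Ideal.annihilator_quotient] at hk
        exact hk
      apply fin_equiv e.toModuleIso
      first
      | exact fin_contra₃_zero (qm_exact hIp) _ (hj _ le_rfl)
      | exact fin_contra₃ (qm_exact hIp) _ _
          (ih (fun j' hj' => hj j' (by omega)) _ 1 (by simpa using le_ann_ker hIp)) (hj _ le_rfl)
    | exact N₁ N₂ N₃ f g hf hg hfg h₁ h₃ =>
      intro k hk
      exact fin_contra₂ (mkSC_shortExact f g hfg hf hg) _ _
        (h₁ k (hk.trans (LinearMap.annihilator_le_of_injective f hf)))
        (h₃ k (hk.trans (LinearMap.annihilator_le_of_surjective g hg)))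

lemma criterion (I : Ideal R)
    (h : ∀ i, 1 < i → Van I i (ModuleCat.of R R)) (M : ModuleCat.{0} R)
    (h0 : Module.Finite R (Abelian.Ext (ModuleCat.of R (R ⧸ I)) M 0))
    (h1 : Module.Finite R (Abelian.Ext (ModuleCat.of R (R ⧸ I)) M 1)) (i : ℕ) :
    Module.Finite R (Abelian.Ext (ModuleCat.of R (R ⧸ I)) M i) := by
  obtain ⟨n, hn, hk⟩ := killing I h
  induction i using Nat.strong_induction_on with
  | _ i ih =>
    match i, ih with
    | 0, _ => exact h0
    | 1, _ => exact h1
    | i + 2, ih =>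
      have hf := fin_propagate I M (i + 1) (fun j' hj' => ih j' (by omega))
        (LinearMap.ker (qm hn).hom) n (le_ann_ker hn)
      have hS := qm_exact hn
      refine Module.Finite.of_surjective (hS.extClass.precompOfLinear R M
        (show 1 + (i + 1) = i + 2 by omega)) fun a => ?_
      exact Abelian.Ext.contravariant_sequence_exact₃ hS M a (hk M _ (by omega) a) (by omega)

end FG

/-- If `R` is a commutative noetherian ring and `I` an ideal with `cd(I,R) ≤ 1`, then the
full subcategory of `I`-cofinite `R`-modules is an abelian subcategory of the category of
`R`-modules: it is closed under kernels and cokernels of homomorphisms between its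
objects. -/
theorem cofinite_abelian_subcategory {R : Type} [CommRing R] [IsNoetherianRing R]
    (I : Ideal R)
    (hcd : ∀ i : ℕ, 1 < i → Subsingleton ((localCohomology I i).obj (ModuleCat.of R R))) :
    ∀ (M N : Type) (_ : AddCommGroup M) (_ : Module R M) (_ : AddCommGroup N)
      (_ : Module R N) (f : M →ₗ[R] N), IsCofinite I M → IsCofinite I N →
      IsCofinite I (LinearMap.ker f) ∧ IsCofinite I (N ⧸ LinearMap.range f) := by
  intro M N _ _ _ _ f hM hN
  have hV : ∀ i, 1 < i → Van I i (ModuleCat.of R R) := fun i hi =>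
    van_of_localCohomology I i _ (hcd i hi)
  have eM : ∀ i, Module.Finite R (Abelian.Ext (ModuleCat.of R (R ⧸ I)) (ModuleCat.of R M) i) :=
    fun i => (finite_ext_iff _ _ i).1 (hM.2 i)
  have eN : ∀ i, Module.Finite R (Abelian.Ext (ModuleCat.of R (R ⧸ I)) (ModuleCat.of R N) i) :=
    fun i => (finite_ext_iff _ _ i).1 (hN.2 i)
  have hex : Function.Exact (LinearMap.ker f).subtype f.rangeRestrict := by
    rw [LinearMap.exact_iff, LinearMap.ker_rangeRestrict, Submodule.range_subtype]
  have hS1 := mkSC_shortExact _ _ hex (Submodule.injective_subtype _)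
    (LinearMap.surjective_rangeRestrict f)
  have hS2 := mkSC_shortExact _ _ (LinearMap.exact_subtype_mkQ (LinearMap.range f))
    (Submodule.injective_subtype _) (Submodule.mkQ_surjective _)
  have m1 := hS1.mono_f
  have m2 := hS2.mono_f
  have k0 : Module.Finite R (Abelian.Ext (ModuleCat.of R (R ⧸ I))
      (ModuleCat.of R (LinearMap.ker f)) 0) := @fin_cov_zero R _ _ _ _ _ m1 _ (eM 0)
  have i0 : Module.Finite R (Abelian.Ext (ModuleCat.of R (R ⧸ I))
      (ModuleCat.of R (LinearMap.range f)) 0) := @fin_cov_zero R _ _ _ _ _ m2 _ (eN 0)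
  have k1 : Module.Finite R (Abelian.Ext (ModuleCat.of R (R ⧸ I))
      (ModuleCat.of R (LinearMap.ker f)) 1) := fin_cov₁ hS1 _ 0 i0 (eM 1)
  have k := criterion I hV _ k0 k1
  have im : ∀ i, Module.Finite R (Abelian.Ext (ModuleCat.of R (R ⧸ I))
      (ModuleCat.of R (LinearMap.range f)) i) := fun i => fin_cov₃ hS1 _ i (eM i) (k (i + 1))
  refine ⟨⟨?_, fun i => (finite_ext_iff _ _ i).2 (k i)⟩,
    ⟨?_, fun i => (finite_ext_iff _ _ i).2 (fin_cov₃ hS2 _ i (eN i) (im (i + 1)))⟩⟩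
  · exact (Module.support_subset_of_injective _ (Submodule.injective_subtype _)).trans hM.1
  · exact (Module.support_subset_of_surjective _ (Submodule.mkQ_surjective _)).trans hN.1
end

section
/- Let F : D(R) → D(S) be a triangulated covariant functor between derived categories of module categories, A an additive subcategory of R-modules, and B an abelian subcategory of S-modules closed under extensions. If H_i(F(M)) ∈ B for every M ∈ A and every i, then for every homologically bounded R-complex X with all homology modules in A, all homology modules H_i(F(X)) lie in B. -/
open CategoryTheory Limits DerivedCategory

open Pretriangulated in
lemma wayOut_five {C : Type*} [Category C] [Abelian C] {M₁ M₂ M₃ M₄ M₅ : C}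
    (f : M₁ ⟶ M₂) (g : M₂ ⟶ M₃) (h : M₃ ⟶ M₄) (k : M₄ ⟶ M₅)
    (fg : f ≫ g = 0) (gh : g ≫ h = 0) (hk : h ≫ k = 0)
    (e₁ : (ShortComplex.mk f g fg).Exact) (e₂ : (ShortComplex.mk g h gh).Exact)
    (e₃ : (ShortComplex.mk h k hk).Exact) :
    ∃ w : cokernel.desc f g fg ≫ kernel.lift k h hk = 0,
      (ShortComplex.mk (cokernel.desc f g fg) (kernel.lift k h hk) w).ShortExact := by
  have w' : g ≫ kernel.lift k h hk = 0 := by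
    rw [← cancel_mono (kernel.ι k)]; simpa using gh
  have w : cokernel.desc f g fg ≫ kernel.lift k h hk = 0 := by
    rw [← cancel_epi (cokernel.π f)]; simpa using w'
  refine ⟨w, ?_⟩
  have m : Mono (cokernel.desc f g fg) := e₁.mono_cokernelDesc
  have p : Epi (kernel.lift k h hk) := e₃.epi_kernelLift
  let φ : ShortComplex.mk g (kernel.lift k h hk) w' ⟶ ShortComplex.mk g h gh :=
    { τ₁ := 𝟙 _, τ₂ := 𝟙 _, τ₃ := kernel.ι k }
  let ψ : ShortComplex.mk g (kernel.lift k h hk) w' ⟶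
      ShortComplex.mk (cokernel.desc f g fg) (kernel.lift k h hk) w :=
    { τ₁ := cokernel.π f, τ₂ := 𝟙 _, τ₃ := 𝟙 _ }
  have : Epi φ.τ₁ := by dsimp [φ]; infer_instance
  have : IsIso φ.τ₂ := by dsimp [φ]; infer_instance
  have : Mono φ.τ₃ := by dsimp [φ]; infer_instance
  have : Epi ψ.τ₁ := by dsimp [ψ]; infer_instance
  have : IsIso ψ.τ₂ := by dsimp [ψ]; infer_instance
  have : Mono ψ.τ₃ := by dsimp [ψ]; infer_instance
  have ex : (ShortComplex.mk (cokernel.desc f g fg) (kernel.lift k h hk) w).Exact :=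
    (ShortComplex.exact_iff_of_epi_of_isIso_of_mono ψ).1
      ((ShortComplex.exact_iff_of_epi_of_isIso_of_mono φ).2 e₂)
  exact { exact := ex, mono_f := m, epi_g := p }

open Pretriangulated in
/-- The truncation triangle, and its effect on homology. -/
lemma wayOut_trunc {C : Type*} [Category C] [Abelian C] [HasDerivedCategory C]
    (X : DerivedCategory C) (a : ℤ) :
    ∃ T : Triangle (DerivedCategory C), T ∈ distTriang _ ∧ T.obj₂ = X ∧
      T.obj₁.IsLE a ∧ T.obj₃.IsGE (a + 1) ∧
      (∀ i, i ≤ a → Nonempty ((homologyFunctor C i).obj X ≅ (homologyFunctor C i).obj T.obj₁)) ∧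
      (∀ i, a < i →
        Nonempty ((homologyFunctor C i).obj X ≅ (homologyFunctor C i).obj T.obj₃)) := by
  obtain ⟨K, Y, hK, hY, f, g, h, hT⟩ :=
    (TStructure.t (C := C)).exists_triangle X a (a + 1) rfl
  have hK' : K.IsLE a := ⟨hK⟩
  have hY' : Y.IsGE (a + 1) := ⟨hY⟩
  refine ⟨_, hT, rfl, hK', hY', fun i hi => ?_, fun i hi => ?_⟩
  · have z₁ : IsZero ((homologyFunctor C (i - 1)).obj Y) := isZero_of_isGE Y (a + 1) _ (by lia)
    have z₂ : IsZero ((homologyFunctor C i).obj Y) := isZero_of_isGE Y (a + 1) _ (by lia)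
    have m : Mono ((homologyFunctor C i).map f) :=
      (HomologySequence.mono_homologyMap_mor₁_iff _ hT (i - 1) i (by lia)).2 (z₁.eq_of_src _ _)
    have p : Epi ((homologyFunctor C i).map f) :=
      (HomologySequence.epi_homologyMap_mor₁_iff _ hT i).2 (z₂.eq_of_tgt _ _)
    have := isIso_of_mono_of_epi ((homologyFunctor C i).map f)
    exact ⟨(asIso ((homologyFunctor C i).map f)).symm⟩
  · have z₁ : IsZero ((homologyFunctor C (i + 1)).obj K) := isZero_of_isLE K a _ (by lia)
    have z₂ : IsZero ((homologyFunctor C i).obj K) := isZero_of_isLE K a _ (by lia)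
    have m : Mono ((homologyFunctor C i).map g) :=
      (HomologySequence.mono_homologyMap_mor₂_iff _ hT i).2 (z₂.eq_of_src _ _)
    have p : Epi ((homologyFunctor C i).map g) :=
      (HomologySequence.epi_homologyMap_mor₂_iff _ hT i (i + 1) (by lia)).2 (z₁.eq_of_tgt _ _)
    have q := isIso_of_mono_of_epi ((homologyFunctor C i).map g)
    exact ⟨@asIso _ _ _ _ ((homologyFunctor C i).map g) q⟩

/-- The way-out lemma, bounded case.  Let `F : D(R) → D(S)` be a triangulated covariant
functor, `A` an additive subcategory of `R`-modules and `B` an abelian subcategory of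
`S`-modules which is closed under extensions.  If all homology of `F(M)` lies in `B` for
every module `M` in `A`, then for every homologically bounded complex `X` whose homology
modules all lie in `A`, all homology modules of `F(X)` lie in `B`. -/
theorem wayOutLemma_bounded {R S : Type} [CommRing R] [CommRing S]
    [HasDerivedCategory (ModuleCat.{0} R)] [HasDerivedCategory (ModuleCat.{0} S)]
    (F : DerivedCategory (ModuleCat R) ⥤ DerivedCategory (ModuleCat S))
    [F.CommShift ℤ] [F.IsTriangulated]
    (A : ModuleCat R → Prop) (B : ModuleCat S → Prop)
    -- `A` is an additive subcategory:
    (hAiso : ∀ (M N : ModuleCat R), (M ≅ N) → A M → A N)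
    (hAzero : A (ModuleCat.of R PUnit))
    (hAprod : ∀ (M N : ModuleCat R), A M → A N → A (M ⊞ N))
    -- `B` is an abelian subcategory, closed under extensions:
    (hBiso : ∀ (M N : ModuleCat S), (M ≅ N) → B M → B N)
    (hBzero : B (ModuleCat.of S PUnit))
    (hBker : ∀ (M N : ModuleCat S) (f : M ⟶ N), B M → B N → B (kernel f))
    (hBcoker : ∀ (M N : ModuleCat S) (f : M ⟶ N), B M → B N → B (cokernel f))
    (hBext : ∀ (c : ShortComplex (ModuleCat S)), c.ShortExact →
      B c.X₁ → B c.X₃ → B c.X₂)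
    -- homology of `F` of a module in `A` lies in `B`:
    (hF : ∀ (M : ModuleCat R), A M → ∀ i : ℤ,
      B ((homologyFunctor (ModuleCat S) i).obj
        (F.obj ((singleFunctor (ModuleCat R) 0).obj M))))
    -- `X` is homologically bounded, with homology in `A`:
    (X : DerivedCategory (ModuleCat R))
    (hXbdd : ∃ a b : ℤ, ∀ i : ℤ, (i < a ∨ b < i) →
      IsZero ((homologyFunctor (ModuleCat R) i).obj X))
    (hXA : ∀ i : ℤ, A ((homologyFunctor (ModuleCat R) i).obj X)) :
    ∀ i : ℤ, B ((homologyFunctor (ModuleCat S) i).obj (F.obj X)) := by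
  have zA : ∀ M : ModuleCat R, IsZero M → A M := fun M hM =>
    hAiso _ _ ((ModuleCat.isZero_of_subsingleton (ModuleCat.of R PUnit)).iso hM) hAzero
  -- two out of three
  have ext : ∀ T : Pretriangulated.Triangle (DerivedCategory (ModuleCat R)),
      T ∈ Pretriangulated.distinguishedTriangles →
      (∀ i, B ((homologyFunctor (ModuleCat S) i).obj (F.obj T.obj₁))) →
      (∀ i, B ((homologyFunctor (ModuleCat S) i).obj (F.obj T.obj₃))) →
      ∀ i, B ((homologyFunctor (ModuleCat S) i).obj (F.obj T.obj₂)) := by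
    intro T hT h₁ h₃ i
    have hT' := F.map_distinguished T hT
    obtain ⟨w, hw⟩ := wayOut_five _ _ _ _ _ _ _
      (HomologySequence.exact₁ _ hT' (i - 1) i (by lia))
      (HomologySequence.exact₂ _ hT' i)
      (HomologySequence.exact₃ _ hT' i (i + 1) rfl)
    exact hBext _ hw (hBcoker _ _ _ (h₃ _) (h₁ _)) (hBker _ _ _ (h₃ _) (h₁ _))
  -- complexes concentrated in one degree
  have base : ∀ (a : ℤ) (Y : DerivedCategory (ModuleCat R)), Y.IsGE a → Y.IsLE a →
      (∀ i, A ((homologyFunctor (ModuleCat R) i).obj Y)) →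
      ∀ i, B ((homologyFunctor (ModuleCat S) i).obj (F.obj Y)) := by
    intro a Y _ _ hY i
    obtain ⟨M, ⟨e⟩⟩ := exists_iso_singleFunctor_obj_of_isGE_of_isLE Y a
    have hM : A M := hAiso _ _ ((homologyFunctor (ModuleCat R) a).mapIso e ≪≫
      (singleFunctorCompHomologyFunctorIso (ModuleCat R) a).app M) (hY a)
    let e₁ := ((singleFunctors (ModuleCat R)).shiftIso a 0 a (by lia)).app M
    let e₂ := (F.commShiftIso a).app Y
    let e₃ := ((homologyFunctor (ModuleCat S) 0).shiftIso a (i - a) i (by lia)).app (F.obj Y)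
    let e₄ := F.mapIso ((shiftFunctor _ a).mapIso e ≪≫ e₁)
    exact hBiso _ _ ((homologyFunctor (ModuleCat S) (i - a)).mapIso (e₄.symm ≪≫ e₂) ≪≫ e₃)
      (hF M hM (i - a))
  have main : ∀ (n : ℕ) (a : ℤ) (Y : DerivedCategory (ModuleCat R)), Y.IsGE a →
      Y.IsLE (a + n) → (∀ i, A ((homologyFunctor (ModuleCat R) i).obj Y)) →
      ∀ i, B ((homologyFunctor (ModuleCat S) i).obj (F.obj Y)) := by
    intro n
    induction n with
    | zero => intro a Y h₁ h₂; exact base a Y h₁ (by simpa using h₂)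
    | succ n ih =>
      intro a Y h₁ h₂ hY
      obtain ⟨T, hT, rfl, hK, hL, hK', hL'⟩ := wayOut_trunc Y a
      refine ext T hT (base a _ ?_ hK ?_) (ih (a + 1) _ hL ?_ ?_)
      · rw [isGE_iff]
        intro i hi
        obtain ⟨e⟩ := hK' i hi.le
        exact (isZero_of_isGE _ a i hi).of_iso e.symm
      · intro i
        by_cases hi : i ≤ a
        · obtain ⟨e⟩ := hK' i hi
          exact hAiso _ _ e (hY i)
        · exact zA _ (isZero_of_isLE _ a i (by lia))
      · rw [isLE_iff]
        intro i hi
        obtain ⟨e⟩ := hL' i (by lia)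
        exact (isZero_of_isLE _ (a + ((n + 1 : ℕ) : ℤ)) i (by push_cast; lia)).of_iso e.symm
      · intro i
        by_cases hi : a < i
        · obtain ⟨e⟩ := hL' i hi
          exact hAiso _ _ e (hY i)
        · exact zA _ (isZero_of_isGE _ (a + 1) i (by lia))
  obtain ⟨a, b, hab⟩ := hXbdd
  refine main (b - a).toNat a X ?_ ?_ hXA
  · rw [isGE_iff]; exact fun i hi => hab i (Or.inl hi)
  · rw [isLE_iff]; exact fun i hi => hab i (Or.inr (by lia))
end
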